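/- arXiv:math/0208078 — 2 statements merged into one kernel-verified Lean document; each statement's English description precedes it below -/
import Mathlib

section
/- Let k be a field of characteristic 0, and let S and R be integral domains that are finitely generated k-algebras, with R a k-subalgebra of S. Let R' be the integral closure of R in its fraction field, and assume that the map from the maximal spectrum of R' to the maximal spectrum of R sending a maximal ideal m of R' to its contraction m ∩ R is injective (this encodes that the affine variety with coordinate ring R has no selfintersection points). Assume also that every ideal of height 1 in R generates a proper ideal in S. Let F : S → S be a k-algebra endomorphism with F(R) ⊆ R. If F is bijective, then the restriction of F to R, viewed as a map R → R, is bijective. -/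
/-!
Write `R'` and `S'` for the normalizations of `R` and `S`; they are finite over `R` and `S`, and `F`
extends to `S'`, preserving `R'`.

**Reduction to the normal case.** Since maximal ideals of `R'` are determined by their contractions
to `R`, contraction reflects inclusions of primes, so the hypothesis on height-one ideals passes to
`R' ⊆ S'`. Once `F⁻¹(R') = R'` is known, the modules `F⁻ⁿ(R)` form an ascending chain of
`R`-submodules of the finite module `R'`; it stabilizes, whence `F⁻¹(R) = R`.

**The normal case.** Let `R` be normal and put `T = ⋃ F⁻ⁿ(R)`. If `Fⁿ(x) ∈ R`, then `F ⊗ F` maps the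
kernel `I` of `S ⊗ₖ S → S ⊗_R S` into itself, hence onto itself, so `x ⊗ 1 - 1 ⊗ x ∈ I`. Thus at
every prime `Q` of `S` the residue of an element of `T` lies in the field generated by `R`. For
`Q = 0` this says that `T` consists of fractions of `R`, and their polar loci are unions of
components of one hypersurface. Let `D` be the ideal of functions vanishing on all these loci. If
`F x ∈ R` with `x ∉ R`, then `D` is contained in a height-one prime, so `D S` is a proper ideal; it
is `F`-stable, so a power of `F` fixes a minimal prime `Q` of it. Let `P = Q ∩ R`. The local
Artinian rings `R_P / (Q⁽ʲ⁾ ∩ R) R_P` have injective endomorphisms induced by this power of `F`,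
which are onto the residue field and therefore surjective; thus elements of `T` are approximated by
elements of `R_P` modulo all symbolic powers `Q⁽ʲ⁾`. The ideals `Q⁽ʲ⁾ ∩ R` define on `R` a topology
at least as fine as the symbolic powers of `P`, so `T ⊆ R_P`. No polar locus then passes through
`P`, which yields an element of `D` outside `P`: a contradiction.

**The comparison of topologies** uses normality and characteristic zero. Localizing, one may assume
`P` maximal, and `R` finite over `k[x]` with all variables in `P`. If the comparison fails,
completeness gives an element `z` of `R ⊗ k⟦x⟧` that vanishes to infinite order along `Q` but not at
`P`. Over the fraction fields, `z` generates an ideal generated by an idempotent `e`. Derivations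
kill idempotents and, in characteristic zero, lower the order at a prime with a uniformizer, so `e`
has no denominators: it lies in `R ⊗ k⟦x⟧`, where `z` divides `α e` for some power series `α ≠ 0`.
Since `e` does not vanish at `P`, the power series `α` vanishes to infinite order along `Q`. Such
power series form a proper ideal stable under partial derivatives, which must be zero.
-/

set_option synthInstance.maxHeartbeats 1000000
set_option maxHeartbeats 1000000

/-- The height of an ideal `I`: the infimum of the heights of the prime ideals
containing `I` (in the prime spectrum, ordered by inclusion). -/
noncomputable def Ideal.heightOf {R : Type*} [CommRing R] (I : Ideal R) : ℕ∞ :=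
  ⨅ p ∈ {p : PrimeSpectrum R | I ≤ p.asIdeal}, Order.height p

open TensorProduct

/-! ### Derivations -/

section ExtensionOfDerivations

variable {k A B N : Type*} [CommRing k] [CommRing A] [CommRing B] [Algebra k B]
  [Algebra A B] [AddCommGroup N] [Module k N] [Module B N]

theorem exists_derivation_extension_of_formallySmooth [Algebra k A] [IsScalarTower k A B]
    [Module A N] [IsScalarTower k A N] [IsScalarTower A B N] [IsScalarTower k B N]
    [Algebra.FormallySmooth A B]
    (D : Derivation k A N) : ∃ D' : Derivation k B N, ∀ a, D' (algebraMap A B a) = D a := by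
  have hinj : Function.Injective (KaehlerDifferential.mapBaseChange k A B) := by
    rw [injective_iff_map_eq_zero]
    intro x hx
    obtain ⟨y, rfl⟩ := (Algebra.H1Cotangent.exact_δ_mapBaseChange k A B x).1 hx
    rw [Subsingleton.elim y 0, map_zero]
  obtain ⟨retr, hretr⟩ : ∃ l, l ∘ₗ KaehlerDifferential.mapBaseChange k A B = LinearMap.id :=
    (((KaehlerDifferential.exact_mapBaseChange_map k A B).split_tfae hinj
      (KaehlerDifferential.map_surjective k A B)).out 0 1).1
      (Module.projective_lifting_property _ _ (KaehlerDifferential.map_surjective k A B))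
  let f := D.liftKaehlerDifferential.liftBaseChange B
  refine ⟨(f ∘ₗ retr).compDer (KaehlerDifferential.D k B), fun a => ?_⟩
  calc f (retr (KaehlerDifferential.D k B (algebraMap A B a)))
      = f (retr (KaehlerDifferential.mapBaseChange k A B (1 ⊗ₜ KaehlerDifferential.D k A a))) := by
        simp
    _ = f (1 ⊗ₜ KaehlerDifferential.D k A a) := congrArg f (LinearMap.congr_fun hretr _)
    _ = D a := by simp [f]

theorem derivation_eq_of_formallyUnramified [Algebra.FormallyUnramified A B]
    (D D' : Derivation k B N) (h : ∀ a, D (algebraMap A B a) = D' (algebraMap A B a)) :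
    D = D' := by
  let _ : Module A N := Module.compHom N (algebraMap A B)
  have : IsScalarTower A B N := .of_algebraMap_smul fun _ _ => rfl
  let E : Derivation A B N := .mk' ⟨(D - D').toLinearMap.toAddHom, fun a b => by
    change (D - D') (a • b) = a • (D - D') b
    rw [Algebra.smul_def, Derivation.leibniz, Derivation.sub_apply (a := algebraMap A B a), h,
      sub_self, smul_zero, add_zero, algebraMap_smul]⟩ (D - D').leibniz
  have hE : E = 0 := by
    rw [← E.liftKaehlerDifferential_comp, Subsingleton.elim E.liftKaehlerDifferential 0]
    rfl
  exact Derivation.ext fun b => sub_eq_zero.1 congr($hE b)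

end ExtensionOfDerivations

theorem derivation_eq_zero_of_isAlgebraic {B C : Type*} [CommRing B] [CommRing C] [IsDomain C]
    [Algebra B C] [FaithfulSMul B C] [CharZero B] [Algebra.IsAlgebraic B C]
    (D : Derivation B C C) : D = 0 := by
  classical
  have : IsDomain B := (FaithfulSMul.algebraMap_injective B C).isDomain _
  ext z
  obtain ⟨q₀, hq₀, hz₀⟩ := Algebra.IsAlgebraic.isAlgebraic (R := B) z
  -- Differentiate an annihilating polynomial of least degree.
  have hex : ∃ n, ∃ q : Polynomial B, q ≠ 0 ∧ Polynomial.aeval z q = 0 ∧ q.natDegree = n :=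
    ⟨_, q₀, hq₀, hz₀, rfl⟩
  obtain ⟨q, hq, hz, hn⟩ := Nat.find_spec hex
  have hdeg : q.natDegree ≠ 0 := by
    intro h0
    rw [Polynomial.eq_C_of_natDegree_eq_zero h0] at hz hq
    rw [Polynomial.aeval_C, map_eq_zero_iff _ (FaithfulSMul.algebraMap_injective B C)] at hz
    exact hq (by rw [hz, map_zero])
  have hderiv : Polynomial.aeval z (Polynomial.derivative q) ≠ 0 := fun h0 =>
    Nat.find_min hex (m := (Polynomial.derivative q).natDegree)
      (hn ▸ Polynomial.natDegree_derivative_lt hdeg)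
      ⟨_, fun h => hdeg (Polynomial.derivative_eq_zero.1 h), h0, rfl⟩
  have hDz : Polynomial.aeval z (Polynomial.derivative q) * D z = 0 := by
    rw [← smul_eq_mul, ← D.map_aeval, hz, map_zero]
  exact (mul_eq_zero.1 hDz).resolve_left hderiv

theorem exists_derivation_ne_zero_of_not_isAlgebraic {B K : Type*} [CommRing B] [IsDomain B]
    [CharZero B] [Field K] [Algebra B K] [FaithfulSMul B K] [Algebra.EssFiniteType B K]
    (h : ¬ Algebra.IsAlgebraic B K) : ∃ D : Derivation B K K, D ≠ 0 := by
  by_contra! hD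
  have hΩ : Subsingleton (Ω[K⁄B]) := by
    rw [subsingleton_iff_forall_eq 0]
    intro ω
    rw [← Module.forall_dual_apply_eq_zero_iff K ω]
    intro φ
    have hφ : φ = 0 := Derivation.liftKaehlerDifferential_unique φ 0 <|
      (hD (φ.compDer (KaehlerDifferential.D B K))).trans (hD _).symm
    rw [hφ, LinearMap.zero_apply]
  have : Algebra.FormallyUnramified B K := ⟨hΩ⟩
  let _ : Algebra (FractionRing B) K := FractionRing.liftAlgebra B K
  have : Algebra.FormallyUnramified (FractionRing B) K := .of_restrictScalars B _ _
  have : Algebra.EssFiniteType (FractionRing B) K := .of_comp B _ _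
  have := Algebra.FormallyUnramified.isSeparable (FractionRing B) K
  exact h ((IsFractionRing.comap_isAlgebraic_iff (K := FractionRing B)).2 inferInstance)

theorem exists_derivation_mul_eq {B R : Type*} [CommRing B] [CommRing R] [IsDomain R] [Algebra B R]
    (D : Derivation B R R) {c : R} (hc : c ≠ 0) (h : ∀ r, c ∣ D r) :
    ∃ D' : Derivation B R R, ∀ r, c * D' r = D r := by
  choose e he using h
  refine ⟨.mk' ⟨⟨e, fun x y => mul_left_cancel₀ hc ?_⟩, fun b x => mul_left_cancel₀ hc ?_⟩
    fun x y => mul_left_cancel₀ hc ?_, fun r => (he r).symm⟩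
  · simp only [mul_add, ← he, map_add]
  · simp only [RingHom.id_apply, mul_smul_comm, ← he, D.map_smul]
  · simp only [LinearMap.coe_mk, AddHom.coe_mk, mul_add, mul_smul_comm, ← he, D.leibniz]

section FractionField

variable {B R K : Type*} [CommRing B] [CommRing R] [IsDomain R] [Algebra B R]
  [Algebra.FiniteType B R] [Field K] [Algebra R K] [IsFractionRing R K] [Algebra B K]
  [IsScalarTower B R K]

theorem exists_mul_derivation_mem_range (D : Derivation B K K) :
    ∃ f : R, f ≠ 0 ∧ ∀ r : R, algebraMap R K f * D (algebraMap R K r) ∈ (algebraMap R K).range := by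
  classical
  obtain ⟨s, hs⟩ := (Algebra.FiniteType.out : (⊤ : Subalgebra B R).FG)
  obtain ⟨⟨f, hf⟩, hfs⟩ := IsLocalization.exist_integer_multiples_of_finset (nonZeroDivisors R)
    (s.image fun r => D (algebraMap R K r))
  refine ⟨f, nonZeroDivisors.ne_zero hf, fun r => ?_⟩
  have hr : r ∈ Algebra.adjoin B (s : Set R) := hs ▸ Algebra.mem_top
  induction hr using Algebra.adjoin_induction with
  | mem x hx =>
    obtain ⟨y, hy⟩ := hfs _ (Finset.mem_image_of_mem _ hx)
    exact ⟨y, by rw [hy, Algebra.smul_def]⟩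
  | algebraMap b =>
    rw [← IsScalarTower.algebraMap_apply, Derivation.map_algebraMap, mul_zero]
    exact Subring.zero_mem _
  | add x y _ _ hx hy =>
    rw [map_add, map_add, mul_add]
    exact Subring.add_mem _ hx hy
  | mul x y _ _ hx hy =>
    rw [map_mul, Derivation.leibniz, mul_add, smul_eq_mul, smul_eq_mul, mul_left_comm,
      mul_left_comm _ (algebraMap R K y)]
    exact Subring.add_mem _ (Subring.mul_mem _ ⟨x, rfl⟩ hy) (Subring.mul_mem _ ⟨y, rfl⟩ hx)

theorem exists_derivation_algebraMap_eq_mul (D : Derivation B K K) :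
    ∃ f : R, f ≠ 0 ∧ ∃ D' : Derivation B R R,
      ∀ r, algebraMap R K (D' r) = algebraMap R K f * D (algebraMap R K r) := by
  have hinj := IsFractionRing.injective R K
  obtain ⟨f, hf, hfD⟩ := exists_mul_derivation_mem_range (R := R) D
  choose e he using hfD
  refine ⟨f, hf, .mk' ⟨⟨e, fun x y => hinj ?_⟩, fun b x => hinj ?_⟩ fun x y => hinj ?_, he⟩
  · simp only [map_add, he, mul_add]
  · simp only [RingHom.id_apply, algebraMap.smul, he, D.map_smul, mul_smul_comm]
  · simp only [LinearMap.coe_mk, AddHom.coe_mk, smul_eq_mul, map_add, map_mul, he, D.leibniz]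
    ring

end FractionField

theorem exists_derivation_ne_zero {B R : Type*} [CommRing B] [CharZero B] [CommRing R] [IsDomain R]
    [Algebra B R] [FaithfulSMul B R] [Algebra.FiniteType B R] (h : ¬ Algebra.IsAlgebraic B R) :
    ∃ D : Derivation B R R, D ≠ 0 := by
  have : IsDomain B := (FaithfulSMul.algebraMap_injective B R).isDomain _
  have : FaithfulSMul B (FractionRing R) := (faithfulSMul_iff_algebraMap_injective _ _).2 <| by
    rw [IsScalarTower.algebraMap_eq B R]
    exact (IsFractionRing.injective R _).comp (FaithfulSMul.algebraMap_injective B R)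
  have : Algebra.EssFiniteType B (FractionRing R) := .comp B R _
  obtain ⟨D, hD⟩ := exists_derivation_ne_zero_of_not_isAlgebraic (B := B) (K := FractionRing R)
    fun halg => h ((IsFractionRing.isAlgebraic_iff' B R (FractionRing R)).2 halg)
  obtain ⟨f, hf, D', hD'⟩ := exists_derivation_algebraMap_eq_mul (R := R) D
  refine ⟨D', fun h0 => hD (derivation_eq_of_formallyUnramified (A := R) _ _ fun r => ?_)⟩
  have hfr := hD' r
  rw [h0, Derivation.zero_apply, map_zero, zero_eq_mul] at hfr
  exact hfr.resolve_left ((map_ne_zero_iff _ (IsFractionRing.injective R _)).2 hf)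

/-! ### Uniformizers -/

/-- `c` is a uniformizer at the prime `p` if it generates the maximal ideal of the localization
`R_p`. For finitely generated `p` this amounts to the existence of a single denominator `u ∉ p`. -/
structure IsUniformizerAt {R : Type*} [CommRing R] (p : Ideal R) (c : R) : Prop where
  mem : c ∈ p
  exists_dvd_mul : ∃ u ∉ p, ∀ d ∈ p, c ∣ u * d

theorem exists_isUniformizerAt {R K : Type*} [CommRing R] [IsDomain R]
    [IsNoetherianRing R] [IsIntegrallyClosed R] [Field K] [Algebra R K] [IsFractionRing R K]
    (p : Ideal R) [p.IsPrime] (x : K) (hx : x ∉ (algebraMap R K).range)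
    (hpx : ∀ c ∈ p, algebraMap R K c * x ∈ (algebraMap R K).range) :
    ∃ c, IsUniformizerAt p c := by
  have hinj := IsFractionRing.injective R K
  rcases eq_or_ne p ⊥ with rfl | hp
  · exact ⟨0, rfl, 1, by simp, fun d hd => by simp [Ideal.mem_bot.1 hd]⟩
  by_contra! hcon
  -- If `x` mapped `p` into itself, it would be integral over `R`.
  have hxp : ∀ c ∈ p, ∃ v ∈ p, algebraMap R K v = algebraMap R K c * x := by
    intro c hc
    obtain ⟨v, hv⟩ := hpx c hc
    refine ⟨v, ?_, hv⟩
    by_contra hvp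
    refine hcon c ⟨hc, v, hvp, fun d hd => ?_⟩
    obtain ⟨w, hw⟩ := hpx d hd
    refine ⟨w, hinj ?_⟩
    rw [map_mul, map_mul, hv, hw]
    ring
  have hx_int : IsIntegral R x := by
    refine isIntegral_of_smul_mem_submodule (R := R) (M := K)
      (Submodule.map (Algebra.linearMap R K) p) ?_ ((IsNoetherian.noetherian p).map _) x ?_
    · exact fun h => hp
        (Submodule.map_injective_of_injective hinj (h.trans (Submodule.map_bot _).symm))
    · rintro _ ⟨c, hc, rfl⟩
      obtain ⟨v, hvp, hv⟩ := hxp c hc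
      exact ⟨v, hvp, by rw [Algebra.linearMap_apply, Algebra.linearMap_apply, hv, smul_eq_mul,
        mul_comm]⟩
  exact hx (IsIntegrallyClosed.isIntegral_iff.1 hx_int)

theorem exists_forall_notMem_mul_notMem_pow {R : Type*} [CommRing R] [IsDomain R]
    [IsNoetherianRing R] (p : Ideal R) [p.IsPrime] {a : R} (ha : a ≠ 0) :
    ∃ n, ∀ u ∉ p, u * a ∉ p ^ n := by
  by_contra! hcon
  let Rp := Localization.AtPrime p
  have hmem : algebraMap R Rp a ∈ ⨅ i, IsLocalRing.maximalIdeal Rp ^ i := by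
    rw [Ideal.mem_iInf]
    intro n
    obtain ⟨u, hu, hua⟩ := hcon n
    have hua' := Ideal.mem_map_of_mem (algebraMap R Rp) hua
    rw [map_mul, Ideal.map_pow, Localization.AtPrime.map_eq_maximalIdeal] at hua'
    exact (Ideal.unit_mul_mem_iff_mem _
      (IsLocalization.map_units Rp (⟨u, hu⟩ : p.primeCompl))).1 hua'
  rw [Ideal.iInf_pow_eq_bot_of_isLocalRing _ Ideal.IsPrime.ne_top', Ideal.mem_bot,
    map_eq_zero_iff _ (IsLocalization.injective Rp p.primeCompl_le_nonZeroDivisors)] at hmem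
  exact ha hmem

namespace IsUniformizerAt

variable {R : Type*} [CommRing R] {p : Ideal R} [p.IsPrime] {c : R}

theorem exists_mul_eq_mul_pow [IsDomain R] [IsNoetherianRing R] (hc : IsUniformizerAt p c)
    {a : R} (ha : a ≠ 0) : ∃ m, ∃ t ∉ p, ∃ t' ∉ p, t * a = t' * c ^ m := by
  obtain ⟨u, hu, hdvd⟩ := hc.exists_dvd_mul
  have hun : ∀ n, u ^ n ∉ p := fun n h => hu (Ideal.IsPrime.mem_of_pow_mem ‹_› n h)
  by_contra! hcon
  have hpow : ∀ n : ℕ, ∃ b, u ^ n * a = b * c ^ n := by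
    intro n
    induction n with
    | zero => exact ⟨a, by simp⟩
    | succ n ih =>
      obtain ⟨b, hb⟩ := ih
      have hbp : b ∈ p := by
        by_contra hbp
        exact hcon n (u ^ n) (hun n) b hbp hb
      obtain ⟨e, he⟩ := hdvd b hbp
      exact ⟨e, by rw [pow_succ', mul_assoc, hb, ← mul_assoc, he]; ring⟩
  obtain ⟨n, hn⟩ := exists_forall_notMem_mul_notMem_pow p ha
  obtain ⟨b, hb⟩ := hpow n
  exact hn (u ^ n) (hun n) (hb ▸ Ideal.mul_mem_left _ _ (Ideal.pow_mem_pow hc.mem n))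

theorem eq_of_le_of_ne_bot [IsDomain R] [IsNoetherianRing R] (hc : IsUniformizerAt p c)
    {q : Ideal R} [q.IsPrime] (hq : q ≤ p) (hq0 : q ≠ ⊥) : q = p := by
  obtain ⟨a, ha, ha0⟩ := Submodule.exists_mem_ne_zero_of_ne_bot hq0
  obtain ⟨m, t, _, t', ht', hta⟩ := hc.exists_mul_eq_mul_pow ha0
  have hcq : c ∈ q := Ideal.IsPrime.mem_of_pow_mem ‹_› m
    ((Ideal.IsPrime.mem_or_mem ‹_› (hta ▸ q.mul_mem_left t ha)).resolve_left
      fun h => ht' (hq h))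
  obtain ⟨u, hu, hdvd⟩ := hc.exists_dvd_mul
  exact le_antisymm hq fun d hd => (Ideal.IsPrime.mem_or_mem ‹_›
    (q.mem_of_dvd (hdvd d hd) hcq)).resolve_left fun h => hu (hq h)

variable {B : Type*} [CommRing B] [Algebra B R]

theorem exists_derivation_apply_notMem [IsDomain R] [IsNoetherianRing R]
    (hc : IsUniformizerAt p c) (hc0 : c ≠ 0) {D : Derivation B R R} (hD : D ≠ 0) :
    ∃ D' : Derivation B R R, ∃ r, D' r ∉ p := by
  obtain ⟨u, hu, hdvd⟩ := hc.exists_dvd_mul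
  by_contra! hcon
  obtain ⟨r, hr⟩ : ∃ r, D r ≠ 0 := by
    by_contra! h
    exact hD (Derivation.ext h)
  have hdiv : ∀ n : ℕ, ∃ D' : Derivation B R R, c ^ n * D' r = u ^ n * D r := by
    intro n
    induction n with
    | zero => exact ⟨D, by simp⟩
    | succ n ih =>
      obtain ⟨D₁, hD₁⟩ := ih
      obtain ⟨D₂, hD₂⟩ := exists_derivation_mul_eq (u • D₁) hc0 fun s => hdvd _ (hcon D₁ s)
      refine ⟨D₂, ?_⟩
      rw [pow_succ, mul_assoc, hD₂, Derivation.smul_apply, smul_eq_mul, mul_left_comm, hD₁]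
      ring
  obtain ⟨n, hn⟩ := exists_forall_notMem_mul_notMem_pow p hr
  obtain ⟨D', hD'⟩ := hdiv n
  exact hn (u ^ n) (fun h => hu (Ideal.IsPrime.mem_of_pow_mem ‹_› n h))
    (hD' ▸ Ideal.mul_mem_right _ _ (Ideal.pow_mem_pow hc.mem n))

theorem derivation_apply_mem (hc : IsUniformizerAt p c) {D : Derivation B R R} (hDc : D c ∈ p)
    {d : R} (hd : d ∈ p) : D d ∈ p := by
  obtain ⟨u, hu, hdvd⟩ := hc.exists_dvd_mul
  obtain ⟨e, he⟩ := hdvd d hd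
  have hud : u * D d = c * D e + e * D c - d * D u := by
    have h := congr(D $he)
    simp only [D.leibniz, smul_eq_mul] at h
    linear_combination h
  have hmem : u * D d ∈ p := hud ▸ p.sub_mem
    (p.add_mem (p.mul_mem_right _ hc.mem) (p.mul_mem_left _ hDc)) (p.mul_mem_right _ hd)
  exact (Ideal.IsPrime.mem_or_mem ‹_› hmem).resolve_left hu

theorem exists_derivation_self_notMem_of_isAlgebraic [IsDomain R] [IsNoetherianRing R] [CharZero B]
    [FaithfulSMul B (R ⧸ p)] [Algebra.FiniteType B R] [Algebra.IsAlgebraic B (R ⧸ p)]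
    (hc : IsUniformizerAt p c) (hc0 : c ≠ 0) : ∃ D : Derivation B R R, D c ∉ p := by
  have hinj : Function.Injective (algebraMap B (R ⧸ p)) := FaithfulSMul.algebraMap_injective _ _
  have hpB : p.comap (algebraMap B R) = ⊥ := by
    rw [RingHom.injective_iff_ker_eq_bot, IsScalarTower.algebraMap_eq B R, ← RingHom.comap_ker,
      Ideal.Quotient.algebraMap_eq, Ideal.mk_ker] at hinj
    exact hinj
  have : FaithfulSMul B R := (faithfulSMul_iff_algebraMap_injective B R).2 <| by
    rw [IsScalarTower.algebraMap_eq B R, RingHom.coe_comp] at hinj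
    exact hinj.of_comp
  obtain ⟨D₀, hD₀⟩ := exists_derivation_ne_zero (B := B) (R := R) fun _ =>
    Ideal.comap_ne_bot_of_algebraic_mem hc0 hc.mem (Algebra.IsAlgebraic.isAlgebraic c) hpB
  obtain ⟨D, r, hr⟩ := hc.exists_derivation_apply_notMem hc0 hD₀
  refine ⟨D, fun hDc => hr ?_⟩
  have hDp : ∀ d, Ideal.Quotient.mkₐ B p d = 0 → Ideal.Quotient.mkₐ B p (D d) = 0 := by
    simp only [Ideal.Quotient.mkₐ_eq_mk, Ideal.Quotient.eq_zero_iff_mem]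
    exact fun d => hc.derivation_apply_mem hDc
  have hDr := D.liftOfSurjective_apply (Ideal.Quotient.mkₐ_surjective B p) hDp r
  rwa [derivation_eq_zero_of_isAlgebraic (D.liftOfSurjective _ hDp), eq_comm,
    Derivation.zero_apply, Ideal.Quotient.mkₐ_eq_mk, Ideal.Quotient.eq_zero_iff_mem] at hDr

theorem exists_derivation_self_notMem {k : Type*} [Field k] [CharZero k] [IsDomain R]
    [Algebra k R] [Algebra.FiniteType k R] (hc : IsUniformizerAt p c) (hc0 : c ≠ 0) :
    ∃ D : Derivation k R R, D c ∉ p := by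
  have : IsNoetherianRing R := Algebra.FiniteType.isNoetherianRing k R
  obtain ⟨ι, y, hy⟩ := exists_isTranscendenceBasis' k (R ⧸ p)
  choose Y hY using fun i => Ideal.Quotient.mk_surjective (y i)
  let _ : Algebra (MvPolynomial ι k) R := (MvPolynomial.aeval Y).toAlgebra
  have : IsScalarTower k (MvPolynomial ι k) R := .of_algHom (MvPolynomial.aeval Y)
  have : Algebra.FiniteType (MvPolynomial ι k) R := .of_restrictScalars_finiteType k _ R
  have hmap : algebraMap (MvPolynomial ι k) (R ⧸ p) = (MvPolynomial.aeval y).toRingHom := by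
    ext i
    · exact (IsScalarTower.algebraMap_apply k (MvPolynomial ι k) (R ⧸ p) i).symm.trans (by simp)
    · rw [IsScalarTower.algebraMap_apply (MvPolynomial ι k) R (R ⧸ p), RingHom.algebraMap_toAlgebra]
      simp [hY]
  have : FaithfulSMul (MvPolynomial ι k) (R ⧸ p) := by
    rw [faithfulSMul_iff_algebraMap_injective, hmap]
    exact hy.1
  have := hy.isAlgebraic
  have : Algebra.IsAlgebraic (MvPolynomial ι k) (R ⧸ p) :=
    .of_ringHom_of_comp_eq hy.1.aevalEquiv (RingHom.id _) hy.1.aevalEquiv.surjective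
      Function.injective_id (by rw [hmap]; ext <;> simp)
  obtain ⟨D, hD⟩ := hc.exists_derivation_self_notMem_of_isAlgebraic (B := MvPolynomial ι k) hc0
  exact ⟨D.restrictScalars k, hD⟩

end IsUniformizerAt

/-! ### Idempotents of `R ⊗ k⟦x⟧` -/

theorem IsUniformizerAt.eq_bot_of_derivation_mem {k R : Type*} [Field k] [CharZero k] [CommRing R]
    [IsDomain R] [Algebra k R] [Algebra.FiniteType k R] {p : Ideal R} [p.IsPrime] {c : R}
    (hc : IsUniformizerAt p c) {d : Ideal R} (hdp : d ≤ p)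
    (hd : ∀ D : Derivation k R R, ∀ a ∈ d, D a ∈ d) : d = ⊥ := by
  classical
  have : IsNoetherianRing R := Algebra.FiniteType.isNoetherianRing k R
  by_contra hd0
  obtain ⟨a, had, ha0⟩ := Submodule.exists_mem_ne_zero_of_ne_bot hd0
  obtain ⟨n, s, _, s', hs', hsa⟩ := hc.exists_mul_eq_mul_pow ha0
  have hc0 : c ≠ 0 := by
    rintro rfl
    obtain ⟨u, hu, hdvd⟩ := hc.exists_dvd_mul
    exact mul_ne_zero (fun h : u = 0 => hu (h ▸ p.zero_mem)) ha0 (zero_dvd_iff.1 (hdvd a (hdp had)))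
  obtain ⟨D, hD⟩ := hc.exists_derivation_self_notMem (k := k) hc0
  -- Applying `D` lowers the least `m` such that `t * c ^ m ∈ d` for some `t ∉ p`.
  have hex : ∃ m, ∃ t ∉ p, t * c ^ m ∈ d := ⟨n, s', hs', hsa ▸ d.mul_mem_left s had⟩
  obtain ⟨t, ht, htm⟩ := Nat.find_spec hex
  rcases hm : Nat.find hex with _ | m
  · rw [hm, pow_zero, mul_one] at htm
    exact ht (hdp htm)
  rw [hm] at htm
  refine Nat.find_min hex (m := m) (by lia) ⟨(m + 1 : ℕ) * (t * D c) + c * D t, fun h => ?_, ?_⟩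
  · have hunit : IsUnit ((m + 1 : ℕ) : R) := by
      simpa using (IsUnit.mk0 ((m + 1 : ℕ) : k) (by norm_cast)).map (algebraMap k R)
    have htD := (p.unit_mul_mem_iff_mem hunit).1 <|
      (p.add_mem_iff_left (p.mul_mem_right (D t) hc.mem)).1 h
    exact (Ideal.IsPrime.mem_or_mem ‹_› htD).elim ht hD
  · convert hd D _ htm using 1
    simp only [D.leibniz, D.leibniz_pow, smul_eq_mul, nsmul_eq_mul, Nat.add_sub_cancel]
    ring

theorem mvPowerSeries_ideal_eq_top_of_pderiv_mem {k σ : Type*} [Field k] [CharZero k]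
    (J : Ideal (MvPowerSeries σ k)) (hJ : ∀ i, ∀ f ∈ J, MvPowerSeries.pderiv k i f ∈ J)
    (h0 : J ≠ ⊥) : J = ⊤ := by
  have eq_top_of_coeff_ne_zero (n : ℕ) : ∀ d : σ →₀ ℕ, d.degree = n →
      ∀ f ∈ J, MvPowerSeries.coeff d f ≠ 0 → J = ⊤ := by
    induction n with
    | zero =>
      intro d hd f hf hfd
      rw [Finsupp.degree_eq_zero_iff] at hd
      subst hd
      exact J.eq_top_of_isUnit_mem hf
        (MvPowerSeries.isUnit_iff_constantCoeff.2 (IsUnit.mk0 _ (by simpa using hfd)))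
    | succ n ih =>
      intro d hd f hf hfd
      obtain ⟨i, hi⟩ : ∃ i, d i ≠ 0 := by
        by_contra! h
        simp [show d = 0 from Finsupp.ext h] at hd
      have hdi : d - Finsupp.single i 1 + Finsupp.single i 1 = d :=
        tsub_add_cancel_of_le (Finsupp.single_le_iff.2 (Nat.one_le_iff_ne_zero.2 hi))
      refine ih (d - Finsupp.single i 1) ?_ _ (hJ i f hf) ?_
      · rw [← hdi, map_add, Finsupp.degree_single] at hd
        exact Nat.succ_injective hd
      · rw [MvPowerSeries.coeff_pderiv, hdi]
        exact mul_ne_zero hfd (by norm_cast)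
  obtain ⟨f, hf, hf0⟩ := Submodule.exists_mem_ne_zero_of_ne_bot h0
  obtain ⟨d, hd⟩ : ∃ d, MvPowerSeries.coeff d f ≠ 0 := by
    by_contra! h
    exact hf0 (MvPowerSeries.ext h)
  exact eq_top_of_coeff_ne_zero _ d rfl f hf hd

theorem exists_isIdempotentElem_eq_mul {E : Type*} [CommRing E] [IsArtinianRing E] [IsReduced E]
    (z : E) : ∃ e w, IsIdempotentElem e ∧ e * z = z ∧ e = z * w := by
  classical
  let φ := IsArtinianRing.equivPi E
  let _ (I : MaximalSpectrum E) : Field (E ⧸ I.asIdeal) := Ideal.Quotient.field _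
  let w : (I : MaximalSpectrum E) → E ⧸ I.asIdeal := fun I => (φ z I)⁻¹
  refine ⟨z * φ.symm w, φ.symm w, φ.injective ?_, φ.injective ?_, rfl⟩ <;>
  · simp only [map_mul, AlgEquiv.apply_symm_apply]
    funext I
    by_cases hz : φ z I = 0 <;> simp [w, hz]

theorem map_derivation_eq_mul_of_isIdempotentElem {k C E : Type*} [CommRing k] [CommRing C]
    [Algebra k C] [CommRing E] {f : C →+* E} (hf : Function.Injective f) {e : E}
    (he : IsIdempotentElem e) {c t : C} (hc : IsUnit (f c)) (ht : f t = f c * e)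
    (D : Derivation k C C) : f (D t) = f (D c) * e := by
  have htt : t * t = c * t := hf (by rw [map_mul, map_mul, ht, mul_mul_mul_comm, he.eq, mul_assoc])
  have hD : f t * f (D t) + f t * f (D t) = f c * f (D t) + f t * f (D c) := by
    have h := congr(f (D $htt))
    simpa only [D.leibniz, smul_eq_mul, map_add, map_mul] using h
  have hDt : e * f (D t) + e * f (D t) = f (D t) + e * f (D c) := by
    refine hc.mul_left_cancel ?_
    rw [ht] at hD
    linear_combination hD
  have heDt : e * f (D t) = e * f (D c) := by
    linear_combination e * hDt + (f (D c) - 2 * f (D t)) * he.eq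
  linear_combination 2 * heDt - hDt

theorem exists_derivation_tensorProduct {k A B C ι : Type*} [CommRing k] [CommRing A] [CommRing B]
    [CommRing C] [Algebra k B] [Algebra k C] [Algebra A B] [Algebra A C] [Fintype ι]
    (D : Derivation k B B) (y : ι → B) (δ : ι → Derivation k C C)
    (h : ∀ a, D (algebraMap A B a) ⊗ₜ[A] (1 : C) = ∑ i, y i ⊗ₜ δ i (algebraMap A C a)) :
    ∃ D' : Derivation ℤ (B ⊗[A] C) (B ⊗[A] C),
      ∀ b c, D' (b ⊗ₜ c) = D b ⊗ₜ c + ∑ i, (b * y i) ⊗ₜ δ i c := by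
  let φ : B →+ C →+ B ⊗[A] C := .mk' (fun b => .mk' (fun c => D b ⊗ₜ c + ∑ i, (b * y i) ⊗ₜ δ i c)
    fun c c' => by
      simp only [map_add, tmul_add, Finset.sum_add_distrib]
      abel) fun b b' => AddMonoidHom.ext fun c => by
        simp only [AddMonoidHom.mk'_apply, AddMonoidHom.add_apply, map_add, add_tmul, add_mul,
          Finset.sum_add_distrib]
        abel
  have hφ (b c) : φ b c = D b ⊗ₜ c + ∑ i, (b * y i) ⊗ₜ δ i c := rfl
  have hmul (b c b' c') : φ (b * b') (c * c') = b ⊗ₜ c * φ b' c' + b' ⊗ₜ c' * φ b c := by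
    simp only [hφ, D.leibniz, Derivation.leibniz, smul_eq_mul, mul_add, Finset.mul_sum, add_tmul,
      tmul_add, Algebra.TensorProduct.tmul_mul_tmul, Finset.sum_add_distrib]
    have hassoc i : b * b' * y i = b * (b' * y i) := mul_assoc _ _ _
    have hcomm i : b * b' * y i = b' * (b * y i) := by ring
    simp only [hassoc, mul_comm c' c]
    simp only [← hassoc, hcomm]
    abel
  have hsmul (a : A) (b : B) (c : C) : φ (a • b) c = φ b (a • c) := by
    have hswap : φ (algebraMap A B a) 1 = φ 1 (algebraMap A C a) := by simp [hφ, h]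
    have hleft := hmul (algebraMap A B a) 1 b c
    have hright := hmul 1 (algebraMap A C a) b c
    rw [one_mul] at hleft hright
    rw [Algebra.smul_def, Algebra.smul_def, hleft, hright, hswap, Algebra.algebraMap_eq_smul_one,
      Algebra.algebraMap_eq_smul_one, smul_tmul]
  refine ⟨.mk' (liftAddHom φ hsmul).toIntLinearMap fun s t => ?_, fun b c => rfl⟩
  change liftAddHom φ hsmul (s * t) = s * liftAddHom φ hsmul t + t * liftAddHom φ hsmul s
  induction s with
  | zero => simp only [zero_mul, map_zero, mul_zero, add_zero]
  | add s₁ s₂ h₁ h₂ => rw [add_mul, map_add, h₁, h₂, map_add]; ring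
  | tmul b c =>
    induction t with
    | zero => simp only [zero_mul, map_zero, mul_zero, add_zero]
    | add t₁ t₂ h₁ h₂ => rw [mul_add, map_add, h₁, h₂, map_add]; ring
    | tmul b' c' =>
      rw [Algebra.TensorProduct.tmul_mul_tmul]
      exact hmul b c b' c'

theorem mvPolynomial_derivation_apply {k σ N : Type*} [CommRing k] [Fintype σ] [AddCommGroup N]
    [Module k N] [Module (MvPolynomial σ k) N]
    (D : Derivation k (MvPolynomial σ k) N) (a : MvPolynomial σ k) :
    D a = ∑ i, MvPolynomial.pderiv i a • D (MvPolynomial.X i) := by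
  classical
  induction a using MvPolynomial.induction_on with
  | C r => simp [MvPolynomial.derivation_C]
  | add p q hp hq => simp only [hp, hq, map_add, add_smul, Finset.sum_add_distrib]
  | mul_X p i hp =>
    simp only [Derivation.leibniz, hp, MvPolynomial.pderiv_X, Pi.single_apply, smul_eq_mul, mul_ite,
      mul_one, mul_zero, add_smul, mul_smul, ite_smul, zero_smul, Finset.sum_add_distrib,
      Finset.smul_sum, Finset.sum_ite_eq, Finset.mem_univ, if_true]

section AlgebraicField

variable (A K : Type*) [CommRing A] [IsDomain A] [Field K] [Algebra A K] [FaithfulSMul A K]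

theorem flat_field : Module.Flat A K := by
  let _ : Algebra (FractionRing A) K := FractionRing.liftAlgebra A K
  exact Module.Flat.trans A (FractionRing A) K

theorem formallyEtale_field [CharZero A] [Algebra.IsAlgebraic A K] :
    Algebra.FormallyEtale A K := by
  let _ : Algebra (FractionRing A) K := FractionRing.liftAlgebra A K
  have : Algebra.IsAlgebraic (FractionRing A) K :=
    (IsFractionRing.comap_isAlgebraic_iff (A := A) (K := FractionRing A)).1 ‹_›
  have : Algebra.FormallyEtale (FractionRing A) K := .of_isSeparable _ _
  have : Algebra.FormallyEtale A (FractionRing A) := .of_isLocalization (nonZeroDivisors A)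
  exact .comp A (FractionRing A) K

theorem isArtinianRing_tensorProduct_field [CharZero A] [Algebra.IsAlgebraic A K]
    [Algebra.EssFiniteType A K] (Φ : Type*) [Field Φ] [Algebra A Φ] :
    IsArtinianRing (K ⊗[A] Φ) := by
  have := formallyEtale_field A K
  have : Algebra.EssFiniteType Φ (Φ ⊗[A] K) := .baseChange A K Φ
  have : Module.Finite Φ (Φ ⊗[A] K) := Algebra.FormallyUnramified.finite_of_free Φ _
  have : IsArtinianRing (Φ ⊗[A] K) := .of_finite Φ _
  exact (Algebra.TensorProduct.comm A Φ K).toRingEquiv.surjective.isArtinianRing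

theorem isReduced_tensorProduct_field [CharZero A] [Algebra.IsAlgebraic A K]
    [Algebra.EssFiniteType A K] (Φ : Type*) [Field Φ] [Algebra A Φ] :
    IsReduced (K ⊗[A] Φ) := by
  have := formallyEtale_field A K
  have : Algebra.EssFiniteType Φ (Φ ⊗[A] K) := .baseChange A K Φ
  have : IsReduced (Φ ⊗[A] K) := Algebra.FormallyUnramified.isReduced_of_field Φ _
  exact isReduced_of_injective _ (Algebra.TensorProduct.comm A K Φ).injective

end AlgebraicField

theorem exists_ne_zero_forall_smul_eq_zero_of_flat {A R B M : Type*} [CommRing A] [CommRing R]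
    [AddCommGroup M] [Module A M] [Module R M] [SMulCommClass A R M] [AddCommGroup B] [Module A B]
    [Module.Flat A B] {p : Ideal R} (hp : p.FG) {t : M ⊗[A] B} (ht : t ≠ 0)
    (hpt : ∀ c ∈ p, c • t = 0) : ∃ x : M, x ≠ 0 ∧ ∀ c ∈ p, c • x = 0 := by
  obtain ⟨m, c, hc⟩ := Submodule.fg_iff_exists_fin_generating_family.1 hp
  by_contra! h
  have : SMulCommClass R A M := .symm A R M
  let ψ : M →ₗ[A] Fin m → M := LinearMap.pi fun i => DistribSMul.toLinearMap A M (c i)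
  have hψ : Function.Injective ψ := by
    rw [injective_iff_map_eq_zero]
    intro x hx
    by_contra hx0
    obtain ⟨d, hd, hdx⟩ := h x hx0
    have hle : p ≤ LinearMap.ker (LinearMap.toSpanSingleton R M x) := by
      rw [← hc, Submodule.span_le]
      rintro _ ⟨i, rfl⟩
      exact congrFun hx i
    exact hdx (hle hd)
  have hcomp (i : Fin m) (s : M ⊗[A] B) :
      TensorProduct.piLeft A B (fun _ => M) (ψ.rTensor B s) i = c i • s := by
    induction s with
    | zero => simp
    | tmul x b => simp [ψ, smul_tmul']
    | add s s' hs hs' => simp only [map_add, Pi.add_apply, hs, hs', smul_add]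
  refine ht (Module.Flat.rTensor_preserves_injective_linearMap (M := B) ψ hψ ?_)
  rw [map_zero]
  refine (TensorProduct.piLeft A B (fun _ : Fin m => M)).injective (funext fun i => ?_)
  rw [hcomp, map_zero]
  exact hpt _ (hc ▸ Submodule.subset_span ⟨i, rfl⟩)

section FractionField

variable {k A R K B : Type*} [CommRing A] [CommRing R] [Field K] [Algebra A R]
  [Algebra R K] [Algebra A K] [IsScalarTower A R K] [CommRing B] [Algebra A B]

variable (A R K B) in
/-- The map `R ⊗ B → K ⊗ B` induced by `R → K`; its range consists of the tensors with coefficients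
in `R`. -/
noncomputable abbrev tensorAlgebraMap : R ⊗[A] B →ₐ[R] K ⊗[A] B :=
  Algebra.TensorProduct.map (Algebra.ofId R K) (AlgHom.id A B)

theorem exists_smul_mem_range_tensorAlgebraMap [IsDomain R] [IsFractionRing R K] (t : K ⊗[A] B) :
    ∃ c : R, c ≠ 0 ∧ c • t ∈ (tensorAlgebraMap A R K B).range := by
  induction t with
  | zero => exact ⟨1, one_ne_zero, by rw [smul_zero]; exact zero_mem _⟩
  | tmul y b =>
    obtain ⟨⟨r, s⟩, hrs⟩ := IsLocalization.surj (nonZeroDivisors R) y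
    refine ⟨s, nonZeroDivisors.ne_zero s.2, r ⊗ₜ b, ?_⟩
    rw [smul_tmul', Algebra.smul_def, mul_comm, hrs]
    rfl
  | add s t hs ht =>
    obtain ⟨c, hc, hs⟩ := hs
    obtain ⟨d, hd, ht⟩ := ht
    refine ⟨c * d, mul_ne_zero hc hd, ?_⟩
    rw [smul_add, mul_smul c d t, mul_comm, mul_smul]
    exact add_mem (Subalgebra.smul_mem _ hs d) (Subalgebra.smul_mem _ ht c)

theorem rTensor_mkQ_eq_zero_iff {t : K ⊗[A] B} :
    AlgebraTensorModule.rTensor A B (LinearMap.range (Algebra.linearMap R K)).mkQ t = 0 ↔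
      t ∈ (tensorAlgebraMap A R K B).range :=
  rTensor_exact B (f := (Algebra.linearMap R K).restrictScalars A)
    (g := (LinearMap.range (Algebra.linearMap R K)).mkQ.restrictScalars A)
    (fun x => by simp) (LinearMap.range (Algebra.linearMap R K)).mkQ_surjective t

theorem tensorAlgebraMap_injective [FaithfulSMul R K] [Module.Flat A B] :
    Function.Injective (tensorAlgebraMap A R K B) :=
  Module.Flat.rTensor_preserves_injective_linearMap (M := B)
    ((Algebra.linearMap R K).restrictScalars A) (FaithfulSMul.algebraMap_injective R K)

-- The denominators of `e` in `R` form an ideal stable under derivations, because derivations kill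
-- idempotents. If it were proper, it would be contained in a prime with a uniformizer.
theorem mem_range_tensorAlgebraMap_of_isIdempotentElem [Field k] [CharZero k] [Algebra k R]
    [Algebra.FiniteType k R] [IsDomain R] [IsIntegrallyClosed R] [IsFractionRing R K]
    [Module.Flat A B]
    (hder : ∀ D : Derivation k R R, ∃ D' : Derivation ℤ (R ⊗[A] B) (R ⊗[A] B),
      ∀ r, D' (r ⊗ₜ 1) = D r ⊗ₜ 1)
    {e : K ⊗[A] B} (he : IsIdempotentElem e) : e ∈ (tensorAlgebraMap A R K B).range := by
  have : IsNoetherianRing R := Algebra.FiniteType.isNoetherianRing k R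
  let N := LinearMap.range (Algebra.linearMap R K)
  let π := AlgebraTensorModule.rTensor A B N.mkQ
  by_contra heN
  obtain ⟨p, hp, hdp⟩ := exists_le_isAssociatedPrime_of_isNoetherianRing R (π e)
    (mt rTensor_mkQ_eq_zero_iff.1 heN)
  have hd (c : R) : c ∈ (⊥ : Submodule R _).colon {π e} ↔
      c • e ∈ (tensorAlgebraMap A R K B).range := by
    rw [Submodule.mem_colon_singleton, Submodule.mem_bot, ← map_smul, rTensor_mkQ_eq_zero_iff]
  obtain ⟨_, t, rfl⟩ := isAssociatedPrime_iff.1 hp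
  obtain ⟨x, hx, hpx⟩ : ∃ x : K ⧸ N, x ≠ 0 ∧ ∀ c ∈ _, c • x = 0 := by
    refine exists_ne_zero_forall_smul_eq_zero_of_flat (IsNoetherian.noetherian _) (t := t) ?_
      fun c hc => (Submodule.mem_bot R).1 (Submodule.mem_colon_singleton.1 hc)
    rintro rfl
    exact hp.isPrime.ne_top (by simp)
  obtain ⟨x, rfl⟩ := N.mkQ_surjective x
  have hN (y : K) : N.mkQ y = 0 ↔ y ∈ (algebraMap R K).range := by simp [N]
  obtain ⟨c, hc⟩ := exists_isUniformizerAt _ x (mt (hN x).2 hx) fun c hc => by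
    rw [← hN, ← Algebra.smul_def, map_smul]
    exact hpx c hc
  have hbot := hc.eq_bot_of_derivation_mem (k := k) hdp fun D a ha => by
    obtain ⟨D', hD'⟩ := hder D
    rcases eq_or_ne a 0 with rfl | ha0
    · rw [map_zero]; exact zero_mem _
    obtain ⟨s, hs⟩ := (hd a).1 ha
    have hunit : IsUnit (algebraMap R (K ⊗[A] B) a) := by
      rw [IsScalarTower.algebraMap_apply R K]
      exact (IsUnit.mk0 _ ((map_ne_zero_iff _ (IsFractionRing.injective R K)).2 ha0)).map _
    have hmap (r : R) : tensorAlgebraMap A R K B (r ⊗ₜ 1) = algebraMap R (K ⊗[A] B) r := rfl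
    refine (hd _).2 ⟨D' s, ?_⟩
    rw [Algebra.smul_def, ← hmap, ← hD']
    refine map_derivation_eq_mul_of_isIdempotentElem (f := (tensorAlgebraMap A R K B).toRingHom)
      tensorAlgebraMap_injective he (c := a ⊗ₜ 1) hunit ?_ D'
    exact hs.trans (Algebra.smul_def _ _)
  obtain ⟨c, hc0, hce⟩ := exists_smul_mem_range_tensorAlgebraMap (R := R) e
  exact hc0 (by rw [← Ideal.mem_bot, ← hbot, hd]; exact hce)

end FractionField

section PowerSeries

variable {k σ : Type*} [Field k]

instance isDomain_mvPowerSeries : IsDomain (MvPowerSeries σ k) := NoZeroDivisors.to_isDomain _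

instance faithfulSMul_mvPowerSeries : FaithfulSMul (MvPolynomial σ k) (MvPowerSeries σ k) :=
  (faithfulSMul_iff_algebraMap_injective _ _).2 (MvPolynomial.coe_injective σ k)

instance flat_mvPowerSeries [Finite σ] : Module.Flat (MvPolynomial σ k) (MvPowerSeries σ k) :=
  have := AdicCompletion.flat_of_isNoetherian (MvPolynomial.idealOfVars σ k)
  .of_linearEquiv (MvPowerSeries.toAdicCompletionAlgEquiv σ k).toLinearEquiv

theorem exists_derivation_tensorProduct_mvPowerSeries [Finite σ] {R : Type*} [CommRing R]
    [Algebra k R] [Algebra (MvPolynomial σ k) R] [IsScalarTower k (MvPolynomial σ k) R]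
    (D : Derivation k R R) :
    ∃ D' : Derivation ℤ (R ⊗[MvPolynomial σ k] MvPowerSeries σ k)
      (R ⊗[MvPolynomial σ k] MvPowerSeries σ k), ∀ r, D' (r ⊗ₜ 1) = D r ⊗ₜ 1 := by
  have := Fintype.ofFinite σ
  obtain ⟨D', hD'⟩ := exists_derivation_tensorProduct (A := MvPolynomial σ k) D
    (fun i : σ => D (algebraMap (MvPolynomial σ k) R (MvPolynomial.X i)))
    (fun i => MvPowerSeries.pderiv k i) fun a => by
      have ha : D (algebraMap (MvPolynomial σ k) R a) = ∑ i, MvPolynomial.pderiv i a •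
          D (algebraMap (MvPolynomial σ k) R (MvPolynomial.X i)) :=
        mvPolynomial_derivation_apply (D.compAlgebraMap (MvPolynomial σ k)) a
      rw [ha, sum_tmul]
      refine Finset.sum_congr rfl fun i _ => ?_
      rw [smul_tmul, Algebra.smul_def, mul_one]
      exact congr_arg _ (MvPowerSeries.pderiv_coe a).symm
  exact ⟨D', fun r => by simp [hD']⟩

theorem exists_derivation_tensorProduct_pderiv {K : Type*} [CommRing K] [Algebra k K]
    [Algebra (MvPolynomial σ k) K] [IsScalarTower k (MvPolynomial σ k) K]
    [Algebra.FormallySmooth (MvPolynomial σ k) K] (i : σ) :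
    ∃ D' : Derivation ℤ (K ⊗[MvPolynomial σ k] MvPowerSeries σ k)
      (K ⊗[MvPolynomial σ k] MvPowerSeries σ k),
      ∀ f, D' (1 ⊗ₜ f) = 1 ⊗ₜ MvPowerSeries.pderiv k i f := by
  obtain ⟨D, hD⟩ := exists_derivation_extension_of_formallySmooth (B := K)
    ((Algebra.linearMap (MvPolynomial σ k) K).compDer (MvPolynomial.pderiv (R := k) i))
  obtain ⟨D', hD'⟩ := exists_derivation_tensorProduct (A := MvPolynomial σ k) (ι := Unit)
    (C := MvPowerSeries σ k) D (fun _ => 1) (fun _ => MvPowerSeries.pderiv k i) fun a => by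
      have ha : D (algebraMap _ K a) = MvPolynomial.pderiv i a • (1 : K) :=
        (hD a).trans (Algebra.algebraMap_eq_smul_one _)
      rw [ha, smul_tmul, Algebra.smul_def, mul_one, Fintype.sum_unique]
      exact congr_arg _ (MvPowerSeries.pderiv_coe a).symm
  exact ⟨D', fun f => by simp [hD']⟩

variable (A K B Φ : Type*) [CommRing A] [CommRing K] [Algebra A K] [CommRing B] [Algebra A B]
  [Field Φ] [Algebra B Φ] [Algebra A Φ] [IsScalarTower A B Φ]

/-- The map `K ⊗ B → K ⊗ Φ` for the fraction field `Φ` of `B`. -/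
noncomputable abbrev tensorFractionMap : K ⊗[A] B →ₐ[K] K ⊗[A] Φ :=
  Algebra.TensorProduct.map (AlgHom.id K K) (IsScalarTower.toAlgHom A B Φ)

variable {A K B Φ}

theorem tensorFractionMap_injective [FaithfulSMul B Φ] [Module.Flat A K] :
    Function.Injective (tensorFractionMap A K B Φ) :=
  Module.Flat.lTensor_preserves_injective_linearMap (M := K)
    (IsScalarTower.toAlgHom A B Φ).toLinearMap (FaithfulSMul.algebraMap_injective B Φ)

theorem exists_tmul_mul_mem_range_tensorFractionMap [IsDomain B] [IsFractionRing B Φ]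
    (t : K ⊗[A] Φ) :
    ∃ α : B, α ≠ 0 ∧ (1 ⊗ₜ algebraMap B Φ α) * t ∈ (tensorFractionMap A K B Φ).range := by
  induction t with
  | zero => exact ⟨1, one_ne_zero, by rw [mul_zero]; exact zero_mem _⟩
  | tmul y b =>
    obtain ⟨⟨r, s⟩, hrs⟩ := IsLocalization.surj (nonZeroDivisors B) b
    refine ⟨s, nonZeroDivisors.ne_zero s.2, y ⊗ₜ r, ?_⟩
    rw [Algebra.TensorProduct.tmul_mul_tmul, one_mul, mul_comm, hrs]
    rfl
  | add s t hs ht =>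
    obtain ⟨α, hα, hs⟩ := hs
    obtain ⟨β, hβ, ht⟩ := ht
    have hmem (γ : B) : 1 ⊗ₜ algebraMap B Φ γ ∈ (tensorFractionMap A K B Φ).range := ⟨1 ⊗ₜ γ, rfl⟩
    refine ⟨α * β, mul_ne_zero hα hβ, ?_⟩
    have heq : (1 ⊗ₜ[A] algebraMap B Φ (α * β) : K ⊗[A] Φ) * (s + t) =
        1 ⊗ₜ algebraMap B Φ β * (1 ⊗ₜ algebraMap B Φ α * s) +
          1 ⊗ₜ algebraMap B Φ α * (1 ⊗ₜ algebraMap B Φ β * t) := by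
      have hmul : (1 ⊗ₜ[A] algebraMap B Φ (α * β) : K ⊗[A] Φ) =
          1 ⊗ₜ algebraMap B Φ α * 1 ⊗ₜ algebraMap B Φ β := by simp
      rw [hmul]
      ring
    rw [heq]
    exact add_mem (mul_mem (hmem β) hs) (mul_mem (hmem α) ht)

end PowerSeries

section IdempotentPowerSeries

variable {k σ K Φ : Type*} [Field k] [CharZero k] [Field K] [Algebra k K]
  [Algebra (MvPolynomial σ k) K] [IsScalarTower k (MvPolynomial σ k) K]
  [FaithfulSMul (MvPolynomial σ k) K] [Algebra.IsAlgebraic (MvPolynomial σ k) K]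

-- The denominators of `e` in `k⟦x⟧` form an ideal stable under partial derivatives, because
-- derivations kill idempotents.
theorem mem_range_tensorFractionMap_of_isIdempotentElem [Field Φ] [Algebra (MvPowerSeries σ k) Φ]
    [IsFractionRing (MvPowerSeries σ k) Φ] [Algebra (MvPolynomial σ k) Φ]
    [IsScalarTower (MvPolynomial σ k) (MvPowerSeries σ k) Φ]
    {e : K ⊗[MvPolynomial σ k] Φ} (he : IsIdempotentElem e) :
    e ∈ (tensorFractionMap (MvPolynomial σ k) K (MvPowerSeries σ k) Φ).range := by
  have := flat_field (MvPolynomial σ k) K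
  have := formallyEtale_field (MvPolynomial σ k) K
  let ψ := tensorFractionMap (MvPolynomial σ k) K (MvPowerSeries σ k) Φ
  let incl : MvPowerSeries σ k →+* K ⊗[MvPolynomial σ k] Φ :=
    (Algebra.TensorProduct.includeRight.toRingHom).comp (algebraMap _ Φ)
  let J : Ideal (MvPowerSeries σ k) :=
    { carrier := {α | incl α * e ∈ ψ.range}
      add_mem' := fun {α β} hα hβ => by
        rw [Set.mem_ofPred_eq, map_add, add_mul]; exact add_mem hα hβ
      zero_mem' := by rw [Set.mem_ofPred_eq, map_zero, zero_mul]; exact zero_mem _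
      smul_mem' := fun β α hα => by
        rw [Set.mem_ofPred_eq, smul_eq_mul, map_mul, mul_assoc]
        exact mul_mem ⟨1 ⊗ₜ β, rfl⟩ hα }
  have hmem (α) : α ∈ J ↔ incl α * e ∈ ψ.range := Iff.rfl
  obtain ⟨α, hα, hαe⟩ := exists_tmul_mul_mem_range_tensorFractionMap (B := MvPowerSeries σ k) e
  have htop : J = ⊤ := by
    refine mvPowerSeries_ideal_eq_top_of_pderiv_mem J (fun i f hf => ?_)
      ((Submodule.ne_bot_iff J).2 ⟨α, hαe, hα⟩)
    rcases eq_or_ne f 0 with rfl | hf0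
    · rw [map_zero]; exact zero_mem J
    obtain ⟨D', hD'⟩ := exists_derivation_tensorProduct_pderiv (k := k) (K := K) i
    have hunit : IsUnit (ψ (1 ⊗ₜ f)) :=
      (IsUnit.mk0 _ ((map_ne_zero_iff _ (IsFractionRing.injective _ Φ)).2 hf0)).map
        Algebra.TensorProduct.includeRight
    obtain ⟨t, ht⟩ := hf
    refine ⟨D' t, ?_⟩
    exact (map_derivation_eq_mul_of_isIdempotentElem (f := ψ.toRingHom)
      tensorFractionMap_injective he hunit ht D').trans (congr_arg (ψ · * e) (hD' f))
  have hone := (hmem 1).1 (htop ▸ Submodule.mem_top)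
  rwa [map_one, one_mul] at hone

theorem exists_isIdempotentElem_tmul_mul_eq_of_field
    [Algebra.EssFiniteType (MvPolynomial σ k) K] (z : K ⊗[MvPolynomial σ k] MvPowerSeries σ k) :
    ∃ (e w : K ⊗[MvPolynomial σ k] MvPowerSeries σ k) (α : MvPowerSeries σ k),
      IsIdempotentElem e ∧ e * z = z ∧ α ≠ 0 ∧ (1 ⊗ₜ α) * e = z * w := by
  let Φ := FractionRing (MvPowerSeries σ k)
  have := flat_field (MvPolynomial σ k) K
  have := isArtinianRing_tensorProduct_field (MvPolynomial σ k) K Φ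
  have := isReduced_tensorProduct_field (MvPolynomial σ k) K Φ
  let ψ := tensorFractionMap (MvPolynomial σ k) K (MvPowerSeries σ k) Φ
  have hψ : Function.Injective ψ := tensorFractionMap_injective
  obtain ⟨e, w, he, hez, hew⟩ := exists_isIdempotentElem_eq_mul (ψ z)
  obtain ⟨e, rfl⟩ := mem_range_tensorFractionMap_of_isIdempotentElem he
  obtain ⟨α, hα, w', hw'⟩ :=
    exists_tmul_mul_mem_range_tensorFractionMap (B := MvPowerSeries σ k) w
  refine ⟨e, w', α, hψ ?_, hψ ?_, hα, hψ ?_⟩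
  · rw [map_mul]; exact he
  · rw [map_mul]; exact hez
  · have hψα : ψ (1 ⊗ₜ α) = 1 ⊗ₜ algebraMap _ Φ α := rfl
    rw [map_mul, map_mul, hψα]
    refine (congr_arg _ hew).trans ?_
    rw [mul_left_comm]
    exact congr_arg _ hw'.symm

end IdempotentPowerSeries

section NormalDomain

variable {k σ R : Type*} [Field k] [CharZero k] [Finite σ] [CommRing R] [IsDomain R]
  [IsIntegrallyClosed R] [Algebra k R] [Algebra (MvPolynomial σ k) R]
  [IsScalarTower k (MvPolynomial σ k) R] [Module.Finite (MvPolynomial σ k) R]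
  [FaithfulSMul (MvPolynomial σ k) R]

-- An idempotent substitute for the support of `z`: although `R ⊗ k⟦x⟧` need not be a domain, `z`
-- divides a nonzero power series multiple of `e`.
theorem exists_isIdempotentElem_tmul_mul_eq (z : R ⊗[MvPolynomial σ k] MvPowerSeries σ k) :
    ∃ (e w : R ⊗[MvPolynomial σ k] MvPowerSeries σ k) (α : MvPowerSeries σ k),
      IsIdempotentElem e ∧ e * z = z ∧ α ≠ 0 ∧ (1 ⊗ₜ α) * e = z * w := by
  let K := FractionRing R
  have : Algebra.FiniteType k R := .trans (S := MvPolynomial σ k) inferInstance inferInstance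
  have : Algebra.EssFiniteType R K := .of_isLocalization K (nonZeroDivisors R)
  have : Algebra.EssFiniteType (MvPolynomial σ k) K := .comp _ R K
  have : Algebra.IsAlgebraic R K := IsLocalization.isAlgebraic _ (nonZeroDivisors R)
  have : Algebra.IsAlgebraic (MvPolynomial σ k) K := .trans _ R K
  have : FaithfulSMul (MvPolynomial σ k) K := .trans _ R K
  let ι := tensorAlgebraMap (MvPolynomial σ k) R K (MvPowerSeries σ k)
  have hι : Function.Injective ι := tensorAlgebraMap_injective
  obtain ⟨e, w, α, he, hez, hα, hew⟩ := exists_isIdempotentElem_tmul_mul_eq_of_field (ι z)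
  obtain ⟨e, rfl⟩ : ∃ e', ι e' = e := mem_range_tensorAlgebraMap_of_isIdempotentElem (R := R)
    exists_derivation_tensorProduct_mvPowerSeries he
  obtain ⟨c, hc, w', hw'⟩ : ∃ c : R, c ≠ 0 ∧ ∃ w', ι w' = c • w :=
    exists_smul_mem_range_tensorAlgebraMap w
  obtain ⟨a, ha, b, hb⟩ := (Algebra.IsAlgebraic.isAlgebraic c).exists_nonzero_dvd
    (R := MvPolynomial σ k) (mem_nonZeroDivisors_of_ne_zero hc)
  refine ⟨e, b • w', a * α, hι ?_, hι ?_, mul_ne_zero (by simpa using ha) hα, hι ?_⟩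
  · rw [map_mul]; exact he
  · rw [map_mul]; exact hez
  · have ha' : ι (1 ⊗ₜ (a * α)) = algebraMap (MvPolynomial σ k) R a • (1 ⊗ₜ α) := by
      rw [algebraMap_smul, smul_tmul', smul_tmul, Algebra.smul_def]
      exact (Algebra.TensorProduct.map_tmul ..).trans (by rw [map_one]; rfl)
    calc ι (1 ⊗ₜ (a * α) * e) = (c * b) • (1 ⊗ₜ α * ι e) := by
          rw [map_mul, ha', hb, smul_mul_assoc]
      _ = ι z * b • c • w := by rw [hew, mul_comm c, mul_smul, mul_smul_comm, mul_smul_comm]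
      _ = ι (z * b • w') := by rw [map_mul, map_smul, hw']

end NormalDomain

/-! ### Symbolic powers and truncated evaluation -/

/-- The `j`-th symbolic power of a prime ideal `Q`: the contraction of the `j`-th power of `Q` from
the localization at `Q`. -/
def symbolicPower {S : Type*} [CommRing S] (Q : Ideal S) [hQ : Q.IsPrime] (j : ℕ) : Ideal S where
  carrier := {x | ∃ u ∉ Q, u * x ∈ Q ^ j}
  add_mem' := by
    rintro x y ⟨u, hu, hx⟩ ⟨v, hv, hy⟩
    refine ⟨u * v, hQ.mul_notMem hu hv, ?_⟩
    have heq : u * v * (x + y) = v * (u * x) + u * (v * y) := by ring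
    rw [heq]
    exact add_mem (Ideal.mul_mem_left _ _ hx) (Ideal.mul_mem_left _ _ hy)
  zero_mem' := ⟨1, hQ.one_notMem, by simp⟩
  smul_mem' := by
    rintro c x ⟨u, hu, hx⟩
    refine ⟨u, hu, ?_⟩
    rw [smul_eq_mul, mul_left_comm]
    exact Ideal.mul_mem_left _ _ hx

section SymbolicPower

variable {S : Type*} [CommRing S] {Q : Ideal S} [hQ : Q.IsPrime]

theorem mem_symbolicPower {j : ℕ} {x : S} : x ∈ symbolicPower Q j ↔ ∃ u ∉ Q, u * x ∈ Q ^ j :=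
  Iff.rfl

theorem pow_le_symbolicPower (j : ℕ) : Q ^ j ≤ symbolicPower Q j := fun x hx =>
  ⟨1, hQ.one_notMem, by rwa [one_mul]⟩

theorem symbolicPower_antitone : Antitone (symbolicPower Q) := fun _ _ h _ ⟨u, hu, hx⟩ =>
  ⟨u, hu, Ideal.pow_le_pow_right h hx⟩

theorem mem_symbolicPower_of_mul_mem {j : ℕ} {u x : S} (hu : u ∉ Q)
    (h : u * x ∈ symbolicPower Q j) : x ∈ symbolicPower Q j := by
  obtain ⟨v, hv, h⟩ := h
  exact ⟨v * u, hQ.mul_notMem hv hu, by rwa [mul_assoc]⟩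

theorem symbolicPower_le {j : ℕ} (hj : j ≠ 0) : symbolicPower Q j ≤ Q := fun _ ⟨_, hu, hx⟩ =>
  (hQ.mem_or_mem (Ideal.pow_le_self hj hx)).resolve_left hu

theorem derivation_apply_mem_pow {k S : Type*} [CommRing k] [CommRing S] [Algebra k S]
    (D : Derivation k S S) (Q : Ideal S) (j : ℕ) : ∀ x ∈ Q ^ (j + 1), D x ∈ Q ^ j := by
  induction j with
  | zero => intro x _; simp
  | succ j ih =>
    intro x hx
    rw [pow_succ] at hx
    refine Submodule.mul_induction_on hx (fun a ha b hb => ?_)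
      fun a b ha hb => by rw [map_add]; exact add_mem ha hb
    rw [D.leibniz, smul_eq_mul, smul_eq_mul]
    refine add_mem (Ideal.mul_mem_right _ _ ha) ?_
    rw [pow_succ']
    exact Ideal.mul_mem_mul hb (ih a ha)

theorem derivation_apply_mem_symbolicPower {k : Type*} [CommRing k] [Algebra k S]
    (D : Derivation k S S) (j : ℕ) {x : S} (hx : x ∈ symbolicPower Q (j + 1)) :
    D x ∈ symbolicPower Q j := by
  obtain ⟨u, hu, hx⟩ := hx
  refine ⟨u * u, hQ.mul_notMem hu hu, ?_⟩
  have hD := derivation_apply_mem_pow D Q j _ hx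
  rw [D.leibniz, smul_eq_mul, smul_eq_mul] at hD
  have heq : u * u * D x = u * (u * D x + x * D u) - (u * x) * D u := by ring
  rw [heq]
  exact sub_mem (Ideal.mul_mem_left _ _ hD)
    (Ideal.mul_mem_right _ _ (Ideal.pow_le_pow_right j.le_succ hx))

-- Artin–Rees for `Q` and the principal ideal of `c`.
theorem exists_mem_symbolicPower_of_mul_mem [IsDomain S] [IsNoetherianRing S] {c : S} (hc : c ≠ 0)
    (j : ℕ) : ∃ i, ∀ x, c * x ∈ symbolicPower Q i → x ∈ symbolicPower Q j := by
  obtain ⟨n, hn⟩ := Ideal.exists_pow_inf_eq_pow_smul Q (Ideal.span {c} : Ideal S)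
  refine ⟨j + n, ?_⟩
  rintro x ⟨u, hu, hx⟩
  have hmem : u * (c * x) ∈ (Q ^ (j + n) • ⊤ ⊓ Ideal.span {c} : Ideal S) :=
    ⟨by simpa using hx, Ideal.mem_span_singleton'.2 ⟨u * x, by ring⟩⟩
  rw [hn _ (by omega), Nat.add_sub_cancel] at hmem
  obtain ⟨y, hy, hyc⟩ := Ideal.mem_mul_span_singleton.1 (Ideal.mul_mono_right inf_le_right hmem)
  have hyx : y = u * x := mul_right_cancel₀ hc (by rw [hyc]; ring)
  exact ⟨u, hu, hyx ▸ hy⟩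

end SymbolicPower

section PartialDerivatives

variable {k σ S : Type*} [Field k] [CharZero k] [CommRing S] [IsDomain S] [Algebra k S]
  [Algebra.FiniteType k S] [Algebra (MvPolynomial σ k) S] [IsScalarTower k (MvPolynomial σ k) S]
  [FaithfulSMul (MvPolynomial σ k) S]

theorem formallySmooth_field (A L : Type*) [CommRing A] [IsDomain A] [CharZero A] [Field L]
    [Algebra A L] [FaithfulSMul A L] [Algebra.EssFiniteType A L] : Algebra.FormallySmooth A L := by
  let _ : Algebra (FractionRing A) L := FractionRing.liftAlgebra A L
  have : CharZero (FractionRing A) :=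
    charZero_of_injective_algebraMap (IsFractionRing.injective A _)
  have : Algebra.FormallySmooth A (FractionRing A) := .of_isLocalization (nonZeroDivisors A)
  have : Algebra.EssFiniteType (FractionRing A) L := .of_comp A _ _
  have : Algebra.FormallySmooth (FractionRing A) L := .of_perfectField
  exact .comp _ (FractionRing A) _

theorem exists_derivation_algebraMap_eq_mul_pderiv (i : σ) :
    ∃ c : S, c ≠ 0 ∧ ∃ D : Derivation k S S, ∀ p : MvPolynomial σ k,
      D (algebraMap _ S p) = c * algebraMap _ S (MvPolynomial.pderiv i p) := by
  let L := FractionRing S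
  have : FaithfulSMul (MvPolynomial σ k) L := .trans _ S L
  have : Algebra.EssFiniteType S L := .of_isLocalization _ (nonZeroDivisors S)
  have : Algebra.EssFiniteType k L := .comp k S L
  have : Algebra.EssFiniteType (MvPolynomial σ k) L := .of_comp k _ _
  have := formallySmooth_field (MvPolynomial σ k) L
  obtain ⟨D, hD⟩ := exists_derivation_extension_of_formallySmooth (B := L)
    ((Algebra.linearMap (MvPolynomial σ k) L).compDer (MvPolynomial.pderiv (R := k) i))
  obtain ⟨c, hc, D', hD'⟩ := exists_derivation_algebraMap_eq_mul (R := S) D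
  refine ⟨c, hc, D', fun p => IsFractionRing.injective S L ?_⟩
  rw [hD', map_mul, ← IsScalarTower.algebraMap_apply, ← IsScalarTower.algebraMap_apply, hD]
  rfl

end PartialDerivatives

section Truncation

variable {k σ : Type*} [Field k] [Finite σ]

theorem truncTotal_pderiv_sub_pderiv_truncTotal_mem {j n : ℕ} (hjn : j < n) (i : σ)
    (f : MvPowerSeries σ k) :
    MvPowerSeries.truncTotal j (MvPowerSeries.pderiv k i f) -
      MvPolynomial.pderiv i (MvPowerSeries.truncTotal n f) ∈ MvPolynomial.idealOfVars σ k ^ j := by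
  rw [MvPolynomial.mem_pow_idealOfVars_iff']
  intro x hx
  rw [MvPolynomial.coeff_sub, sub_eq_zero, MvPowerSeries.coeff_truncTotal _ hx,
    MvPowerSeries.coeff_pderiv, ← MvPolynomial.coeff_coe, ← MvPowerSeries.pderiv_coe,
    MvPowerSeries.coeff_pderiv, MvPolynomial.coeff_coe, MvPowerSeries.coeff_truncTotal]
  rw [map_add, Finsupp.degree_single]
  omega

theorem eq_zero_of_truncTotal_mem_symbolicPower {S : Type*} [CharZero k] [CommRing S] [IsDomain S]
    [Algebra k S] [Algebra.FiniteType k S] [Algebra (MvPolynomial σ k) S]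
    [IsScalarTower k (MvPolynomial σ k) S] [FaithfulSMul (MvPolynomial σ k) S]
    {Q : Ideal S} [hQ : Q.IsPrime]
    (hX : ∀ j, ∀ a ∈ MvPolynomial.idealOfVars σ k ^ j,
      algebraMap (MvPolynomial σ k) S a ∈ symbolicPower Q j)
    {α : MvPowerSeries σ k} (hα : ∀ j, algebraMap (MvPolynomial σ k) S
      (MvPowerSeries.truncTotal j α) ∈ symbolicPower Q j) : α = 0 := by
  have : IsNoetherianRing S := Algebra.FiniteType.isNoetherianRing k S
  have hcongr {j a b} (h : a - b ∈ MvPolynomial.idealOfVars σ k ^ j)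
      (hb : algebraMap _ S b ∈ symbolicPower Q j) : algebraMap _ S a ∈ symbolicPower Q j := by
    have hab := add_mem (hX j _ h) hb
    rwa [map_sub, sub_add_cancel] at hab
  let J : Ideal (MvPowerSeries σ k) :=
    { carrier := {f | ∀ j, algebraMap _ S (MvPowerSeries.truncTotal j f) ∈ symbolicPower Q j}
      add_mem' := fun hf hg j => by rw [map_add, map_add]; exact add_mem (hf j) (hg j)
      zero_mem' := fun j => by simp
      smul_mem' := fun c f hf j => hcongr
        (MvPowerSeries.truncTotal_mul_sub_mul_truncTotal_mem_pow_idealOfVars c f)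
        (by rw [map_mul]; exact Ideal.mul_mem_left _ _ (hf j)) }
  by_contra hα0
  have htop : J = ⊤ := by
    refine mvPowerSeries_ideal_eq_top_of_pderiv_mem J (fun i f hf j => ?_)
      ((Submodule.ne_bot_iff J).2 ⟨α, hα, hα0⟩)
    obtain ⟨c, hc, D, hD⟩ := exists_derivation_algebraMap_eq_mul_pderiv (k := k) (S := S) i
    obtain ⟨n, hn⟩ := exists_mem_symbolicPower_of_mul_mem (Q := Q) hc j
    refine hcongr
      (truncTotal_pderiv_sub_pderiv_truncTotal_mem (show j < n + j + 1 by omega) i f) (hn _ ?_)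
    rw [← hD]
    exact symbolicPower_antitone (Nat.le_add_right n j)
      (derivation_apply_mem_symbolicPower D (n + j) (hf (n + j + 1)))
  have hone : ∀ j, algebraMap _ S (MvPowerSeries.truncTotal j (1 : MvPowerSeries σ k)) ∈
      symbolicPower Q j := (htop ▸ Submodule.mem_top : (1 : MvPowerSeries σ k) ∈ J)
  have hone_mem := hone 1
  rw [MvPowerSeries.truncTotal_one one_ne_zero, map_one] at hone_mem
  exact hQ.one_notMem (symbolicPower_le one_ne_zero hone_mem)

variable {R C C' : Type*} [CommRing R] [CommRing C] [CommRing C'] [Algebra (MvPolynomial σ k) R]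
  [Algebra (MvPolynomial σ k) C] [Algebra (MvPolynomial σ k) C']

/-- The map `R ⊗ k⟦x⟧ → C` induced by `R → C` when `C` is killed by the `j`-th power of the
ideal of the variables. -/
noncomputable def truncEval (φ : R →ₐ[MvPolynomial σ k] C) (j : ℕ)
    (hj : ∀ a ∈ MvPolynomial.idealOfVars σ k ^ j, algebraMap (MvPolynomial σ k) C a = 0) :
    R ⊗[MvPolynomial σ k] MvPowerSeries σ k →ₐ[MvPolynomial σ k] C :=
  Algebra.TensorProduct.lift φ
    ((Ideal.Quotient.liftₐ (MvPolynomial.idealOfVars σ k ^ j)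
      (Algebra.ofId (MvPolynomial σ k) C) hj).comp (MvPowerSeries.truncTotalAlgHom σ k j))
    fun _ _ => Commute.all _ _

section TruncEval

variable {φ : R →ₐ[MvPolynomial σ k] C} {i j : ℕ}
  (hj : ∀ a ∈ MvPolynomial.idealOfVars σ k ^ j, algebraMap (MvPolynomial σ k) C a = 0)

theorem truncEval_tmul (r : R) (f : MvPowerSeries σ k) :
    truncEval φ j hj (r ⊗ₜ f) =
      φ r * algebraMap (MvPolynomial σ k) C (MvPowerSeries.truncTotal j f) := by
  rw [truncEval, Algebra.TensorProduct.lift_tmul]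
  rfl

theorem truncEval_comp (hij : i ≤ j) (ψ : C →ₐ[MvPolynomial σ k] C')
    (hi : ∀ a ∈ MvPolynomial.idealOfVars σ k ^ i, algebraMap (MvPolynomial σ k) C' a = 0)
    (z : R ⊗[MvPolynomial σ k] MvPowerSeries σ k) :
    ψ (truncEval φ j hj z) = truncEval (ψ.comp φ) i hi z := by
  induction z with
  | zero => simp only [map_zero]
  | add x y hx hy => rw [map_add, map_add, map_add, hx, hy]
  | tmul r f =>
    rw [truncEval_tmul, truncEval_tmul, map_mul, AlgHom.commutes]
    congr 1
    rw [← sub_eq_zero, ← map_sub]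
    exact hi _ (MvPowerSeries.truncTotal_sub_truncTotal_mem_pow_idealOfVars hij le_rfl f)

end TruncEval

theorem exists_truncTotal_sub_mem_of_cauchy {g : ℕ → MvPolynomial σ k}
    (hg : ∀ j, g (j + 1) - g j ∈ MvPolynomial.idealOfVars σ k ^ j) :
    ∃ f : MvPowerSeries σ k,
      ∀ j, MvPowerSeries.truncTotal j f - g j ∈ MvPolynomial.idealOfVars σ k ^ j := by
  have hadd (j n) : g (j + n) - g j ∈ MvPolynomial.idealOfVars σ k ^ j := by
    induction n with
    | zero => simp
    | succ n ih =>
      rw [← sub_add_sub_cancel]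
      exact add_mem (Ideal.pow_le_pow_right (Nat.le_add_right j n) (hg (j + n))) ih
  let f : MvPowerSeries σ k := fun d => MvPolynomial.coeff d (g (d.degree + 1))
  refine ⟨f, fun j => ?_⟩
  rw [MvPolynomial.mem_pow_idealOfVars_iff']
  intro d hd
  have hdj := hadd (d.degree + 1) (j - (d.degree + 1))
  rw [Nat.add_sub_cancel' hd, MvPolynomial.mem_pow_idealOfVars_iff'] at hdj
  have hcoeff := hdj d (by omega)
  rw [MvPolynomial.coeff_sub, sub_eq_zero] at hcoeff ⊢
  rw [MvPowerSeries.coeff_truncTotal _ hd, hcoeff]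
  rfl

theorem exists_cauchy_coeff {A M ι : Type*} [CommRing A] [AddCommGroup M] [Module A M] [Fintype ι]
    {b : ι → M} (hb : Submodule.span A (Set.range b) = ⊤) {I : ℕ → Ideal A} {w : ℕ → M}
    (hw : ∀ j, w (j + 1) - w j ∈ I j • (⊤ : Submodule A M)) :
    ∃ g : ℕ → ι → A, (∀ j i, g (j + 1) i - g j i ∈ I j) ∧ ∀ j, ∑ i, g j i • b i = w j := by
  have hcoeff (I : Ideal A) {x : M} (hx : x ∈ I • (⊤ : Submodule A M)) :
      ∃ a : ι → A, (∀ i, a i ∈ I) ∧ ∑ i, a i • b i = x := by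
    rw [← hb] at hx
    obtain ⟨a, ha, hsum⟩ := (Submodule.mem_ideal_smul_span_iff_exists_sum I b x).1 hx
    exact ⟨a, ha, by rw [← hsum, Finsupp.sum_fintype _ _ fun i => zero_smul A (b i)]⟩
  choose a ha hsum using fun j => hcoeff _ (hw j)
  obtain ⟨c, -, hc⟩ := hcoeff ⊤ (x := w 0) (by simp)
  refine ⟨fun j i => c i + ∑ n ∈ Finset.range j, a n i, fun j i => ?_, fun j => ?_⟩
  · simpa only [Finset.sum_range_succ, ← add_assoc, add_sub_cancel_left] using ha j i
  · induction j with
    | zero => simpa using hc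
    | succ j ih =>
      simp only [Finset.sum_range_succ, ← add_assoc, add_smul (_ + _), Finset.sum_add_distrib, hsum,
        ih, add_sub_cancel]

-- `R ⊗ k⟦x⟧` is complete for a finite `k[x]`-algebra `R`: compatible sequences converge.
theorem exists_truncEval_eq [Module.Finite (MvPolynomial σ k) R] (w : ℕ → R)
    (hw : ∀ j, w (j + 1) - w j ∈ Ideal.map (algebraMap (MvPolynomial σ k) R)
      (MvPolynomial.idealOfVars σ k ^ j)) :
    ∃ z : R ⊗[MvPolynomial σ k] MvPowerSeries σ k,
      ∀ (C : Type _) [CommRing C] [Algebra (MvPolynomial σ k) C]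
        (φ : R →ₐ[MvPolynomial σ k] C) (j : ℕ)
        (hj : ∀ a ∈ MvPolynomial.idealOfVars σ k ^ j, algebraMap (MvPolynomial σ k) C a = 0),
        truncEval φ j hj z = φ (w j) := by
  obtain ⟨m, b, hb⟩ := Module.Finite.exists_fin (R := MvPolynomial σ k) (M := R)
  obtain ⟨g, hg, hgw⟩ := exists_cauchy_coeff hb (I := fun j => MvPolynomial.idealOfVars σ k ^ j)
    (w := w) fun j => by rw [Ideal.smul_top_eq_map]; exact hw j
  choose f hf using fun i => exists_truncTotal_sub_mem_of_cauchy fun j => hg j i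
  refine ⟨∑ i, b i ⊗ₜ f i, fun C _ _ φ j hj => ?_⟩
  rw [map_sum, ← hgw, map_sum]
  refine Finset.sum_congr rfl fun i _ => ?_
  rw [truncEval_tmul, map_smul, Algebra.smul_def, mul_comm]
  congr 1
  rw [← sub_eq_zero, ← map_sub]
  exact hj _ (hf i j)

theorem isArtinianRing_quotient_idealOfVars_pow (j : ℕ) :
    IsArtinianRing (MvPolynomial σ k ⧸ MvPolynomial.idealOfVars σ k ^ j) := by
  have htrunc (p : MvPolynomial σ k) :
      Ideal.Quotient.mk (MvPolynomial.idealOfVars σ k ^ j)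
        (MvPowerSeries.truncTotal (j + 1) (p : MvPowerSeries σ k)) = Ideal.Quotient.mk _ p := by
    rw [Ideal.Quotient.mk_eq_mk_iff_sub_mem, MvPolynomial.mem_pow_idealOfVars_iff']
    intro d hd
    rw [MvPolynomial.coeff_sub, sub_eq_zero,
      MvPowerSeries.coeff_truncTotal _ (Nat.lt_succ_of_lt hd), MvPolynomial.coeff_coe]
  have : Module.Finite k (MvPolynomial σ k ⧸ MvPolynomial.idealOfVars σ k ^ j) := by
    refine Module.Finite.of_surjective ((Ideal.Quotient.mkₐ k _).toLinearMap ∘ₗ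
      (MvPolynomial.restrictTotalDegree σ k j).subtype) fun x => ?_
    obtain ⟨p, rfl⟩ := Ideal.Quotient.mk_surjective x
    exact ⟨⟨_, (MvPolynomial.mem_restrictTotalDegree _ _ _).2
      (Nat.lt_succ_iff.1 (MvPowerSeries.totalDegree_truncTotal_lt _ j.succ_ne_zero))⟩, htrunc p⟩
  exact .of_finite k _

end Truncation

theorem isArtinianRing_quotient_map {A R : Type*} [CommRing A] [CommRing R] [Algebra A R]
    [Module.Finite A R] (I : Ideal A) [IsArtinianRing (A ⧸ I)] :
    IsArtinianRing (R ⧸ I.map (algebraMap A R)) := by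
  have : Module.Finite (A ⧸ I) (R ⧸ I.map (algebraMap A R)) := .of_restrictScalars_finite A _ _
  exact .of_finite (A ⧸ I) _

section Chevalley

variable {R : Type*} [CommRing R] {𝔞 : ℕ → Ideal R}

theorem exists_forall_le_sup_of_antitone (h𝔞 : Antitone 𝔞) (N : Ideal R) [IsArtinianRing (R ⧸ N)] :
    ∃ n, ∀ i, 𝔞 n ≤ 𝔞 i ⊔ N := by
  obtain ⟨n, hn⟩ := IsArtinian.monotone_stabilizes (R := R ⧸ N) (M := R ⧸ N)
    ⟨fun i => OrderDual.toDual (Ideal.map (Ideal.Quotient.mk N) (𝔞 i)),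
      fun a b hab => Ideal.map_mono (h𝔞 hab)⟩
  refine ⟨n, fun i => ?_⟩
  rcases le_total n i with hi | hi
  · have hmap : Ideal.map (Ideal.Quotient.mk N) (𝔞 n) = Ideal.map (Ideal.Quotient.mk N) (𝔞 i) :=
      hn i hi
    rw [sup_comm, ← Ideal.comap_map_quotientMk, ← hmap]
    exact Ideal.le_comap_map
  · exact le_sup_of_le_left (h𝔞 hi)

theorem exists_seq_of_forall_exists {α : Type*} {p : ℕ → α → Prop} {r : ℕ → α → α → Prop} {l : ℕ}
    {a : α} (hr : ∀ j, r j a a) (hp : ∀ j ≤ l, p j a)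
    (hsucc : ∀ j, ∀ x, p j x → ∃ y, p (j + 1) y ∧ r j x y) :
    ∃ w : ℕ → α, w l = a ∧ ∀ j, p j (w j) ∧ r j (w j) (w (j + 1)) := by
  choose! f hf hrf using hsucc
  let w (j : ℕ) : α := Nat.rec a (fun j x => if j < l then a else f j x) j
  have hw0 (j : ℕ) (hj : j ≤ l) : w j = a := by
    cases j with
    | zero => rfl
    | succ j => exact if_pos hj
  have hw1 (j : ℕ) (hj : l ≤ j) : w (j + 1) = f j (w j) := if_neg hj.not_gt
  have hpw (j : ℕ) : p j (w j) := by
    induction j with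
    | zero => exact hp 0 l.zero_le
    | succ j ih =>
      rcases lt_or_ge j l with hj | hj
      · exact hw0 _ hj ▸ hp _ hj
      · exact hw1 j hj ▸ hf j _ ih
  refine ⟨w, hw0 l le_rfl, fun j => ⟨hpw j, ?_⟩⟩
  rcases lt_or_ge j l with hj | hj
  · rw [hw0 _ hj.le, hw0 _ hj]
    exact hr j
  · exact hw1 j hj ▸ hrf j _ (hpw j)

-- The compatible sequence produced by Chevalley's theorem when `I` contains no `𝔞 i`.
theorem exists_cauchy_notMem_of_antitone (h𝔞 : Antitone 𝔞) {N : ℕ → Ideal R} (hN : Antitone N)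
    [∀ j, IsArtinianRing (R ⧸ N j)] {I : Ideal R} (hI : ∀ i, ¬ 𝔞 i ≤ I) (l : ℕ) :
    ∃ w : ℕ → R, (∀ j, w (j + 1) - w j ∈ N j) ∧ (∀ j, w j ∈ 𝔞 j ⊔ N j) ∧ w l ∉ I := by
  choose n hn using fun j => exists_forall_le_sup_of_antitone h𝔞 (N j)
  obtain ⟨a, ha, haI⟩ := Set.not_subset.1 (hI (n l))
  obtain ⟨w, rfl, hw⟩ := exists_seq_of_forall_exists (a := a)
    (p := fun j x => ∀ i, x ∈ 𝔞 i ⊔ N j) (r := fun j x y => y - x ∈ N j) (l := l)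
    (fun j => by simp) (fun j hj i => sup_le_sup_left (hN hj) _ (hn l i ha)) fun j x hx => by
      obtain ⟨y, hy, ν, hν, rfl⟩ := Submodule.mem_sup.1 (hx (n (j + 1)))
      exact ⟨y, fun i => hn _ i hy, by simpa using hν⟩
  exact ⟨w, fun j => (hw j).2, fun j => (hw j).1 j, haI⟩

end Chevalley

section LinearZariski

variable {k σ R S : Type*} [Field k] [Finite σ] [CommRing R] [CommRing S]
  [Algebra (MvPolynomial σ k) R] [Algebra (MvPolynomial σ k) S]

theorem truncEval_eq_zero_of_isIdempotentElem {P : Ideal R} {l : ℕ} (hl : l ≠ 0)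
    (hP : ∀ a ∈ MvPolynomial.idealOfVars σ k ^ 1, algebraMap (MvPolynomial σ k) (R ⧸ P) a = 0)
    (hPl : ∀ a ∈ MvPolynomial.idealOfVars σ k ^ l,
      algebraMap (MvPolynomial σ k) (R ⧸ P ^ l) a = 0)
    {e : R ⊗[MvPolynomial σ k] MvPowerSeries σ k} (he : IsIdempotentElem e)
    (h : truncEval (Ideal.Quotient.mkₐ _ P) 1 hP e = 0) :
    truncEval (Ideal.Quotient.mkₐ _ (P ^ l)) l hPl e = 0 := by
  refine (he.map _).eq_zero_of_isNilpotent ⟨l, ?_⟩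
  have hcomp := truncEval_comp (φ := Ideal.Quotient.mkₐ _ (P ^ l)) hPl (Nat.one_le_iff_ne_zero.2 hl)
    (Ideal.Quotient.factorₐ _ (Ideal.pow_le_self hl)) hP e
  obtain ⟨y, hy⟩ := Ideal.Quotient.mk_surjective (truncEval (Ideal.Quotient.mkₐ _ (P ^ l)) l hPl e)
  rw [← hy] at hcomp ⊢
  rw [← map_pow]
  exact Ideal.Quotient.eq_zero_iff_mem.2
    (Ideal.pow_mem_pow (Ideal.Quotient.eq_zero_iff_mem.1 (hcomp.trans h)) l)

theorem eq_zero_of_one_tmul_mul_eq_mul [CharZero k] [IsDomain S] [Algebra k S]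
    [Algebra.FiniteType k S] [IsScalarTower k (MvPolynomial σ k) S]
    [FaithfulSMul (MvPolynomial σ k) S] {Q : Ideal S} [Q.IsPrime] (φ : R →ₐ[MvPolynomial σ k] S)
    (hX : ∀ j, ∀ a ∈ MvPolynomial.idealOfVars σ k ^ j,
      algebraMap (MvPolynomial σ k) S a ∈ symbolicPower Q j)
    (hQ : ∀ a ∈ MvPolynomial.idealOfVars σ k ^ 1, algebraMap (MvPolynomial σ k) (S ⧸ Q) a = 0)
    {z w e : R ⊗[MvPolynomial σ k] MvPowerSeries σ k} {α : MvPowerSeries σ k}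
    (hz : ∀ j, truncEval ((Ideal.Quotient.mkₐ _ (symbolicPower Q j)).comp φ) j
      (fun a ha => Ideal.Quotient.eq_zero_iff_mem.2 (hX j a ha)) z = 0)
    (he : truncEval ((Ideal.Quotient.mkₐ _ Q).comp φ) 1 hQ e ≠ 0)
    (hαe : (1 ⊗ₜ α) * e = z * w) : α = 0 := by
  refine eq_zero_of_truncTotal_mem_symbolicPower hX fun j => ?_
  rcases eq_or_ne j 0 with rfl | hj
  · exact pow_le_symbolicPower 0 (by simp)
  let χ := truncEval ((Ideal.Quotient.mkₐ _ (symbolicPower Q j)).comp φ) j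
    fun a ha => Ideal.Quotient.eq_zero_iff_mem.2 (hX j a ha)
  have hcomp : Ideal.Quotient.factorₐ _ (symbolicPower_le hj) (χ e) =
      truncEval ((Ideal.Quotient.mkₐ _ Q).comp φ) 1 hQ e :=
    truncEval_comp _ (Nat.one_le_iff_ne_zero.2 hj) _ hQ e
  have hmul := congrArg χ hαe
  rw [map_mul, map_mul, hz, zero_mul, truncEval_tmul, map_one, one_mul] at hmul
  obtain ⟨y, hy⟩ := Ideal.Quotient.mk_surjective (χ e)
  rw [← hy] at hcomp hmul
  refine mem_symbolicPower_of_mul_mem (u := y) (fun hyQ => he ?_) ?_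
  · exact hcomp.symm.trans (Ideal.Quotient.eq_zero_iff_mem.2 hyQ)
  · rw [mul_comm]
    exact Ideal.Quotient.eq_zero_iff_mem.1 hmul

end LinearZariski

theorem pow_le_comap_symbolicPower {R S : Type*} [CommRing R] [CommRing S] [Algebra R S]
    (Q : Ideal S) [Q.IsPrime] (j : ℕ) :
    Q.comap (algebraMap R S) ^ j ≤ (symbolicPower Q j).comap (algebraMap R S) :=
  (Ideal.le_comap_pow _ j).trans (Ideal.comap_mono (pow_le_symbolicPower j))

theorem map_idealOfVars_pow_le {k σ R : Type*} [CommRing k] [CommRing R]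
    [Algebra (MvPolynomial σ k) R] {P : Ideal R}
    (hX : ∀ i, algebraMap (MvPolynomial σ k) R (MvPolynomial.X i) ∈ P) (j : ℕ) :
    (MvPolynomial.idealOfVars σ k ^ j).map (algebraMap (MvPolynomial σ k) R) ≤ P ^ j := by
  rw [Ideal.map_pow, MvPolynomial.idealOfVars, Ideal.map_span]
  refine Ideal.pow_right_mono (Ideal.span_le.2 ?_) j
  rintro _ ⟨_, ⟨i, rfl⟩, rfl⟩
  exact hX i

-- By Chevalley's argument, otherwise some `z : R ⊗ k⟦x⟧` vanishes to infinite order along `Q` but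
-- not modulo `P ^ l`, where `P` is the contraction of `Q`. The idempotent attached to `z` is `0` or
-- `1` modulo `P`: the first makes `z` vanish modulo `P ^ l`, the second makes `α` vanish to
-- infinite order along `Q`.
theorem exists_comap_symbolicPower_le_pow_of_finite.{u} {k σ : Type*} {R S : Type u} [Field k]
    [CharZero k] [Finite σ] [CommRing R] [IsDomain R] [IsIntegrallyClosed R] [Algebra k R]
    [Algebra (MvPolynomial σ k) R] [IsScalarTower k (MvPolynomial σ k) R]
    [Module.Finite (MvPolynomial σ k) R] [FaithfulSMul (MvPolynomial σ k) R] [CommRing S]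
    [IsDomain S] [Algebra k S] [Algebra.FiniteType k S] [Algebra (MvPolynomial σ k) S]
    [IsScalarTower k (MvPolynomial σ k) S] [FaithfulSMul (MvPolynomial σ k) S] [Algebra R S]
    [IsScalarTower (MvPolynomial σ k) R S] (Q : Ideal S) [Q.IsPrime]
    (hXQ : ∀ i : σ, algebraMap (MvPolynomial σ k) S (MvPolynomial.X i) ∈ Q) (l : ℕ) :
    ∃ j, (symbolicPower Q j).comap (algebraMap R S) ≤ Q.comap (algebraMap R S) ^ l := by
  let P := Q.comap (algebraMap R S)
  let ρ := IsScalarTower.toAlgHom (MvPolynomial σ k) R S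
  let N (j : ℕ) := (MvPolynomial.idealOfVars σ k ^ j).map (algebraMap (MvPolynomial σ k) R)
  have hNP (j : ℕ) : N j ≤ P ^ j := map_idealOfVars_pow_le (P := P) (fun i => by
    simpa [P, ← IsScalarTower.algebraMap_apply] using hXQ i) j
  have hX (j : ℕ) : ∀ a ∈ MvPolynomial.idealOfVars σ k ^ j,
      algebraMap (MvPolynomial σ k) S a ∈ symbolicPower Q j := fun a ha => by
    rw [IsScalarTower.algebraMap_apply _ R S]
    exact pow_le_comap_symbolicPower (R := R) Q j (hNP j (Ideal.mem_map_of_mem _ ha))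
  have (j : ℕ) : IsArtinianRing (R ⧸ N j) :=
    have := isArtinianRing_quotient_idealOfVars_pow (k := k) (σ := σ) j
    isArtinianRing_quotient_map _
  by_contra! hcon
  obtain ⟨w, hwN, hwQ, hwl⟩ := exists_cauchy_notMem_of_antitone
    (𝔞 := fun j => (symbolicPower Q j).comap (algebraMap R S)) (N := N)
    (fun i j hij => Ideal.comap_mono (symbolicPower_antitone hij))
    (fun i j hij => Ideal.map_mono (Ideal.pow_le_pow_right hij)) hcon l
  obtain ⟨z, hz⟩ := exists_truncEval_eq w hwN
  obtain ⟨e, v, α, he, hez, hα, hαe⟩ := exists_isIdempotentElem_tmul_mul_eq z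
  have hP (j : ℕ) : ∀ a ∈ MvPolynomial.idealOfVars σ k ^ j,
      algebraMap (MvPolynomial σ k) (R ⧸ P ^ j) a = 0 := fun a ha =>
    Ideal.Quotient.eq_zero_iff_mem.2 (hNP j (Ideal.mem_map_of_mem _ ha))
  have hP1 : ∀ a ∈ MvPolynomial.idealOfVars σ k ^ 1,
      algebraMap (MvPolynomial σ k) (R ⧸ P) a = 0 := fun a ha =>
    Ideal.Quotient.eq_zero_iff_mem.2 (Ideal.pow_le_self one_ne_zero (hNP 1
      (Ideal.mem_map_of_mem _ ha)))
  have hl : l ≠ 0 := by rintro rfl; simp at hwl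
  rcases IsIdempotentElem.iff_eq_zero_or_one.1 (he.map (truncEval (Ideal.Quotient.mkₐ _ P) 1 hP1))
    with h0 | h1
  · have hzl := congrArg (truncEval (Ideal.Quotient.mkₐ _ (P ^ l)) l (hP l)) hez
    rw [map_mul, truncEval_eq_zero_of_isIdempotentElem hl hP1 (hP l) he h0, zero_mul, hz] at hzl
    exact hwl (Ideal.Quotient.eq_zero_iff_mem.1 hzl.symm)
  · refine hα (eq_zero_of_one_tmul_mul_eq_mul ρ hX (fun a ha => Ideal.Quotient.eq_zero_iff_mem.2
      (symbolicPower_le one_ne_zero (hX 1 a ha))) (fun j => ?_) ?_ hαe)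
    · rw [hz]
      exact Ideal.Quotient.eq_zero_iff_mem.2
        (sup_le le_rfl ((hNP j).trans (pow_le_comap_symbolicPower Q j)) (hwQ j))
    · have hcomp := truncEval_comp (φ := Ideal.Quotient.mkₐ _ P) hP1 le_rfl
        (Ideal.quotientMapₐ Q ρ le_rfl) (fun a ha => Ideal.Quotient.eq_zero_iff_mem.2
          (symbolicPower_le one_ne_zero (hX 1 a ha))) e
      rw [h1, map_one] at hcomp
      exact fun h0 => one_ne_zero (hcomp.trans h0)

theorem aeval_polynomial_aeval_X_finite {k σ : Type*} [CommRing k] [Finite σ]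
    {f : σ → Polynomial k} (hmon : ∀ i, (f i).Monic) (hdeg : ∀ i, (f i).natDegree ≠ 0) :
    (MvPolynomial.aeval fun i => Polynomial.aeval (MvPolynomial.X i) (f i) :
      MvPolynomial σ k →ₐ[k] MvPolynomial σ k).Finite := by
  let g : MvPolynomial σ k →ₐ[k] MvPolynomial σ k :=
    MvPolynomial.aeval fun i => Polynomial.aeval (MvPolynomial.X i) (f i)
  have hX (i : σ) : g.toRingHom.IsIntegralElem (MvPolynomial.X i) := by
    have : Nontrivial k := not_subsingleton_iff_nontrivial.1 fun _ =>
      hdeg i Polynomial.natDegree_of_subsingleton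
    refine ⟨(f i).map MvPolynomial.C - Polynomial.C (MvPolynomial.X i), ?_, ?_⟩
    · refine ((hmon i).map _).sub_of_left ?_
      rw [(hmon i).degree_map]
      exact Polynomial.degree_C_le.trans_lt
        (Polynomial.natDegree_pos_iff_degree_pos.1 (Nat.pos_of_ne_zero (hdeg i)))
    · have hC : g.toRingHom.comp MvPolynomial.C = algebraMap k (MvPolynomial σ k) :=
        g.comp_algebraMap
      rw [Polynomial.eval₂_sub, Polynomial.eval₂_map, Polynomial.eval₂_C, hC, sub_eq_zero]
      exact (MvPolynomial.aeval_X (fun i => Polynomial.aeval (MvPolynomial.X i) (f i)) i).symm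
  have hint : g.toRingHom.IsIntegral := fun p => by
    induction p using MvPolynomial.induction_on with
    | C a => exact g.commutes a ▸ RingHom.isIntegralElem_map (f := g.toRingHom)
    | add p q hp hq => exact hp.add _ hq
    | mul_X p i hp => exact hp.mul _ (hX i)
  refine hint.to_finite (RingHom.FiniteType.of_comp_finiteType (f := algebraMap k _) ?_)
  rw [show g.toRingHom.comp (algebraMap k _) = algebraMap k _ from g.comp_algebraMap]
  exact RingHom.finiteType_algebraMap.2 inferInstance

-- A Noether normalization is corrected by replacing each variable by its minimal polynomial
-- modulo `P`.
theorem exists_noether_normalization_forall_mem {k R : Type*} [Field k] [CommRing R] [IsDomain R]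
    [Algebra k R] [Algebra.FiniteType k R] (P : Ideal R) [P.IsMaximal] :
    ∃ (n : ℕ) (g : MvPolynomial (Fin n) k →ₐ[k] R), Function.Injective g ∧ g.Finite ∧
      ∀ i, g (MvPolynomial.X i) ∈ P := by
  obtain ⟨n, g, hg, hfin⟩ := exists_finite_inj_algHom_of_fg k R
  let _ := Ideal.Quotient.field P
  have : Module.Finite k (R ⧸ P) := finite_of_finite_type_of_isJacobsonRing k (R ⧸ P)
  have hint (r : R) : IsIntegral k (Ideal.Quotient.mk P r) := .of_finite k _
  let f (i : Fin n) : Polynomial k := minpoly k (Ideal.Quotient.mk P (g (MvPolynomial.X i)))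
  have hmon (i) : (f i).Monic := minpoly.monic (hint _)
  have hdeg (i) : (f i).natDegree ≠ 0 := (minpoly.natDegree_pos (hint _)).ne'
  let x (i : Fin n) : R := Polynomial.aeval (g (MvPolynomial.X i)) (f i)
  have hx : AlgebraicIndependent k x := by
    refine AlgebraicIndependent.polynomial_aeval_of_transcendental ?_ fun i =>
      Polynomial.transcendental (f i) (hdeg i) ((hmon i).leadingCoeff ▸ one_mem _)
    rw [AlgebraicIndependent]
    convert hg
    exact (MvPolynomial.aeval_unique g).symm
  have hcomp : (MvPolynomial.aeval x : MvPolynomial (Fin n) k →ₐ[k] R) =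
      g.comp (MvPolynomial.aeval fun i => Polynomial.aeval (MvPolynomial.X i) (f i)) := by
    ext i
    simp [x, Polynomial.aeval_algHom_apply]
  refine ⟨n, MvPolynomial.aeval x, hx, ?_, fun i => ?_⟩
  · rw [hcomp]
    exact hfin.comp (aeval_polynomial_aeval_X_finite hmon hdeg)
  · rw [MvPolynomial.aeval_X, ← Ideal.Quotient.eq_zero_iff_mem, ← Ideal.Quotient.mkₐ_eq_mk k,
      ← Polynomial.aeval_algHom_apply]
    exact minpoly.aeval k _

theorem exists_comap_symbolicPower_le_pow.{u} {k : Type*} {R S : Type u} [Field k] [CharZero k]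
    [CommRing R] [IsDomain R] [IsIntegrallyClosed R] [Algebra k R] [Algebra.FiniteType k R]
    [CommRing S] [IsDomain S] [Algebra k S] [Algebra.FiniteType k S]
    [Algebra R S] [IsScalarTower k R S] [FaithfulSMul R S]
    (Q : Ideal S) [Q.IsPrime] [(Q.comap (algebraMap R S)).IsMaximal] (l : ℕ) :
    ∃ j, (symbolicPower Q j).comap (algebraMap R S) ≤ Q.comap (algebraMap R S) ^ l := by
  obtain ⟨n, g, hg, hfin, hX⟩ :=
    exists_noether_normalization_forall_mem (k := k) (Q.comap (algebraMap R S))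
  let _ : Algebra (MvPolynomial (Fin n) k) R := g.toAlgebra
  let _ : Algebra (MvPolynomial (Fin n) k) S := ((IsScalarTower.toAlgHom k R S).comp g).toAlgebra
  have : IsScalarTower k (MvPolynomial (Fin n) k) R :=
    .of_algebraMap_eq fun r => (g.commutes r).symm
  have : IsScalarTower k (MvPolynomial (Fin n) k) S :=
    .of_algebraMap_eq fun r => (((IsScalarTower.toAlgHom k R S).comp g).commutes r).symm
  have : IsScalarTower (MvPolynomial (Fin n) k) R S := .of_algebraMap_eq fun _ => rfl
  have : Module.Finite (MvPolynomial (Fin n) k) R := hfin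
  have : FaithfulSMul (MvPolynomial (Fin n) k) R := (faithfulSMul_iff_algebraMap_injective _ _).2 hg
  have : FaithfulSMul (MvPolynomial (Fin n) k) S :=
    (faithfulSMul_iff_algebraMap_injective _ _).2 ((FaithfulSMul.algebraMap_injective R S).comp hg)
  exact exists_comap_symbolicPower_le_pow_of_finite (k := k) Q hX l

theorem finiteType_localization {R S : Type*} [CommRing R] [CommRing S] [Algebra R S]
    (M : Submonoid R) [Algebra.FiniteType R S] :
    Algebra.FiniteType (Localization M) (Localization (Algebra.algebraMapSubmonoid S M)) :=
  have := (Algebra.isPushout_of_isLocalization M (Localization M) S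
    (Localization (Algebra.algebraMapSubmonoid S M))).symm
  .equiv inferInstance (Algebra.IsPushout.equiv R (Localization M) S
    (Localization (Algebra.algebraMapSubmonoid S M)))

theorem comap_symbolicPower_le_symbolicPower_of_isLocalization {R S R' S' : Type*} [CommRing R]
    [CommRing S] [CommRing R'] [CommRing S'] [Algebra R S] [Algebra R R'] [Algebra S S']
    [Algebra R' S'] [Algebra R S'] [IsScalarTower R R' S'] [IsScalarTower R S S']
    (M : Submonoid R) [IsLocalization M R'] (Q : Ideal S') [Q.IsPrime] {j l : ℕ}
    (h : (symbolicPower Q j).comap (algebraMap R' S') ≤ Q.comap (algebraMap R' S') ^ l) :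
    (symbolicPower (Q.comap (algebraMap S S')) j).comap (algebraMap R S) ≤
      symbolicPower (Q.comap (algebraMap R S')) l := by
  have hQ : (Q.comap (algebraMap R S')).map (algebraMap R R') = Q.comap (algebraMap R' S') := by
    rw [IsScalarTower.algebraMap_eq R R' S', ← Ideal.comap_comap]
    exact IsLocalization.map_under M R' _
  have hM (m : M) : (m : R) ∉ Q.comap (algebraMap R S') := fun hm => by
    rw [Ideal.mem_comap, IsScalarTower.algebraMap_apply R R' S'] at hm
    exact Ideal.IsPrime.ne_top ‹_› (Q.eq_top_of_isUnit_mem hm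
      ((IsLocalization.map_units R' m).map (algebraMap R' S')))
  rintro a ⟨u, hu, hua⟩
  have ha : algebraMap R R' a ∈ (symbolicPower Q j).comap (algebraMap R' S') := by
    rw [Ideal.mem_comap, ← IsScalarTower.algebraMap_apply, IsScalarTower.algebraMap_apply R S S']
    exact ⟨algebraMap S S' u, hu, by
      rw [← map_mul]
      exact Ideal.le_comap_pow (algebraMap S S') j hua⟩
  have haP : algebraMap R R' a ∈ (Q.comap (algebraMap R S') ^ l).map (algebraMap R R') := by
    rw [Ideal.map_pow, hQ]
    exact h ha
  obtain ⟨⟨x, m⟩, hx⟩ := (IsLocalization.mem_map_algebraMap_iff M R').1 haP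
  rw [← map_mul, IsLocalization.eq_iff_exists M R'] at hx
  obtain ⟨c, hc⟩ := hx
  refine ⟨c * m, hM (c * m), ?_⟩
  rw [mul_assoc, mul_comm (m : R), hc]
  exact Ideal.mul_mem_left _ _ x.2

theorem isMaximal_map_of_isLocalization {R R' : Type*} [CommRing R] [CommRing R'] [Algebra R R']
    (M : Submonoid R) [IsLocalization M R'] (P : Ideal R) [hP : P.IsPrime]
    (hM : Disjoint (M : Set R) P) (h : ∀ r ∉ P, ∃ m ∈ M, ∃ y, m - r * y ∈ P) :
    (P.map (algebraMap R R')).IsMaximal := by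
  have hP' := IsLocalization.isPrime_of_isPrime_disjoint M R' P hP hM
  refine Ideal.isMaximal_iff.2 ⟨(Ideal.ne_top_iff_one _).1 hP'.ne_top, fun J x hJ hx hxJ => ?_⟩
  obtain ⟨⟨r, s⟩, hrs⟩ := IsLocalization.surj M x
  have hrJ : algebraMap R R' r ∈ J := hrs ▸ J.mul_mem_right _ hxJ
  have hr : r ∉ P := fun hr => hx <|
    (hP'.mem_or_mem (hrs ▸ Ideal.mem_map_of_mem _ hr)).resolve_right fun hs =>
      hP'.ne_top (Ideal.eq_top_of_isUnit_mem _ hs (IsLocalization.map_units R' s))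
  obtain ⟨m, hm, y, hy⟩ := h r hr
  have hmJ : algebraMap R R' m ∈ J := by
    have := J.add_mem (hJ (Ideal.mem_map_of_mem _ hy)) (J.mul_mem_right (algebraMap R R' y) hrJ)
    rwa [← map_mul, ← map_add, sub_add_cancel] at this
  exact (Ideal.eq_top_iff_one _).1
    (J.eq_top_of_isUnit_mem hmJ (IsLocalization.map_units R' ⟨m, hm⟩))

theorem exists_algHom_mvPolynomial_forall_notMem.{u, v} {k : Type u} {R : Type v} [Field k]
    [CommRing R] [Algebra k R] (P : Ideal R) [P.IsPrime] :
    ∃ (ι : Type v) (f : MvPolynomial ι k →ₐ[k] R),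
      (∀ a ≠ 0, f a ∉ P) ∧ ∀ r ∉ P, ∃ a ≠ 0, ∃ y, f a - r * y ∈ P := by
  obtain ⟨ι, b, hb⟩ := exists_isTranscendenceBasis' k (R ⧸ P)
  choose Y hY using fun i => Ideal.Quotient.mk_surjective (b i)
  have hmk (a : MvPolynomial ι k) :
      Ideal.Quotient.mk P (MvPolynomial.aeval Y a) = MvPolynomial.aeval b a := by
    rw [← Ideal.Quotient.mkₐ_eq_mk k, MvPolynomial.comp_aeval_apply]
    simp [hY]
  refine ⟨ι, MvPolynomial.aeval Y, fun a ha h => ha ?_, fun r hr => ?_⟩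
  · rw [← Ideal.Quotient.eq_zero_iff_mem, hmk] at h
    exact (map_eq_zero_iff _ hb.1).1 h
  · have hr0 : Ideal.Quotient.mk P r ≠ 0 := mt Ideal.Quotient.eq_zero_iff_mem.1 hr
    obtain ⟨⟨a, ha⟩, ha0, y, hy⟩ := (hb.isAlgebraic.isAlgebraic (Ideal.Quotient.mk P r)
      ).exists_nonzero_dvd (mem_nonZeroDivisors_of_ne_zero hr0)
    rw [Algebra.adjoin_range_eq_range_aeval] at ha
    obtain ⟨a, rfl⟩ := ha
    obtain ⟨y, rfl⟩ := Ideal.Quotient.mk_surjective y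
    refine ⟨a, ?_, y, ?_⟩
    · rintro rfl
      exact ha0 (Subtype.ext (map_zero _))
    · rw [← Ideal.Quotient.eq_zero_iff_mem, map_sub, map_mul, ← hy, hmk, sub_eq_zero]
      rfl

theorem isPrime_map_and_comap_map_eq {R S R' S' : Type*} [CommRing R] [CommRing S] [CommRing R']
    [CommRing S'] [Algebra R S] [Algebra R R'] [Algebra S S'] [Algebra R' S'] [Algebra R S']
    [IsScalarTower R R' S'] [IsScalarTower R S S'] (M : Submonoid R) [IsLocalization M R']
    [IsLocalization (Algebra.algebraMapSubmonoid S M) S'] (Q : Ideal S) [hQ : Q.IsPrime]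
    (hM : Disjoint (M : Set R) (Q.comap (algebraMap R S))) :
    (Q.map (algebraMap S S')).IsPrime ∧ (Q.map (algebraMap S S')).comap (algebraMap S S') = Q ∧
      (Q.map (algebraMap S S')).comap (algebraMap R' S') =
        (Q.comap (algebraMap R S)).map (algebraMap R R') := by
  have hMS : Disjoint (Algebra.algebraMapSubmonoid S M : Set S) (Q : Set S) := by
    rw [Set.disjoint_left] at hM ⊢
    rintro _ ⟨m, hm, rfl⟩
    exact hM hm
  have hQc : (Q.map (algebraMap S S')).comap (algebraMap S S') = Q :=
    IsLocalization.under_map_of_isPrime_disjoint _ S' hQ hMS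
  refine ⟨IsLocalization.isPrime_of_isPrime_disjoint _ S' Q hQ hMS, hQc, ?_⟩
  rw [← IsLocalization.map_under M R' (Ideal.comap (algebraMap R' S') _), Ideal.under,
    Ideal.comap_comap, ← IsScalarTower.algebraMap_eq, IsScalarTower.algebraMap_eq R S S',
    ← Ideal.comap_comap, hQc]

theorem exists_comap_symbolicPower_le_symbolicPower_of_forall_notMem.{u} {A : Type*} {R S : Type u}
    [CommRing A] [IsDomain A] [CharZero A] [CommRing R] [IsDomain R] [IsIntegrallyClosed R]
    [Algebra A R] [Algebra.FiniteType A R] [CommRing S] [IsDomain S] [Algebra R S]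
    [Algebra.FiniteType R S] [FaithfulSMul R S] (Q : Ideal S) [Q.IsPrime]
    (hA : ∀ a ≠ 0, algebraMap A R a ∉ Q.comap (algebraMap R S))
    (hQ : ∀ r ∉ Q.comap (algebraMap R S),
      ∃ a ≠ 0, ∃ y, algebraMap A R a - r * y ∈ Q.comap (algebraMap R S)) (l : ℕ) :
    ∃ j, (symbolicPower Q j).comap (algebraMap R S) ≤
      symbolicPower (Q.comap (algebraMap R S)) l := by
  let M := Algebra.algebraMapSubmonoid R (nonZeroDivisors A)
  let R' := Localization M
  let S' := Localization (Algebra.algebraMapSubmonoid S M)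
  let k := FractionRing A
  have hMP : Disjoint (M : Set R) (Q.comap (algebraMap R S)) := by
    rw [Set.disjoint_left]
    rintro _ ⟨a, ha, rfl⟩
    exact hA a (nonZeroDivisors.ne_zero ha)
  have hM : M ≤ nonZeroDivisors R :=
    le_nonZeroDivisors_of_noZeroDivisors fun h => Set.disjoint_left.1 hMP h (zero_mem _)
  have : IsDomain R' := IsLocalization.isDomain_of_le_nonZeroDivisors R' hM
  have : IsDomain S' := IsLocalization.isDomain_of_le_nonZeroDivisors S'
    (algebraMapSubmonoid_le_nonZeroDivisors_of_faithfulSMul S hM)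
  have : IsIntegrallyClosed R' := isIntegrallyClosed_of_isLocalization R' M hM
  have : FaithfulSMul R' S' := (faithfulSMul_iff_algebraMap_injective _ _).2
    (localizationAlgebra_injective R' S' (FaithfulSMul.algebraMap_injective R S))
  have : CharZero k := charZero_of_injective_algebraMap (IsFractionRing.injective A k)
  have : Algebra.FiniteType k R' := finiteType_localization (nonZeroDivisors A)
  have : Algebra.FiniteType R' S' := finiteType_localization M
  let _ : Algebra k S' := ((algebraMap R' S').comp (algebraMap k R')).toAlgebra
  have : IsScalarTower k R' S' := .of_algebraMap_eq fun _ => rfl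
  have : Algebra.FiniteType k S' := .trans (S := R') inferInstance inferInstance
  obtain ⟨hprime, hQc, hP⟩ := isPrime_map_and_comap_map_eq (R' := R') (S' := S') M Q hMP
  have : ((Q.map (algebraMap S S')).comap (algebraMap R' S')).IsMaximal := by
    rw [hP]
    refine isMaximal_map_of_isLocalization M _ hMP fun r hr => ?_
    obtain ⟨a, ha, y, hy⟩ := hQ r hr
    exact ⟨_, ⟨a, mem_nonZeroDivisors_of_ne_zero ha, rfl⟩, y, hy⟩
  obtain ⟨j, hj⟩ := exists_comap_symbolicPower_le_pow (k := k) (R := R')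
    (Q.map (algebraMap S S')) l
  have := comap_symbolicPower_le_symbolicPower_of_isLocalization (S := S) M _ hj
  simp only [IsScalarTower.algebraMap_eq R S S', ← Ideal.comap_comap, hQc] at this
  exact ⟨j, this⟩

-- Inverting the nonzero polynomials in lifts of a transcendence basis of `R ⧸ P`, where `P` is the
-- contraction of `Q`, makes `P` maximal over the enlarged base field.
theorem exists_comap_symbolicPower_le_symbolicPower.{u} (k : Type*) {R S : Type u} [Field k]
    [CharZero k] [CommRing R] [IsDomain R] [IsIntegrallyClosed R] [Algebra k R]
    [Algebra.FiniteType k R] [CommRing S] [IsDomain S] [Algebra R S] [Algebra.FiniteType R S]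
    [FaithfulSMul R S] (Q : Ideal S) [Q.IsPrime] (l : ℕ) :
    ∃ j, (symbolicPower Q j).comap (algebraMap R S) ≤
      symbolicPower (Q.comap (algebraMap R S)) l := by
  obtain ⟨ι, f, hf, hfQ⟩ :=
    exists_algHom_mvPolynomial_forall_notMem (k := k) (Q.comap (algebraMap R S))
  let _ : Algebra (MvPolynomial ι k) R := f.toAlgebra
  have : IsScalarTower k (MvPolynomial ι k) R := .of_algebraMap_eq fun r => (f.commutes r).symm
  have : Algebra.FiniteType (MvPolynomial ι k) R := .of_restrictScalars_finiteType k _ R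
  exact exists_comap_symbolicPower_le_symbolicPower_of_forall_notMem Q hf hfQ l

/-! ### Residue fields -/

theorem length_le_length_of_residue {A B : Type*} [CommRing A] [CommRing B] [IsLocalRing B]
    [Algebra A B] (hres : ∀ x : B, ∃ y : A, x - algebraMap A B y ∈ IsLocalRing.maximalIdeal B)
    (M : Type*) [AddCommGroup M] [Module B M] (hM : IsFiniteLength B M) :
    ∀ [Module A M] [IsScalarTower A B M], Module.length A M ≤ Module.length B M := by
  induction hM with
  | of_subsingleton => intros; simp
  | @of_simple_quotient M _ _ N _ _ ih =>
    intro _ _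
    have hA : Module.length A M = Module.length A N + Module.length A (M ⧸ N) :=
      Module.length_eq_add_of_exact (N.subtype.restrictScalars A) (N.mkQ.restrictScalars A)
        N.injective_subtype N.mkQ_surjective (LinearMap.exact_subtype_mkQ N)
    have hB : Module.length B M = Module.length B N + Module.length B (M ⧸ N) :=
      Module.length_eq_add_of_exact N.subtype N.mkQ
        N.injective_subtype N.mkQ_surjective (LinearMap.exact_subtype_mkQ N)
    have hmax : Module.annihilator B (M ⧸ N) = IsLocalRing.maximalIdeal B :=
      IsLocalRing.eq_maximalIdeal (IsSimpleModule.annihilator_isMaximal (R := B))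
    have : IsSimpleModule A (M ⧸ N) := by
      refine isSimpleModule_iff_toSpanSingleton_surjective.2
        ⟨IsSimpleModule.nontrivial B (M ⧸ N), fun v hv w => ?_⟩
      obtain ⟨x, hx⟩ := IsSimpleModule.toSpanSingleton_surjective B hv w
      obtain ⟨y, hy⟩ := hres x
      have hxy := Module.mem_annihilator.1 (hmax.ge hy) v
      rw [sub_smul, sub_eq_zero, algebraMap_smul] at hxy
      exact ⟨y, hxy.symm.trans hx⟩
    rw [hA, hB, Module.length_eq_one A (M ⧸ N), Module.length_eq_one B (M ⧸ N)]
    gcongr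
    exact ih

theorem surjective_of_length_le {A B : Type*} [CommRing A] [CommRing B] [IsLocalRing B]
    [IsArtinianRing A] [IsArtinianRing B] (f : A →+* B) (hf : Function.Injective f)
    (hres : ∀ x : B, ∃ y : A, x - f y ∈ IsLocalRing.maximalIdeal B)
    (hlen : Module.length B B ≤ Module.length A A) : Function.Surjective f := by
  let _ : Algebra A B := f.toAlgebra
  have hle : Module.length A B ≤ Module.length A A := (length_le_length_of_residue hres B
    ((isArtinianRing_iff_isFiniteLength B).1 inferInstance)).trans hlen
  have hfin : IsFiniteLength A B := Module.length_ne_top_iff.1 <| ne_top_of_le_ne_top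
    (Module.length_ne_top_iff.2 ((isArtinianRing_iff_isFiniteLength A).1 inferInstance)) hle
  obtain ⟨_, _⟩ := isFiniteLength_iff_isNoetherian_isArtinian.1 hfin
  let g : A →ₗ[A] B := Algebra.linearMap A B
  by_contra hsur
  have hlt := Submodule.length_lt (mt (LinearMap.range_eq_top (f := g)).1 hsur)
  rw [← (LinearEquiv.ofInjective g hf).length_eq] at hlt
  exact hle.not_gt hlt

theorem mem_range_algebraMap_of_tmul_one_eq {K L : Type*} [Field K] [CommRing L] [Nontrivial L]
    [Algebra K L] {x : L} (hx : x ⊗ₜ[K] (1 : L) = 1 ⊗ₜ x) : x ∈ (algebraMap K L).range := by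
  by_contra hxK
  have hx1 : x ∉ Submodule.span K {(1 : L)} := fun h => by
    obtain ⟨c, rfl⟩ := Submodule.mem_span_singleton.1 h
    exact hxK ⟨c, Algebra.algebraMap_eq_smul_one c⟩
  obtain ⟨φ, hφx, hφ⟩ := Submodule.exists_le_ker_of_notMem hx1
  have hφ1 : φ 1 = 0 := hφ (Submodule.mem_span_singleton_self 1)
  have := congrArg ((TensorProduct.lid K L).toLinearMap ∘ₗ φ.rTensor L) hx
  simp only [LinearMap.comp_apply, LinearMap.rTensor_tmul, LinearEquiv.coe_coe,
    TensorProduct.lid_tmul, hφ1, zero_smul, smul_eq_zero, one_ne_zero, or_false] at this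
  exact hφx this

theorem exists_mul_sub_mem_of_tmul_one_eq {R S : Type*} [CommRing R] [CommRing S] [Algebra R S]
    (Q : Ideal S) [Q.IsPrime] {x : S} (hx : x ⊗ₜ[R] (1 : S) = 1 ⊗ₜ x) :
    ∃ a s : R, algebraMap R S s ∉ Q ∧ algebraMap R S s * x - algebraMap R S a ∈ Q := by
  let P := Q.comap (algebraMap R S)
  let K := P.ResidueField
  let L := Q.ResidueField
  let _ : Algebra K L := (Ideal.ResidueField.map P Q (algebraMap R S) rfl).toAlgebra
  have hmap (r : R) : algebraMap K L (algebraMap R K r) = algebraMap S L (algebraMap R S r) :=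
    Ideal.ResidueField.map_algebraMap P Q _ rfl r
  have : IsScalarTower R K L := .of_algebraMap_eq fun r => by
    rw [hmap, IsScalarTower.algebraMap_apply R S L]
  let g : S →ₐ[R] L := IsScalarTower.toAlgHom R S L
  have hxL : g x ⊗ₜ[K] (1 : L) = 1 ⊗ₜ g x := by
    simpa using congrArg ((Algebra.TensorProduct.mapOfCompatibleSMul K R R L L).comp
      (Algebra.TensorProduct.map g g)) hx
  obtain ⟨y, hy⟩ := mem_range_algebraMap_of_tmul_one_eq hxL
  obtain ⟨a, s, hs, rfl⟩ := IsFractionRing.div_surjective (A := R ⧸ P) y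
  obtain ⟨a, rfl⟩ := Ideal.Quotient.mk_surjective a
  obtain ⟨s, rfl⟩ := Ideal.Quotient.mk_surjective s
  have hsP : s ∉ P := fun h => nonZeroDivisors.ne_zero hs (Ideal.Quotient.eq_zero_iff_mem.2 h)
  refine ⟨a, s, hsP, ?_⟩
  have hs0 : algebraMap R K s ≠ 0 := mt Ideal.algebraMap_residueField_eq_zero.1 hsP
  replace hy : algebraMap K L (algebraMap R K a / algebraMap R K s) = g x := hy
  rw [← Ideal.algebraMap_residueField_eq_zero, map_sub, map_mul, ← hmap, ← hmap, sub_eq_zero]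
  change _ * g x = _
  rw [← hy, ← map_mul, mul_div_cancel₀ _ hs0]

/-! ### Denominators of fractions -/

theorem exists_forall_isIntegral_pow_smul (R T : Type*) [CommRing R] [NoZeroDivisors R]
    [CommRing T] [Algebra R T] [Algebra.IsAlgebraic R T] [Algebra.FiniteType R T] :
    ∃ c : R, c ≠ 0 ∧ ∀ x : T, ∃ n : ℕ, IsIntegral R (c ^ n • x) := by
  obtain ⟨s, hs⟩ := ‹Algebra.FiniteType R T›.out
  obtain ⟨c, hc, hint⟩ := Algebra.IsAlgebraic.exists_integral_multiples R s
  refine ⟨c, hc, fun x => ?_⟩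
  open Pointwise in
  have hsub : c • (s : Set T) ⊆ integralClosure R T := by
    rintro _ ⟨y, hy, rfl⟩
    exact hint y hy
  obtain ⟨n, hn⟩ := Algebra.pow_smul_mem_of_smul_subset_of_mem_adjoin c s (integralClosure R T) hsub
    (hs ▸ Algebra.mem_top : x ∈ Algebra.adjoin R s) (Subalgebra.algebraMap_mem _ c)
  exact ⟨n, hn n le_rfl⟩

-- A closed point of the generic fibre of `R → S`.
theorem exists_isPrime_isAlgebraic_quotient (R S : Type*) [CommRing R] [IsDomain R] [CommRing S]
    [Algebra R S] [FaithfulSMul R S] [Algebra.FiniteType R S] :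
    ∃ Q : Ideal S, Q.IsPrime ∧ Q.comap (algebraMap R S) = ⊥ ∧ Algebra.IsAlgebraic R (S ⧸ Q) := by
  let K := FractionRing R
  let M := Algebra.algebraMapSubmonoid S (nonZeroDivisors R)
  let S' := Localization M
  have : Algebra.FiniteType K S' := finiteType_localization (nonZeroDivisors R)
  have : Nontrivial S' := by
    rw [← not_subsingleton_iff_nontrivial, IsLocalization.subsingleton_iff (M := M)]
    rintro ⟨r, hr, hr0⟩
    exact nonZeroDivisors.ne_zero hr
      ((FaithfulSMul.algebraMap_eq_zero_iff R S).1 hr0)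
  obtain ⟨m, hm⟩ := Ideal.exists_maximal S'
  let _ := Ideal.Quotient.field m
  have : Module.Finite K (S' ⧸ m) := finite_of_finite_type_of_isJacobsonRing K (S' ⧸ m)
  have : Algebra.IsAlgebraic R (S' ⧸ m) :=
    (IsFractionRing.comap_isAlgebraic_iff (A := R) (K := K)).2 inferInstance
  refine ⟨m.comap (algebraMap S S'), inferInstance, ?_, ?_⟩
  · refine (Submodule.eq_bot_iff _).2 fun r hr => by_contra fun hr0 => hm.ne_top ?_
    exact Ideal.eq_top_of_isUnit_mem m hr (IsLocalization.map_units S'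
      (⟨_, r, mem_nonZeroDivisors_of_ne_zero hr0, rfl⟩ : M))
  · exact Algebra.IsAlgebraic.of_injective
      (Ideal.quotientMapₐ m (IsScalarTower.toAlgHom R S S') le_rfl)
      (Ideal.quotientMap_injective (f := algebraMap S S'))

theorem dvd_of_algebraMap_mul_eq_of_isIntegral {R T : Type*} [CommRing R] [IsDomain R]
    [IsIntegrallyClosed R] [CommRing T] [IsDomain T] [Algebra R T] [FaithfulSMul R T]
    {a b : R} (hb : b ≠ 0) {y : T} (hy : IsIntegral R y)
    (hby : algebraMap R T b * y = algebraMap R T a) : b ∣ a := by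
  open Polynomial in
  have hdvd := (minpoly.IsIntegrallyClosed.isIntegral_iff_leadingCoeff_dvd (p := C b * X + C (-a))
    (by simp [hby]) (fun h => hb (by simpa using congrArg (coeff · 1) h)) fun q hq hqy => by
      rw [degree_linear hb, Nat.WithBot.one_le_iff_zero_lt, ← not_le,
        hq.degree_le_zero_iff_eq_one]
      rintro rfl
      simp at hqy).1 hy
  rw [Polynomial.leadingCoeff_linear hb, Polynomial.C_dvd_iff_dvd_coeff] at hdvd
  simpa using hdvd 0

-- The denominators are bounded in the residue domain of a closed point of the generic fibre, where
-- a power of a fixed `c` makes every element integral.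
theorem exists_forall_pow_mul_mem_range (R S : Type*) [CommRing R] [IsDomain R]
    [IsIntegrallyClosed R] [CommRing S] [IsDomain S] [Algebra R S] [FaithfulSMul R S]
    [Algebra.FiniteType R S] :
    ∃ c : R, c ≠ 0 ∧ ∀ (x : S) (a b : R), b ≠ 0 → algebraMap R S b * x = algebraMap R S a →
      ∃ n : ℕ, algebraMap R S (c ^ n) * x ∈ (algebraMap R S).range := by
  obtain ⟨Q, hQ, hQR, hQalg⟩ := exists_isPrime_isAlgebraic_quotient R S
  have : FaithfulSMul R (S ⧸ Q) := (faithfulSMul_iff_algebraMap_injective R _).2 <| by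
    rw [injective_iff_map_eq_zero]
    exact fun r hr => hQR.le (show algebraMap R S r ∈ Q from Ideal.Quotient.eq_zero_iff_mem.1 hr)
  obtain ⟨c, hc, hint⟩ := exists_forall_isIntegral_pow_smul R (S ⧸ Q)
  refine ⟨c, hc, fun x a b hb hx => ?_⟩
  obtain ⟨n, hn⟩ := hint (Ideal.Quotient.mk Q x)
  obtain ⟨r, hr⟩ : b ∣ c ^ n * a := by
    refine dvd_of_algebraMap_mul_eq_of_isIntegral hb hn ?_
    have hx' : algebraMap R (S ⧸ Q) b * Ideal.Quotient.mk Q x = algebraMap R (S ⧸ Q) a :=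
      congrArg (Ideal.Quotient.mk Q) hx
    rw [Algebra.smul_def, mul_left_comm, hx', ← map_mul]
  have hb' : algebraMap R S b ≠ 0 := (FaithfulSMul.algebraMap_eq_zero_iff R S).not.2 hb
  refine ⟨n, r, mul_left_cancel₀ hb' ?_⟩
  rw [← map_mul, ← hr, map_mul, ← hx, mul_left_comm]

/-- The denominator ideal of `x : S` over `R`: the elements of `R` multiplying `x` into `R`. -/
def denomIdeal (R : Type*) {S : Type*} [CommRing R] [CommRing S] [Algebra R S] (x : S) : Ideal R :=
  (LinearMap.range (Algebra.linearMap R S)).comap (LinearMap.toSpanSingleton R S x)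

theorem mem_denomIdeal {R S : Type*} [CommRing R] [CommRing S] [Algebra R S] {x : S} {c : R} :
    c ∈ denomIdeal R x ↔ algebraMap R S c * x ∈ (algebraMap R S).range := by
  simp [denomIdeal, Algebra.smul_def]

theorem eq_denomIdeal_of_le {R S : Type*} [CommRing R] [IsDomain R] [IsNoetherianRing R]
    [IsIntegrallyClosed R] [CommRing S] [IsDomain S] [Algebra R S] [FaithfulSMul R S] {x : S}
    (hx : denomIdeal R x ≠ ⊥) [(denomIdeal R x).IsPrime] {q : Ideal R} [q.IsPrime]
    (hq : q ≤ denomIdeal R x) (hq0 : q ≠ ⊥) : q = denomIdeal R x := by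
  obtain ⟨b, hb, hb0⟩ := Submodule.exists_mem_ne_zero_of_ne_bot hx
  obtain ⟨a, hab⟩ := mem_denomIdeal.1 hb
  let K := FractionRing R
  have hbK : algebraMap R K b ≠ 0 := (FaithfulSMul.algebraMap_eq_zero_iff R K).not.2 hb0
  have hbS : algebraMap R S b ≠ 0 := (FaithfulSMul.algebraMap_eq_zero_iff R S).not.2 hb0
  have hmem {c : R} : c ∈ denomIdeal R x ↔
      algebraMap R K c * (algebraMap R K a / algebraMap R K b) ∈ (algebraMap R K).range := by
    refine mem_denomIdeal.trans (exists_congr fun r => ?_)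
    rw [← mul_right_inj' hbS, mul_left_comm, ← hab, mul_div_assoc', eq_div_iff hbK]
    simp only [← map_mul, (FaithfulSMul.algebraMap_injective R S).eq_iff,
      (FaithfulSMul.algebraMap_injective R K).eq_iff, mul_comm b r]
  obtain ⟨c, hc⟩ := exists_isUniformizerAt (denomIdeal R x) (algebraMap R K a / algebraMap R K b)
    (fun h => Ideal.IsPrime.ne_top' ((Ideal.eq_top_iff_one _).2 (hmem.2 (by simpa using h))))
    fun c hc => hmem.1 hc
  exact hc.eq_of_le_of_ne_bot hq hq0

/-! ### Ideals and automorphisms -/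

theorem apply_eq_of_le_apply {α : Type*} [PartialOrder α] [WellFoundedGT α] (e : α ≃o α) {a : α}
    (h : a ≤ e a) : e a = a := by
  obtain ⟨n, hn⟩ := wellFoundedGT_iff_monotone_chain_condition.1 ‹WellFoundedGT α›
    ⟨fun n => e^[n] a, e.monotone.monotone_iterate_of_le_map h⟩
  exact e.injective.iterate n (hn (n + 1) n.le_succ).symm

section AlgEquiv

variable {k S : Type*} [CommRing k] [CommRing S] [Algebra k S]

theorem comap_eq_of_le_comap [IsNoetherianRing S] (F : S ≃ₐ[k] S) {J : Ideal S}
    (h : J ≤ J.comap F) : J.comap F = J :=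
  apply_eq_of_le_apply F.toRingEquiv.idealComapOrderIso h

theorem comap_algEquiv_pow_eq (F : S ≃ₐ[k] S) {J : Ideal S} (h : J.comap F = J) (n : ℕ) :
    J.comap (F ^ n) = J := by
  induction n with
  | zero => rfl
  | succ n ih => exact (congrArg (Ideal.comap F) ih).trans h

theorem exists_comap_algEquiv_pow_eq [IsNoetherianRing S] (F : S ≃ₐ[k] S) {J : Ideal S}
    (hJ : J ≠ ⊤) (h : J.comap F = J) :
    ∃ Q : Ideal S, Q.IsPrime ∧ J ≤ Q ∧ ∃ N ≠ 0, Q.comap (F ^ N) = Q := by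
  obtain ⟨m, hm, hJm⟩ := Ideal.exists_le_maximal J hJ
  obtain ⟨Q, hQ, -⟩ := Ideal.exists_minimalPrimes_le hJm
  have hmem (n : ℕ) : Q.comap (F ^ n) ∈ J.minimalPrimes := by
    rw [← comap_algEquiv_pow_eq F h n]
    exact Ideal.minimalPrimes_comap_of_surjective (f := ((F ^ n : S ≃ₐ[k] S) : S →+* S))
      (F ^ n).surjective hQ
  obtain ⟨a, b, hab, heq⟩ := Set.Finite.exists_lt_map_eq_of_forall_mem hmem
    (J.finite_minimalPrimes_of_isNoetherianRing S)
  refine ⟨Q.comap (F ^ a), (hmem a).1.1, (hmem a).1.2, b - a, Nat.sub_ne_zero_of_lt hab, ?_⟩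
  change Q.comap (F ^ a * F ^ (b - a)) = _
  rw [← pow_add, Nat.add_sub_cancel' hab.le, heq]

end AlgEquiv


-- `τ` induces an injective endomorphism of the Artinian local ring `R_P`, where `P` is the
-- nilradical. It is onto the residue field, hence onto.
theorem exists_mul_eq_of_residue {R : Type*} [CommRing R] [IsNoetherianRing R]
    (h0 : (⊥ : Ideal R).IsPrimary) {τ : R →+* R} (hτ : Function.Injective τ)
    (hres : ∀ b, ∃ a s, s ∉ nilradical R ∧ τ s * b - τ a ∈ nilradical R) (b : R) :
    ∃ a s, s ∉ nilradical R ∧ τ s * b = τ a := by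
  let P := nilradical R
  have hP : P.IsPrime := Ideal.isPrime_radical h0
  have hτP (x : R) : τ x ∈ P ↔ x ∈ P := IsNilpotent.map_iff hτ
  let A := Localization.AtPrime P
  have hnzd : P.primeCompl ≤ nonZeroDivisors R := fun s hs => mem_nonZeroDivisors_iff_right.2
    fun x hx => ((Ideal.isPrimary_iff.1 h0).2 hx).resolve_right hs
  have hA : Function.Injective (algebraMap R A) := IsLocalization.injective A hnzd
  have : IsArtinianRing A := by
    rw [isArtinianRing_iff_isNilpotent_maximalIdeal, ← Localization.AtPrime.map_eq_maximalIdeal]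
    obtain ⟨n, hn⟩ := IsNoetherianRing.isNilpotent_nilradical R
    exact ⟨n, by rw [← Ideal.map_pow, hn, Ideal.zero_eq_bot, Ideal.map_bot, Ideal.zero_eq_bot]⟩
  let f : A →+* A := Localization.localRingHom P P τ (by ext x; exact (hτP x).symm)
  have hmk (a : R) (s : P.primeCompl) : f (IsLocalization.mk' A a s) =
      IsLocalization.mk' A (τ a) (⟨τ s, mt (hτP s).1 s.2⟩ : P.primeCompl) :=
    Localization.localRingHom_mk' P P τ _ a s
  have hf : Function.Injective f := (injective_iff_map_eq_zero f).2 fun z hz => by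
    obtain ⟨a, s, rfl⟩ := IsLocalization.exists_mk'_eq P.primeCompl z
    rw [hmk, IsLocalization.mk'_eq_zero_iff] at hz
    obtain ⟨m, hm⟩ := hz
    rw [hτ ((mem_nonZeroDivisors_iff.1 (hnzd m.2)).1 _ hm |>.trans (map_zero τ).symm),
      IsLocalization.mk'_zero]
  have hfres (z : A) : ∃ y, z - f y ∈ IsLocalRing.maximalIdeal A := by
    obtain ⟨b, t, rfl⟩ := IsLocalization.exists_mk'_eq P.primeCompl z
    obtain ⟨a, s, hs, hb⟩ := hres b
    obtain ⟨a', s', hs', ht⟩ := hres t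
    have ha' : a' ∉ P := fun h => (hP.mem_or_mem ((P.sub_mem_iff_left ((hτP a').2 h)).1 ht)).elim
      (mt (hτP s').1 hs') t.2
    refine ⟨IsLocalization.mk' A (a * s') (⟨s, hs⟩ * ⟨a', ha'⟩ : P.primeCompl), ?_⟩
    rw [hmk, ← IsLocalization.mk'_sub]
    refine (IsLocalization.AtPrime.mk'_mem_maximal_iff A P _ _).2 ?_
    have heq : b * τ (s * a') - τ (a * s') * t =
        τ a' * (τ s * b - τ a) - τ a * (τ s' * t - τ a') := by
      rw [map_mul, map_mul]; ring
    exact heq ▸ sub_mem (P.mul_mem_left _ hb) (P.mul_mem_left _ ht)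
  obtain ⟨y, hy⟩ := surjective_of_length_le f hf hfres le_rfl (algebraMap R A b)
  obtain ⟨a, s, rfl⟩ := IsLocalization.exists_mk'_eq P.primeCompl y
  rw [hmk, IsLocalization.mk'_eq_iff_eq_mul, ← map_mul] at hy
  exact ⟨a, s, s.2, (mul_comm _ _).trans (hA hy).symm⟩

theorem exists_mul_sub_mem_of_residue {R : Type*} [CommRing R] [IsNoetherianRing R] {I : Ideal R}
    (hI : I.IsPrimary) {τ : R →+* R} (hτ : I.comap τ = I)
    (hres : ∀ b, ∃ a s, s ∉ I.radical ∧ τ s * b - τ a ∈ I.radical) (b : R) :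
    ∃ a s, s ∉ I.radical ∧ τ s * b - τ a ∈ I := by
  let π := Ideal.Quotient.mk I
  have hπ : Function.Surjective π := Ideal.Quotient.mk_surjective
  have hrad (x : R) : π x ∈ nilradical (R ⧸ I) ↔ x ∈ I.radical :=
    exists_congr fun n => by rw [← map_pow]; exact Ideal.Quotient.eq_zero_iff_mem
  have h0 : (⊥ : Ideal (R ⧸ I)).IsPrimary := by
    have := Ideal.Quotient.nontrivial_iff.2 (Ideal.isPrimary_iff.1 hI).1
    refine Ideal.isPrimary_iff.2 ⟨bot_ne_top, fun {x y} h => ?_⟩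
    obtain ⟨x, rfl⟩ := hπ x
    obtain ⟨y, rfl⟩ := hπ y
    exact ((Ideal.isPrimary_iff.1 hI).2 (Ideal.Quotient.eq_zero_iff_mem.1 h)).imp
      Ideal.Quotient.eq_zero_iff_mem.2 (hrad y).2
  have hres' (b : R ⧸ I) : ∃ a s, s ∉ nilradical (R ⧸ I) ∧
      Ideal.quotientMap I τ hτ.ge s * b - Ideal.quotientMap I τ hτ.ge a ∈ nilradical (R ⧸ I) := by
    obtain ⟨b, rfl⟩ := hπ b
    obtain ⟨a, s, hs, h⟩ := hres b
    exact ⟨π a, π s, mt (hrad s).1 hs, (hrad _).2 h⟩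
  obtain ⟨a, s, hs, h⟩ := exists_mul_eq_of_residue (R := R ⧸ I) (τ := Ideal.quotientMap I τ hτ.ge)
    h0 (Ideal.quotientMap_injective' hτ.le) hres' (π b)
  obtain ⟨a, rfl⟩ := hπ a
  obtain ⟨s, rfl⟩ := hπ s
  exact ⟨a, s, mt (hrad s).2 hs, Ideal.Quotient.eq.1 h⟩

-- The ideal of the closed subscheme `Spec S ×_R Spec S` of `Spec S ×_k Spec S` is mapped into
-- itself by `F ⊗ F`, hence onto itself.
theorem tmul_one_eq_of_apply_mem_range (k : Type*) {R S : Type*} [Field k] [CommRing R]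
    [Algebra k R] [CommRing S] [Algebra k S] [Algebra.FiniteType k S] [Algebra R S]
    [IsScalarTower k R S] {F : S ≃ₐ[k] S} {τ : R → R}
    (hτ : Function.Semiconj (algebraMap R S) τ F) {x : S} (hx : F x ∈ (algebraMap R S).range) :
    x ⊗ₜ[R] (1 : S) = 1 ⊗ₜ x := by
  have : IsNoetherianRing S := Algebra.FiniteType.isNoetherianRing k S
  have : IsNoetherianRing (S ⊗[k] S) := Algebra.FiniteType.isNoetherianRing S _
  let δ (y : S) : S ⊗[k] S := y ⊗ₜ 1 - 1 ⊗ₜ y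
  let J : Ideal (S ⊗[k] S) := Ideal.span (δ '' Set.range (algebraMap R S))
  have hδ {y : S} (hy : y ∈ (algebraMap R S).range) : δ y ∈ J :=
    Ideal.subset_span ⟨y, hy, rfl⟩
  let E : S ⊗[k] S ≃ₐ[k] S ⊗[k] S := Algebra.TensorProduct.congr F F
  have hE (y : S) : E (δ y) = δ (F y) := by simp [E, δ]
  have hJ : J.comap E = J := comap_eq_of_le_comap E <| Ideal.span_le.2 <| by
    rintro _ ⟨_, ⟨r, rfl⟩, rfl⟩
    change E _ ∈ J
    rw [hE, ← hτ]
    exact hδ ⟨τ r, rfl⟩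
  have hker : J ≤ RingHom.ker (Algebra.TensorProduct.mapOfCompatibleSMul R k k S S) :=
    Ideal.span_le.2 <| by
      rintro _ ⟨_, ⟨r, rfl⟩, rfl⟩
      simp [δ, RingHom.mem_ker, Algebra.TensorProduct.tmul_one_eq_one_tmul]
  have hxJ : δ x ∈ J := by
    rw [← hJ, Ideal.mem_comap, hE]
    exact hδ hx
  simpa [δ, RingHom.mem_ker, sub_eq_zero] using hker hxJ

section SymbolicPower

variable {S : Type*} [CommRing S] {Q : Ideal S} [hQ : Q.IsPrime]

theorem radical_symbolicPower {j : ℕ} (hj : j ≠ 0) : (symbolicPower Q j).radical = Q :=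
  le_antisymm (hQ.radical_le_iff.2 (symbolicPower_le hj)) fun _ hx =>
    ⟨j, pow_le_symbolicPower j (Ideal.pow_mem_pow hx j)⟩

theorem isPrimary_symbolicPower {j : ℕ} (hj : j ≠ 0) : (symbolicPower Q j).IsPrimary := by
  refine Ideal.isPrimary_iff.2 ⟨ne_top_of_le_ne_top hQ.ne_top (symbolicPower_le hj), ?_⟩
  intro x y h
  rw [radical_symbolicPower hj, or_iff_not_imp_right]
  exact fun hy => mem_symbolicPower_of_mul_mem hy (mul_comm x y ▸ h)

theorem comap_symbolicPower_eq {k : Type*} [CommRing k] [Algebra k S] {F : S ≃ₐ[k] S}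
    (hF : Q.comap F = Q) (j : ℕ) : (symbolicPower Q j).comap F = symbolicPower Q j := by
  have hmem (x : S) : F x ∈ Q ↔ x ∈ Q := by rw [← Ideal.mem_comap, hF]
  have hpow : (Q ^ j).comap F = Q ^ j := by
    have hmap (J : Ideal S) : J.map F.symm.toRingEquiv = J.comap F := Ideal.map_symm F.toRingEquiv
    rw [← hmap, Ideal.map_pow, hmap, hF]
  ext x
  rw [Ideal.mem_comap, mem_symbolicPower, mem_symbolicPower, F.surjective.exists]
  refine exists_congr fun u => and_congr (hmem u).not ?_
  rw [← map_mul, ← Ideal.mem_comap, hpow]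

end SymbolicPower

theorem exists_mul_sub_mem_symbolicPower (k : Type*) {R S : Type*} [Field k] [CommRing R]
    [IsNoetherianRing R] [Algebra k R] [CommRing S] [Algebra k S] [Algebra.FiniteType k S]
    [Algebra R S] [IsScalarTower k R S] {Q : Ideal S} [Q.IsPrime] {F : S ≃ₐ[k] S}
    (hFQ : Q.comap F = Q) {τ : R →+* R} (hτ : Function.Semiconj (algebraMap R S) τ F) {x : S}
    (hx : F x ∈ (algebraMap R S).range) {j : ℕ} (hj : j ≠ 0) :
    ∃ a s : R, algebraMap R S s ∉ Q ∧
      algebraMap R S s * x - algebraMap R S a ∈ symbolicPower Q j := by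
  obtain ⟨b, hb⟩ := hx
  let i := algebraMap R S
  let I := (symbolicPower Q j).comap i
  have hrad : I.radical = Q.comap i := by
    rw [← Ideal.comap_radical, radical_symbolicPower hj]
  have hmem (J : Ideal S) (hJ : J.comap F = J) (y : S) (c a s : R) (hc : i c = F y) :
      τ s * c - τ a ∈ J.comap i ↔ i s * y - i a ∈ J := by
    have heq : i (τ s * c - τ a) = F (i s * y - i a) := by
      simp only [map_sub, map_mul, hc, i, hτ.eq]
    rw [Ideal.mem_comap, heq, ← Ideal.mem_comap, hJ]
  have hIτ : I.comap τ = I := by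
    ext r
    change i (τ r) ∈ symbolicPower Q j ↔ i r ∈ symbolicPower Q j
    rw [hτ.eq, ← Ideal.mem_comap, comap_symbolicPower_eq hFQ]
  have hres (c : R) : ∃ a s, s ∉ I.radical ∧ τ s * c - τ a ∈ I.radical := by
    have hc : F (F.symm (i c)) = i c := F.apply_symm_apply _
    obtain ⟨a, s, hs, h⟩ := exists_mul_sub_mem_of_tmul_one_eq Q
      (tmul_one_eq_of_apply_mem_range k hτ ⟨c, hc.symm⟩)
    exact ⟨a, s, hrad ▸ hs, hrad ▸ (hmem Q hFQ _ c a s hc.symm).2 h⟩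
  obtain ⟨a, s, hs, h⟩ :=
    exists_mul_sub_mem_of_residue ((isPrimary_symbolicPower hj).comap i) hIτ hres b
  exact ⟨a, s, fun h' => hs (hrad.ge h'), (hmem _ (comap_symbolicPower_eq hFQ j) x b a s hb).1 h⟩

theorem mem_of_forall_mem_sup_maximalIdeal_pow {A : Type*} [CommRing A] [IsNoetherianRing A]
    [IsLocalRing A] {I : Ideal A} {a : A} (h : ∀ l, a ∈ I ⊔ IsLocalRing.maximalIdeal A ^ l) :
    a ∈ I := by
  have hmem : I.mkQ a ∈ (⨅ l : ℕ, IsLocalRing.maximalIdeal A ^ l • ⊤ : Submodule A (A ⧸ I)) := by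
    refine (Submodule.mem_iInf _).2 fun l => ?_
    obtain ⟨b, hb, c, hc, rfl⟩ := Submodule.mem_sup.1 (h l)
    have hb0 : I.mkQ b = 0 := (Submodule.Quotient.mk_eq_zero I).2 hb
    rw [map_add, hb0, zero_add, ← mul_one c, ← smul_eq_mul, map_smul]
    exact Submodule.smul_mem_smul hc Submodule.mem_top
  rw [Ideal.iInf_pow_smul_eq_bot_of_isLocalRing _ Ideal.IsPrime.ne_top'] at hmem
  exact (Submodule.Quotient.mk_eq_zero I).1 hmem

theorem exists_mul_mem_of_forall_mem_sup_pow {R : Type*} [CommRing R] [IsNoetherianRing R]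
    {P : Ideal R} [hP : P.IsPrime] {I : Ideal R} {a : R}
    (h : ∀ l, ∃ s ∉ P, s * a ∈ I ⊔ P ^ l) : ∃ u ∉ P, u * a ∈ I := by
  let A := Localization.AtPrime P
  have ha : algebraMap R A a ∈ I.map (algebraMap R A) := by
    refine mem_of_forall_mem_sup_maximalIdeal_pow fun l => ?_
    obtain ⟨s, hs, hsa⟩ := h l
    have := Ideal.mem_map_of_mem (algebraMap R A) hsa
    rw [Ideal.map_sup, Ideal.map_pow, Localization.AtPrime.map_eq_maximalIdeal, map_mul] at this
    have hunit := IsLocalization.map_units A (⟨s, hs⟩ : P.primeCompl)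
    exact (Ideal.unit_mul_mem_iff_mem _ hunit).1 this
  exact (IsLocalization.algebraMap_mem_map_algebraMap_iff P.primeCompl A I a).1 ha

theorem not_denomIdeal_le_comap {R S : Type*} [CommRing R] [IsNoetherianRing R] [CommRing S]
    [IsDomain S] [Algebra R S] [FaithfulSMul R S] {Q : Ideal S} [hQ : Q.IsPrime]
    (hR : ∀ l, ∃ j, (symbolicPower Q j).comap (algebraMap R S) ≤
      symbolicPower (Q.comap (algebraMap R S)) l)
    {x : S} (hx : denomIdeal R x ≠ ⊥)
    (happ : ∀ j ≠ 0, ∃ y s : R, algebraMap R S s ∉ Q ∧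
      algebraMap R S s * x - algebraMap R S y ∈ symbolicPower Q j) :
    ¬ denomIdeal R x ≤ Q.comap (algebraMap R S) := by
  obtain ⟨b, hb, hb0⟩ := Submodule.exists_mem_ne_zero_of_ne_bot hx
  obtain ⟨a, hab⟩ := mem_denomIdeal.1 hb
  have hP := hQ.comap (algebraMap R S)
  obtain ⟨u, hu, hua⟩ : ∃ u ∉ Q.comap (algebraMap R S), u * a ∈ Ideal.span {b} := by
    refine exists_mul_mem_of_forall_mem_sup_pow fun l => ?_
    obtain ⟨j, hj⟩ := hR l
    obtain ⟨y, s, hs, h⟩ := happ (j + 1) j.succ_ne_zero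
    have hmem : s * a - b * y ∈ symbolicPower (Q.comap (algebraMap R S)) l := by
      refine hj ?_
      rw [Ideal.mem_comap, map_sub, map_mul, map_mul, hab, mul_left_comm, ← mul_sub]
      exact Ideal.mul_mem_left _ _ (symbolicPower_antitone j.le_succ h)
    obtain ⟨v, hv, h⟩ := hmem
    refine ⟨v * s, hP.mul_notMem hv hs, Submodule.mem_sup.2
      ⟨b * (v * y), Ideal.mul_mem_right _ _ (Ideal.mem_span_singleton_self b), _, h, by ring⟩⟩
  obtain ⟨r, hr⟩ := Ideal.mem_span_singleton'.1 hua
  have hb' : algebraMap R S b ≠ 0 := (FaithfulSMul.algebraMap_eq_zero_iff R S).not.2 hb0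
  refine fun hle => hu (hle (mem_denomIdeal.2 ⟨r, mul_left_cancel₀ hb' ?_⟩))
  rw [mul_left_comm, ← hab, ← map_mul, ← map_mul, ← hr, mul_comm b]

/-- A minimal nonzero prime ideal; in an integral domain these are the primes of height one. -/
def IsMinimalNonzeroPrime {R : Type*} [CommRing R] (p : Ideal R) : Prop :=
  Minimal (fun q : Ideal R => q.IsPrime ∧ q ≠ ⊥) p

section Denominators

variable {R S : Type*} [CommRing R] [CommRing S] [Algebra R S]

theorem exists_eq_denomIdeal_of_mem_minimalPrimes [IsNoetherianRing R] {x : S} {p : Ideal R}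
    (hp : p ∈ (denomIdeal R x).minimalPrimes) :
    ∃ s : R, p = denomIdeal R (algebraMap R S s * x) := by
  have hcolon : (denomIdeal R x).colon {(1 : R)} = denomIdeal R x := by
    ext c
    rw [Submodule.mem_colon_singleton, smul_eq_mul, mul_one]
  obtain ⟨s, rfl⟩ := Submodule.exists_eq_colon_of_mem_minimalPrimes (hcolon ▸ hp)
  refine ⟨s, ?_⟩
  ext c
  rw [Submodule.mem_colon_singleton, smul_eq_mul, mem_denomIdeal, mem_denomIdeal, map_mul,
    mul_assoc]

variable [IsDomain R] [IsNoetherianRing R] [IsIntegrallyClosed R] [IsDomain S] [FaithfulSMul R S]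

theorem isMinimalNonzeroPrime_of_mem_minimalPrimes_denomIdeal {x : S} (hx : denomIdeal R x ≠ ⊥)
    {p : Ideal R} (hp : p ∈ (denomIdeal R x).minimalPrimes) : IsMinimalNonzeroPrime p := by
  have hp0 : p ≠ ⊥ := ne_bot_of_le_ne_bot hx hp.1.2
  have := hp.1.1
  obtain ⟨s, rfl⟩ := exists_eq_denomIdeal_of_mem_minimalPrimes hp
  refine ⟨⟨this, hp0⟩, fun q hq hqp => ?_⟩
  have := hq.1
  exact (eq_denomIdeal_of_le hp0 hqp hq.2).ge

variable (R S) in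
theorem exists_forall_minimalPrimes_denomIdeal_subset [Algebra.FiniteType R S] :
    ∃ c : R, ∀ x : S, denomIdeal R x ≠ ⊥ →
      (denomIdeal R x).minimalPrimes ⊆ (Ideal.span {c}).minimalPrimes := by
  obtain ⟨c, hc0, hc⟩ := exists_forall_pow_mul_mem_range R S
  refine ⟨c, fun x hx p hp => ?_⟩
  have hpmin := isMinimalNonzeroPrime_of_mem_minimalPrimes_denomIdeal hx hp
  obtain ⟨b, hb, hb0⟩ := Submodule.exists_mem_ne_zero_of_ne_bot hx
  obtain ⟨a, hab⟩ := mem_denomIdeal.1 hb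
  obtain ⟨n, hn⟩ := hc x a b hb0 hab.symm
  have hcp : c ∈ p := hp.1.1.mem_of_pow_mem n (hp.1.2 (mem_denomIdeal.2 hn))
  refine ⟨⟨hp.1.1, (Ideal.span_singleton_le_iff_mem p).2 hcp⟩, fun q hq hqp => ?_⟩
  refine hpmin.2 ⟨hq.1, ?_⟩ hqp
  rintro rfl
  exact hc0 ((Ideal.span_singleton_le_iff_mem _).1 hq.2)

end Denominators

section Polar

variable {R S : Type*} [CommRing R] [CommRing S] [Algebra R S]

variable (R) in
/-- The radical ideal whose zero locus in `Spec R` is the closure of the union of the polar loci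
of all `y ∈ T`, the polar locus of `y` being the zero locus of `denomIdeal R y`. -/
def polarIdeal (T : Set S) : Ideal R :=
  ⨅ y ∈ T, (denomIdeal R y).radical

theorem mem_polarIdeal {T : Set S} {c : R} :
    c ∈ polarIdeal R T ↔ ∀ y ∈ T, c ∈ (denomIdeal R y).radical := by
  simp only [polarIdeal, Submodule.mem_iInf]

theorem map_polarIdeal_le_comap {k : Type*} [CommRing k] [Algebra k S] {F : S ≃ₐ[k] S} {τ : R → R}
    (hτ : Function.Semiconj (algebraMap R S) τ F) {T : Set S} (hT : ∀ y ∈ T, F.symm y ∈ T) :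
    (polarIdeal R T).map (algebraMap R S) ≤ ((polarIdeal R T).map (algebraMap R S)).comap F := by
  refine Ideal.map_le_iff_le_comap.2 fun c hc => ?_
  have hτc : τ c ∈ polarIdeal R T := by
    refine mem_polarIdeal.2 fun y hy => ?_
    obtain ⟨m, hm⟩ := mem_polarIdeal.1 hc _ (hT y hy)
    obtain ⟨r, hr⟩ := mem_denomIdeal.1 hm
    refine ⟨m, mem_denomIdeal.2 ⟨τ r, ?_⟩⟩
    rw [hτ r, hr, map_mul, map_pow, map_pow, ← hτ c, F.apply_symm_apply, ← map_pow]
  rw [Ideal.mem_comap, Ideal.mem_comap, ← hτ c]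
  exact Ideal.mem_map_of_mem _ hτc

variable [IsDomain R] [IsNoetherianRing R] [IsIntegrallyClosed R] [IsDomain S] [FaithfulSMul R S]

theorem map_polarIdeal_ne_top
    (hht : ∀ p : Ideal R, IsMinimalNonzeroPrime p → p.map (algebraMap R S) ≠ ⊤)
    {T : Set S} {x : S} (hxT : x ∈ T) (hx : x ∉ (algebraMap R S).range)
    (hx0 : denomIdeal R x ≠ ⊥) : (polarIdeal R T).map (algebraMap R S) ≠ ⊤ := by
  have htop : denomIdeal R x ≠ ⊤ := by
    rw [Ideal.ne_top_iff_one, mem_denomIdeal, map_one, one_mul]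
    exact hx
  obtain ⟨p, hp⟩ := Ideal.nonempty_minimalPrimes htop
  have hle : polarIdeal R T ≤ p := (iInf₂_le x hxT).trans (hp.1.1.radical_le_iff.2 hp.1.2)
  exact ne_top_of_le_ne_top (hht p (isMinimalNonzeroPrime_of_mem_minimalPrimes_denomIdeal hx0 hp))
    (Ideal.map_mono hle)

-- Each polar locus is a union of components of one fixed hypersurface, so finitely many components
-- are involved altogether.
theorem not_polarIdeal_le [Algebra.FiniteType R S] {T : Set S} {P : Ideal R} [hP : P.IsPrime]
    (hT0 : ∀ y ∈ T, denomIdeal R y ≠ ⊥) (hT : ∀ y ∈ T, ¬ denomIdeal R y ≤ P) :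
    ¬ polarIdeal R T ≤ P := by
  obtain ⟨c, hc⟩ := exists_forall_minimalPrimes_denomIdeal_subset R S
  have hfin : {p ∈ (Ideal.span {c}).minimalPrimes | ¬ p ≤ P}.Finite :=
    ((Ideal.span {c}).finite_minimalPrimes_of_isNoetherianRing R).subset fun p hp => hp.1
  have hinf : hfin.toFinset.inf id ≤ polarIdeal R T := by
    refine le_iInf₂ fun y hy => ?_
    rw [← Ideal.sInf_minimalPrimes]
    exact le_sInf fun p hp => Finset.inf_le (f := id)
      (hfin.mem_toFinset.2 ⟨hc y (hT0 y hy) hp, fun hpP => hT y hy (hp.1.2.trans hpP)⟩)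
  intro h
  obtain ⟨p, hp, hpP⟩ := hP.inf_le'.1 (hinf.trans h)
  exact (hfin.mem_toFinset.1 hp).2 hpP

end Polar

theorem denomIdeal_ne_bot_of_apply_mem_range (k : Type*) {R S : Type*} [Field k]
    [CommRing R] [Algebra k R] [CommRing S] [IsDomain S] [Algebra k S] [Algebra.FiniteType k S]
    [Algebra R S] [IsScalarTower k R S] {F : S ≃ₐ[k] S} {τ : R → R}
    (hτ : Function.Semiconj (algebraMap R S) τ F) {x : S} (hx : F x ∈ (algebraMap R S).range) :
    denomIdeal R x ≠ ⊥ := by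
  obtain ⟨a, s, hs, h⟩ :=
    exists_mul_sub_mem_of_tmul_one_eq ⊥ (tmul_one_eq_of_apply_mem_range k hτ hx)
  have hs0 : s ≠ 0 := fun h0 => hs (by rw [h0, map_zero]; exact Ideal.zero_mem _)
  exact Submodule.ne_bot_iff _ |>.2 ⟨s, mem_denomIdeal.2 ⟨a, (sub_eq_zero.1 h).symm⟩, hs0⟩

theorem surjective_of_semiconj_of_isIntegrallyClosed.{u} (k : Type*) {R S : Type u} [Field k]
    [CharZero k] [CommRing R] [IsDomain R] [IsIntegrallyClosed R] [Algebra k R]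
    [Algebra.FiniteType k R] [CommRing S] [IsDomain S] [Algebra k S] [Algebra.FiniteType k S]
    [Algebra R S] [IsScalarTower k R S] [FaithfulSMul R S]
    (hht : ∀ p : Ideal R, IsMinimalNonzeroPrime p → p.map (algebraMap R S) ≠ ⊤)
    {F : S ≃ₐ[k] S} {G : R →+* R} (hG : Function.Semiconj (algebraMap R S) G F) :
    Function.Surjective G := by
  have := Algebra.FiniteType.isNoetherianRing k R
  have := Algebra.FiniteType.isNoetherianRing k S
  have := Algebra.FiniteType.of_restrictScalars_finiteType k R S
  have hGn (n : ℕ) : Function.Semiconj (algebraMap R S) ⇑(G ^ n) ⇑(F ^ n) := by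
    rw [RingHom.coe_pow, AlgEquiv.coe_pow]
    exact hG.iterate_right n
  intro r
  by_contra! hr
  let T : Set S := {y | ∃ n : ℕ, (F ^ n) y ∈ (algebraMap R S).range}
  have hT0 : ∀ y ∈ T, denomIdeal R y ≠ ⊥ := fun y ⟨n, hn⟩ =>
    denomIdeal_ne_bot_of_apply_mem_range k (hGn n) hn
  have hxT : F.symm (algebraMap R S r) ∈ T := ⟨1, r, by rw [pow_one, F.apply_symm_apply]⟩
  have hxR : F.symm (algebraMap R S r) ∉ (algebraMap R S).range := by
    rintro ⟨a, ha⟩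
    refine hr a (FaithfulSMul.algebraMap_injective R S ?_)
    rw [hG a, ha, F.apply_symm_apply]
  have hTF : ∀ y ∈ T, F.symm y ∈ T := fun y ⟨n, hn⟩ =>
    ⟨n + 1, by rwa [pow_succ, AlgEquiv.mul_apply, F.apply_symm_apply]⟩
  obtain ⟨Q, hQ, hTQ, N, hN, hFQ⟩ := exists_comap_algEquiv_pow_eq F
    (map_polarIdeal_ne_top hht hxT hxR (hT0 _ hxT))
    (comap_eq_of_le_comap F (map_polarIdeal_le_comap hG hTF))
  have hreg : ∀ y ∈ T, ¬ denomIdeal R y ≤ Q.comap (algebraMap R S) := by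
    intro y hy
    obtain ⟨n, a, ha⟩ := id hy
    obtain ⟨m, hm⟩ := Nat.exists_eq_add_of_le' (Nat.le_mul_of_pos_left n hN.bot_lt)
    have hyN : (F ^ (N * n)) y ∈ (algebraMap R S).range :=
      ⟨(G ^ m) a, by rw [hm, pow_add, AlgEquiv.mul_apply, ← ha, hGn m a]⟩
    have hFQn : Q.comap (F ^ (N * n)) = Q := by
      rw [pow_mul]
      exact comap_algEquiv_pow_eq _ hFQ n
    exact not_denomIdeal_le_comap (exists_comap_symbolicPower_le_symbolicPower k Q) (hT0 y hy)
      fun j hj => exists_mul_sub_mem_symbolicPower k hFQn (hGn _) hyN hj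
  exact not_polarIdeal_le hT0 hreg (Ideal.map_le_iff_le_comap.1 hTQ)

/-! ### Reduction to the normalization -/

section Primes

variable {R R' : Type*} [CommRing R] [CommRing R'] [IsJacobsonRing R'] [Algebra R R']
  [Algebra.IsIntegral R R']

theorem le_of_comap_le_comap
    (hnorm : ∀ m₁ m₂ : Ideal R', m₁.IsMaximal → m₂.IsMaximal →
      m₁.comap (algebraMap R R') = m₂.comap (algebraMap R R') → m₁ = m₂)
    (p q : Ideal R') [hq : q.IsPrime]
    (h : p.comap (algebraMap R R') ≤ q.comap (algebraMap R R')) : p ≤ q := by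
  rw [← IsJacobsonRing.out' q hq.isRadical]
  refine le_sInf ?_
  rintro m ⟨hqm, hm⟩
  have := hm.isPrime
  obtain ⟨m₂, hpm₂, hm₂, hcomap⟩ := Ideal.exists_ideal_over_prime_of_isIntegral
    (m.comap (algebraMap R R')) p (h.trans (Ideal.comap_mono hqm))
  have : (m.comap (algebraMap R R')).IsMaximal :=
    Ideal.isMaximal_comap_of_isIntegral_of_isMaximal m
  have hm₂max : m₂.IsMaximal :=
    Ideal.isMaximal_of_isIntegral_of_isMaximal_comap (R := R) m₂ (hcomap ▸ this)
  exact hpm₂.trans (hnorm m₂ m hm₂max hm hcomap).le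

theorem IsMinimalNonzeroPrime.comap_of_isIntegral [IsDomain R'] [FaithfulSMul R R']
    (hnorm : ∀ m₁ m₂ : Ideal R', m₁.IsMaximal → m₂.IsMaximal →
      m₁.comap (algebraMap R R') = m₂.comap (algebraMap R R') → m₁ = m₂)
    {p : Ideal R'} (hp : IsMinimalNonzeroPrime p) :
    IsMinimalNonzeroPrime (p.comap (algebraMap R R')) := by
  have hp' := hp.1.1
  have := (algebraMap R R').domain_nontrivial
  have hker : RingHom.ker (algebraMap R R') = ⊥ :=
    (RingHom.injective_iff_ker_eq_bot _).1 (FaithfulSMul.algebraMap_injective R R')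
  refine ⟨⟨hp'.comap _, Ideal.IsIntegral.comap_ne_bot R hp.1.2⟩, ?_⟩
  rintro q ⟨hq, hq0⟩ hqp
  obtain ⟨q', hq', rfl⟩ := Ideal.exists_ideal_over_prime_of_isIntegral_of_isDomain q
    (hker.trans_le bot_le)
  have hq'0 : q' ≠ ⊥ := by
    rintro rfl
    exact hq0 hker
  exact Ideal.comap_mono (hp.2 ⟨hq', hq'0⟩ (le_of_comap_le_comap hnorm q' p hqp))

theorem map_ne_top_of_map_comap_ne_top {S S' : Type*} [CommRing S] [CommRing S'] [IsDomain S']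
    [Algebra R S] [Algebra S S'] [Algebra R' S'] [Algebra R S'] [IsScalarTower R R' S']
    [IsScalarTower R S S'] [FaithfulSMul S S'] [Algebra.IsIntegral S S']
    (hnorm : ∀ m₁ m₂ : Ideal R', m₁.IsMaximal → m₂.IsMaximal →
      m₁.comap (algebraMap R R') = m₂.comap (algebraMap R R') → m₁ = m₂)
    {p : Ideal R'} (hp : (p.comap (algebraMap R R')).map (algebraMap R S) ≠ ⊤) :
    p.map (algebraMap R' S') ≠ ⊤ := by
  obtain ⟨M, hM, hpM⟩ := Ideal.exists_le_maximal _ hp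
  have hker : RingHom.ker (algebraMap S S') = ⊥ :=
    (RingHom.injective_iff_ker_eq_bot _).1 (FaithfulSMul.algebraMap_injective S S')
  obtain ⟨M', hM', rfl⟩ := Ideal.exists_ideal_over_prime_of_isIntegral_of_isDomain M
    (hker.trans_le bot_le)
  have hle : p ≤ M'.comap (algebraMap R' S') := by
    refine le_of_comap_le_comap hnorm _ _ ?_
    rw [Ideal.comap_comap, ← IsScalarTower.algebraMap_eq, IsScalarTower.algebraMap_eq R S S',
      ← Ideal.comap_comap]
    exact Ideal.map_le_iff_le_comap.1 hpM
  exact ne_top_of_le_ne_top hM'.ne_top (Ideal.map_le_iff_le_comap.2 hle)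

end Primes

-- The `R`-submodules `G'⁻ⁿ(R)` of `R'` form an ascending chain, which stabilizes.
theorem surjective_of_semiconj_of_finite {R R' : Type*} [CommRing R] [IsNoetherianRing R]
    [CommRing R'] [Algebra R R'] [Module.Finite R R'] [FaithfulSMul R R']
    {G : R →+* R} {G' : R' →+* R'} (hG : Function.Semiconj (algebraMap R R') G G')
    (hG' : Function.Surjective G') : Function.Surjective G := by
  let N : ℕ →o Submodule R R' :=
    { toFun n :=
        { ((algebraMap R R').range.comap (G' ^ n)).toAddSubmonoid with
          smul_mem' r y hy := by
            rw [Algebra.smul_def]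
            refine Subring.mul_mem _ (Subring.mem_comap.2 ⟨(G ^ n) r, ?_⟩) hy
            rw [RingHom.coe_pow, RingHom.coe_pow]
            exact hG.iterate_right n r }
      monotone' := by
        refine monotone_nat_of_le_succ fun n y ⟨r, hr⟩ => ⟨G r, ?_⟩
        rw [hG r, hr, pow_succ', RingHom.mul_def, RingHom.comp_apply] }
  obtain ⟨n, hn⟩ := monotone_stabilizes_iff_noetherian.2 inferInstance N
  intro r
  obtain ⟨y, hy⟩ := hG'.iterate (n + 1) (algebraMap R R' r)
  obtain ⟨s, hs⟩ : y ∈ N n := by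
    rw [hn (n + 1) n.le_succ]
    exact ⟨r, by rw [← hy, RingHom.coe_pow]⟩
  refine ⟨s, FaithfulSMul.algebraMap_injective R R' ?_⟩
  rw [hG s, hs, ← hy, RingHom.coe_pow, Function.iterate_succ_apply']

theorem finite_integralClosure_of_isFractionRing (k : Type*) {A : Type*} (K : Type*) [Field k]
    [CharZero k] [CommRing A] [IsDomain A] [Algebra k A] [Algebra.FiniteType k A] [Field K]
    [Algebra A K] [IsFractionRing A K] : Module.Finite A (integralClosure A K) := by
  obtain ⟨d, g, hg, hfin⟩ := exists_finite_inj_algHom_of_fg k A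
  let B := MvPolynomial (Fin d) k
  let _ : Algebra B A := g.toRingHom.toAlgebra
  have : Module.Finite B A := hfin
  let _ : Algebra B K := ((algebraMap A K).comp (algebraMap B A)).toAlgebra
  have : IsScalarTower B A K := IsScalarTower.of_algebraMap_eq fun _ => rfl
  have : FaithfulSMul B A := (faithfulSMul_iff_algebraMap_injective B A).2 hg
  have : FaithfulSMul B K := (faithfulSMul_iff_algebraMap_injective B K).2
    ((IsFractionRing.injective A K).comp hg)
  let E := FractionRing B
  let _ : Algebra E K := FractionRing.liftAlgebra B K
  have : CharZero E := charZero_of_injective_algebraMap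
    ((IsFractionRing.injective B E).comp (MvPolynomial.C_injective (Fin d) k) :
      Function.Injective ((algebraMap B E).comp MvPolynomial.C))
  have : Module.Finite E K := Module.Finite.of_isLocalization B A (nonZeroDivisors B)
  have : IsIntegralClosure (integralClosure A K) B K :=
    { algebraMap_injective := Subtype.val_injective
      isIntegral_iff := by
        refine fun {x} => ⟨fun hx => ⟨⟨x, hx.tower_top⟩, rfl⟩, ?_⟩
        rintro ⟨y, rfl⟩
        exact isIntegral_trans _ y.2 }
  have : Module.Finite B (integralClosure A K) := IsIntegralClosure.finite B E K _
  exact Module.Finite.of_restrictScalars_finite B A _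

section NormalizationMap

variable {A B C K L M : Type*} [CommRing A] [CommRing B] [IsDomain B] [CommRing C]
  [IsDomain C] [Field K] [Algebra A K] [IsFractionRing A K] [Field L] [Algebra B L]
  [IsFractionRing B L] [Field M] [Algebra C M] [IsFractionRing C M]

theorem fractionRingMap_algebraMap {f : A →+* B} (hf : Function.Injective f) (a : A) :
    (IsFractionRing.map hf : K →+* L) (algebraMap A K a) = algebraMap B L (f a) :=
  IsLocalization.map_eq (nonZeroDivisors_le_comap_nonZeroDivisors_of_injective f hf) a

theorem isIntegral_fractionRingMap {f : A →+* B} (hf : Function.Injective f) {x : K}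
    (hx : IsIntegral A x) : IsIntegral B ((IsFractionRing.map hf : K →+* L) x) :=
  hx.map_of_comp_eq f _ (RingHom.ext fun a => (fractionRingMap_algebraMap hf a).symm)

variable (K L) in
/-- The map of normalizations induced by an injective ring homomorphism of integral domains with
fraction fields `K` and `L`. -/
noncomputable def normalizationMap {f : A →+* B} (hf : Function.Injective f) :
    integralClosure A K →+* integralClosure B L :=
  ((IsFractionRing.map hf : K →+* L).comp (integralClosure A K).val.toRingHom).codRestrict
    (integralClosure B L) fun y => isIntegral_fractionRingMap hf y.2

theorem normalizationMap_algebraMap {f : A →+* B} (hf : Function.Injective f) (a : A) :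
    normalizationMap K L hf (algebraMap A (integralClosure A K) a) =
      algebraMap B (integralClosure B L) (f a) :=
  Subtype.ext (fractionRingMap_algebraMap hf a)

theorem normalizationMap_injective {f : A →+* B} (hf : Function.Injective f) :
    Function.Injective (normalizationMap K L hf) := fun _ _ h =>
  Subtype.ext ((IsFractionRing.map hf : K →+* L).injective (congrArg Subtype.val h :))

theorem normalizationMap_comp {f : A →+* B} {g : B →+* C} {h : A →+* C}
    (hf : Function.Injective f) (hg : Function.Injective g) (hh : Function.Injective h)
    (hgf : g.comp f = h) :
    (normalizationMap L M hg).comp (normalizationMap K L hf) = normalizationMap K M hh := by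
  have hmap : (IsFractionRing.map hg : L →+* M).comp (IsFractionRing.map hf : K →+* L) =
      IsFractionRing.map hh := by
    refine IsLocalization.ringHom_ext (nonZeroDivisors A) (RingHom.ext fun a => ?_)
    simp only [RingHom.comp_apply, fractionRingMap_algebraMap, ← hgf]
  exact RingHom.ext fun y => Subtype.ext (RingHom.congr_fun hmap (y : K))

variable [IsDomain A]

theorem normalizationMap_semiconj {f : A →+* B} {g : A →+* A} {h : B →+* B}
    (hf : Function.Injective f) (hg : Function.Injective g) (hh : Function.Injective h)
    (hfgh : Function.Semiconj f g h) :
    Function.Semiconj (normalizationMap K L hf) (normalizationMap K K hg)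
      (normalizationMap L L hh) := by
  have hfg : Function.Injective (f.comp g) := by
    rw [RingHom.coe_comp]
    exact hf.comp hg
  have hcomp : (normalizationMap K L hf).comp (normalizationMap K K hg) =
      (normalizationMap L L hh).comp (normalizationMap K L hf) := by
    rw [normalizationMap_comp hg hf hfg rfl,
      normalizationMap_comp hf hh hfg (RingHom.ext fun a => (hfgh a).symm)]
  exact fun y => RingHom.congr_fun hcomp y

theorem normalizationMap_id :
    normalizationMap K K (f := RingHom.id A) Function.injective_id =
      RingHom.id (integralClosure A K) := by
  have hmap : (IsFractionRing.map (j := RingHom.id A) Function.injective_id : K →+* K) =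
      RingHom.id K :=
    IsLocalization.ringHom_ext (nonZeroDivisors A)
      (RingHom.ext (fractionRingMap_algebraMap Function.injective_id))
  exact RingHom.ext fun y => Subtype.ext (RingHom.congr_fun hmap (y : K))

theorem normalizationMap_comp_eq_id {f : A →+* B} {g : B →+* A}
    (hf : Function.Injective f) (hg : Function.Injective g) (hgf : g.comp f = RingHom.id A) :
    (normalizationMap L K hg).comp (normalizationMap K L hf) =
      RingHom.id (integralClosure A K) := by
  rw [normalizationMap_comp hf hg Function.injective_id hgf, normalizationMap_id]

variable (K L) in
/-- The isomorphism of normalizations induced by an isomorphism of integral domains with fraction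
fields `K` and `L`. -/
noncomputable def normalizationEquiv {k : Type*} [CommRing k] [Algebra k A] [Algebra k B]
    [Algebra k K] [IsScalarTower k A K] [Algebra k L] [IsScalarTower k B L] (e : A ≃ₐ[k] B) :
    integralClosure A K ≃ₐ[k] integralClosure B L :=
  have he : Function.Injective (e : A →+* B) := e.injective
  have he' : Function.Injective (e.symm : B →+* A) := e.symm.injective
  .ofRingEquiv
    (f := .ofRingHom (normalizationMap K L he) (normalizationMap L K he')
      (normalizationMap_comp_eq_id he' he (RingHom.ext e.apply_symm_apply))
      (normalizationMap_comp_eq_id he he' (RingHom.ext e.symm_apply_apply))) fun c => by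
    rw [IsScalarTower.algebraMap_apply k A (integralClosure A K),
      IsScalarTower.algebraMap_apply k B (integralClosure B L), ← e.commutes c]
    exact normalizationMap_algebraMap he (algebraMap k A c)

end NormalizationMap

theorem finiteType_integralClosure_of_isFractionRing (k A K : Type*) [Field k] [CharZero k]
    [CommRing A] [IsDomain A] [Algebra k A] [Algebra.FiniteType k A] [Field K] [Algebra A K]
    [IsFractionRing A K] [Algebra k K] [IsScalarTower k A K] :
    Algebra.FiniteType k (integralClosure A K) :=
  have := finite_integralClosure_of_isFractionRing k (A := A) K
  have : IsScalarTower k A (integralClosure A K) := inferInstance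
  Algebra.FiniteType.trans (S := A) inferInstance inferInstance

theorem surjective_of_semiconj.{u} (k : Type*) {R S : Type u} [Field k]
    [CharZero k] [CommRing R] [IsDomain R] [Algebra k R]
    [Algebra.FiniteType k R] [CommRing S] [IsDomain S] [Algebra k S] [Algebra.FiniteType k S]
    [Algebra R S] [IsScalarTower k R S] [FaithfulSMul R S] (K L : Type u)
    [Field K] [Algebra R K] [IsFractionRing R K] [Algebra k K] [IsScalarTower k R K]
    [Field L] [Algebra S L] [IsFractionRing S L] [Algebra k L] [IsScalarTower k S L]
    (hnorm : ∀ m₁ m₂ : Ideal (integralClosure R K), m₁.IsMaximal → m₂.IsMaximal →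
      m₁.comap (algebraMap R (integralClosure R K)) =
        m₂.comap (algebraMap R (integralClosure R K)) → m₁ = m₂)
    (hht : ∀ p : Ideal R, IsMinimalNonzeroPrime p → p.map (algebraMap R S) ≠ ⊤)
    {F : S ≃ₐ[k] S} {G : R →+* R} (hG : Function.Semiconj (algebraMap R S) G F) :
    Function.Surjective G := by
  have := Algebra.FiniteType.isNoetherianRing k R
  have := finite_integralClosure_of_isFractionRing k (A := R) K
  have := finiteType_integralClosure_of_isFractionRing k R K
  have := finiteType_integralClosure_of_isFractionRing k S L
  have : IsJacobsonRing (integralClosure R K) := isJacobsonRing_of_finiteType (A := k)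
  have : IsIntegrallyClosed (integralClosure R K) :=
    integralClosure.isIntegrallyClosedOfFiniteExtension K
  have hRS := FaithfulSMul.algebraMap_injective R S
  have hGinj : Function.Injective G := fun a b hab => hRS (F.injective (by
    rw [← hG a, ← hG b, hab]))
  have hFinj : Function.Injective (F : S →+* S) := F.injective
  let _ : Algebra (integralClosure R K) (integralClosure S L) :=
    (normalizationMap K L hRS).toAlgebra
  let _ : Algebra R (integralClosure S L) :=
    ((algebraMap S (integralClosure S L)).comp (algebraMap R S)).toAlgebra
  have : IsScalarTower R S (integralClosure S L) := .of_algebraMap_eq fun _ => rfl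
  have : IsScalarTower R (integralClosure R K) (integralClosure S L) :=
    .of_algebraMap_eq fun r => (normalizationMap_algebraMap hRS r).symm
  have : IsScalarTower k (integralClosure R K) (integralClosure S L) :=
    .of_algebraMap_eq fun c => by
      rw [IsScalarTower.algebraMap_apply k R (integralClosure R K),
        IsScalarTower.algebraMap_apply k S (integralClosure S L),
        IsScalarTower.algebraMap_apply k R S]
      exact (normalizationMap_algebraMap hRS (algebraMap k R c)).symm
  have : FaithfulSMul (integralClosure R K) (integralClosure S L) :=
    (faithfulSMul_iff_algebraMap_injective _ _).2 (normalizationMap_injective hRS)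
  have hF' : Function.Semiconj (algebraMap (integralClosure R K) (integralClosure S L))
      (normalizationMap K K hGinj) (normalizationEquiv L L F) :=
    normalizationMap_semiconj hRS hGinj hFinj hG
  have hG' : Function.Semiconj (algebraMap R (integralClosure R K)) G
      (normalizationMap K K hGinj) := fun r => (normalizationMap_algebraMap hGinj r).symm
  have hht' (p : Ideal (integralClosure R K)) (hp : IsMinimalNonzeroPrime p) :
      p.map (algebraMap (integralClosure R K) (integralClosure S L)) ≠ ⊤ :=
    map_ne_top_of_map_comap_ne_top hnorm (hht _ (hp.comap_of_isIntegral hnorm))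
  exact surjective_of_semiconj_of_finite hG'
    (surjective_of_semiconj_of_isIntegrallyClosed k hht' hF')

theorem IsMinimalNonzeroPrime.height_eq_one {R : Type*} [CommRing R] [IsDomain R] {p : Ideal R}
    (hp : IsMinimalNonzeroPrime p) : Order.height (⟨p, hp.1.1⟩ : PrimeSpectrum R) = 1 := by
  rw [Order.height_eq_iSup_lt_height]
  apply le_antisymm
  · refine iSup₂_le fun q hq => ?_
    have hq0 : q.asIdeal = ⊥ := by
      by_contra h
      exact hq.not_ge (hp.2 ⟨q.isPrime, h⟩ hq.le)
    have hqmin : IsMin q := fun q' _ =>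
      PrimeSpectrum.asIdeal_le_asIdeal _ _ |>.1 (hq0.trans_le bot_le)
    rw [Order.height_eq_zero.2 hqmin, zero_add]
  · have hlt : (⟨⊥, Ideal.isPrime_bot⟩ : PrimeSpectrum R) < ⟨p, hp.1.1⟩ :=
      (PrimeSpectrum.asIdeal_lt_asIdeal _ _).1 (bot_lt_iff_ne_bot.2 hp.1.2)
    exact le_add_self.trans (le_iSup₂ (f := fun (q : PrimeSpectrum R)
      (_ : q < ⟨p, hp.1.1⟩) => Order.height q + 1) _ hlt)

theorem heightOf_of_isPrime {R : Type*} [CommRing R] (p : Ideal R) [hp : p.IsPrime] :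
    p.heightOf = Order.height (⟨p, hp⟩ : PrimeSpectrum R) :=
  le_antisymm (iInf₂_le (⟨p, hp⟩ : PrimeSpectrum R) (le_refl p))
    (le_iInf₂ fun _ hq => Order.height_mono hq)

/-- Let `k` be a field of characteristic 0 and `S`, `R` affine domains over `k` with
`R` a `k`-subalgebra of `S`.  Assume the variety of `R` has no selfintersection points,
i.e. the contraction map on maximal ideals from the integral closure `R'` of `R` in its
fraction field to `R` is injective, and assume every ideal of height 1 in `R` generates
a proper ideal in `S`.  If a `k`-algebra endomorphism `F : S → S` with `F(R) ⊆ R` is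
bijective, then so is its restriction `R → R`. -/
theorem subring_invariant_automorphism_restricts_no_selfintersection
    {k S : Type*} [Field k] [CharZero k]
    [CommRing S] [IsDomain S] [Algebra k S] [Algebra.FiniteType k S]
    (R : Subalgebra k S) [Algebra.FiniteType k ↥R]
    (hnorm : ∀ m₁ m₂ : Ideal ↥(integralClosure ↥R (FractionRing ↥R)),
      m₁.IsMaximal → m₂.IsMaximal →
      Ideal.comap (algebraMap ↥R ↥(integralClosure ↥R (FractionRing ↥R))) m₁ =
        Ideal.comap (algebraMap ↥R ↥(integralClosure ↥R (FractionRing ↥R))) m₂ →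
      m₁ = m₂)
    (hht : ∀ I : Ideal ↥R, I.heightOf = 1 → Ideal.map (algebraMap ↥R S) I ≠ ⊤)
    (F : S →ₐ[k] S) (hF : ∀ r ∈ R, F r ∈ R)
    (hFbij : Function.Bijective F) :
    Function.Bijective (fun r : ↥R => (⟨F r.1, hF r.1 r.2⟩ : ↥R)) := by
  refine ⟨fun a b h => Subtype.ext (hFbij.1 (congrArg Subtype.val h)), ?_⟩
  let G : R →ₐ[k] R := (F.comp R.val).codRestrict R fun r => hF r r.2
  have hht' (p : Ideal R) (hp : IsMinimalNonzeroPrime p) : p.map (algebraMap R S) ≠ ⊤ := by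
    have := hp.1.1
    exact hht p ((heightOf_of_isPrime p).trans hp.height_eq_one)
  exact surjective_of_semiconj k (FractionRing R) (FractionRing S) hnorm hht'
    (F := AlgEquiv.ofBijective F hFbij) (G := (G : R →+* R)) fun _ => rfl
end

section
/- Let k be a field of characteristic 0, and let S and R be integral domains that are finitely generated k-algebras, with R a k-subalgebra of S, such that R and S have the same transcendence degree over k. Let F : S → S be a k-algebra endomorphism with F(R) ⊆ R. If the restriction of F to R, viewed as a map R → R, is bijective, then F is bijective. -/
/-- The transcendence degree of a commutative `k`-algebra `A`: the supremum of the
cardinalities of algebraically independent subsets of `A` over `k`. -/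
noncomputable def trdeg (k A : Type*) [CommRing k] [CommRing A] [Algebra k A] : Cardinal :=
  ⨆ s : {s : Set A // AlgebraicIndependent k ((↑) : s → A)}, Cardinal.mk s.1

/-! Since `S` is algebraic over `R`, the endomorphism `F` is injective and extends to an
endomorphism `φ` of `L = Frac S`. As `L` is finite over `Frac R`, on which `φ` restricts to an
automorphism, `φ` is bijective. The integral closure of `R` in `L` is a finite `R`-module preserved
by `φ` and `φ⁻¹`; its `R`-submodule `N` of elements lying in `S` satisfies `N ⊆ φ⁻¹(N) ⊆ φ⁻²(N) ⊆
⋯`, and this chain stabilizes, so `F` restricts to an automorphism of the integral closure `C` of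
`R` in `S`.

For `s ∈ S`, write `φ⁻¹ s = c / b` with `b, c ∈ C`. Then `F b ∣ F c`, and the claim is that `b ∣ c`.
This involves finitely many elements, so `k` may be replaced by `ℤ` with all rings finitely
generated. If `b ∤ c`, then `c` stays nonzero in a finite quotient `Q` of `S / b`. As there are
finitely many homomorphisms `C → Q`, the map `C → Q` is unchanged by composition with some power
`Fⁿ`, `n > 0`; hence in `Q` the element `c` equals `Fⁿ c`, a multiple of `Fⁿ b = b = 0`, a
contradiction. -/

universe u

theorem isJacobsonRing_int : IsJacobsonRing ℤ := by
  refine isJacobsonRing_iff_prime_eq.2 fun P hP => ?_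
  rcases eq_or_ne P ⊥ with rfl | hP0
  · refine le_antisymm (fun x hx => ?_) Ideal.le_jacobson
    rcases Int.isUnit_iff.1 (Ideal.mem_jacobson_bot.1 hx x) with h | h <;>
      exact Ideal.mem_bot.2 (by nlinarith)
  · have := hP.isMaximal hP0
    exact Ideal.jacobson_eq_self_of_isMaximal

theorem finite_of_finiteType_int (K : Type*) [Field K] [Algebra.FiniteType ℤ K] : Finite K := by
  have := isJacobsonRing_int
  have : Module.Finite ℤ K := finite_of_finite_type_of_isJacobsonRing ℤ K
  have hchar : ¬ Function.Injective (Int.castRingHom K) := fun hinj =>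
    Int.not_isField (isField_of_isIntegral_of_isField (R := ℤ) (S := K) hinj (Field.toIsField K))
  obtain ⟨n, hn0, hn⟩ : ∃ n : ℤ, Int.castRingHom K n = 0 ∧ n ≠ 0 := by
    simpa only [injective_iff_map_eq_zero, not_forall, exists_prop] using hchar
  refine Module.finite_of_fg_torsion K fun x => ⟨⟨n, mem_nonZeroDivisors_of_ne_zero hn⟩, ?_⟩
  rw [Submonoid.mk_smul, zsmul_eq_mul, ← eq_intCast (Int.castRingHom K), hn0, zero_mul]

theorem finiteType_int_of_surjective {A B : Type*} [CommRing A] [Algebra.FiniteType ℤ A]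
    [CommRing B] {f : A →+* B} (hf : Function.Surjective f) : Algebra.FiniteType ℤ B :=
  .of_surjective f.toIntAlgHom hf

theorem exists_ideal_finite_quotient_notMem {A : Type*} [CommRing A] [Algebra.FiniteType ℤ A]
    {x : A} (hx : x ≠ 0) : ∃ J : Ideal A, x ∉ J ∧ Finite (A ⧸ J) := by
  have : IsNoetherianRing A := Algebra.FiniteType.isNoetherianRing ℤ A
  obtain ⟨m, hm, hxm⟩ := Ideal.exists_le_maximal (Ideal.torsionOf A A x)
    ((Ideal.torsionOf_eq_top_iff A x).not.2 hx)
  have : Finite (A ⧸ m) :=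
    let _ := Ideal.Quotient.field m
    have := finiteType_int_of_surjective (Ideal.Quotient.mk_surjective (I := m))
    finite_of_finiteType_int (A ⧸ m)
  obtain ⟨n, hn⟩ : ∃ n : ℕ, x ∉ m ^ n := by
    by_contra! h
    -- by Krull's intersection theorem, `r * x = x` for some `r ∈ m`
    obtain ⟨⟨r, hr⟩, hrx⟩ := (Ideal.mem_iInf_smul_pow_eq_bot_iff m x).1
      ((Submodule.mem_iInf _).2 fun n => by simpa using h n)
    have h1r : 1 - r ∈ m := hxm (by simpa [sub_mul, sub_eq_zero] using hrx.symm)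
    exact hm.ne_top ((Ideal.eq_top_iff_one m).2 (by simpa using m.add_mem h1r hr))
  exact ⟨m ^ n, hn, Ideal.finite_quotient_pow (IsNoetherian.noetherian m) n⟩

theorem finite_algHom {R A B : Type*} [CommSemiring R] [Semiring A] [Algebra R A]
    [Algebra.FiniteType R A] [Semiring B] [Algebra R B] [Finite B] : Finite (A →ₐ[R] B) := by
  obtain ⟨s, hs⟩ := (Algebra.FiniteType.out : (⊤ : Subalgebra R A).FG)
  exact Finite.of_injective (fun (f : A →ₐ[R] B) (a : s) => f a) fun f₁ f₂ h =>
    AlgHom.ext_of_adjoin_eq_top hs fun a ha => congrFun h ⟨a, ha⟩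

theorem exists_comp_pow_eq {C Q : Type*} [CommRing C] [Algebra.FiniteType ℤ C] [CommRing Q]
    [Finite Q] (p : C →+* Q) {g : C →+* C} (hg : Function.Surjective g) :
    ∃ n : ℕ, 0 < n ∧ p.comp (g ^ n) = p := by
  have : Finite (C →+* Q) :=
    have := finite_algHom (R := ℤ) (A := C) (B := Q)
    Finite.of_injective _ RingHom.toIntAlgHom_injective
  have hinj : Function.Injective fun q : C →+* Q => q.comp g := fun _ _ =>
    (RingHom.cancel_right hg).1
  obtain ⟨n, hn, hp⟩ := Function.mem_periodicPts.1 (hinj.mem_periodicPts p)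
  refine ⟨n, hn, .trans ?_ hp.eq⟩
  clear hn hp
  induction n with
  | zero => rfl
  | succ n ih => rw [Function.iterate_succ_apply', ← ih, pow_succ]; rfl

theorem dvd_of_map_dvd_int {C S : Type*} [CommRing C] [CommRing S] [Algebra.FiniteType ℤ C]
    [Algebra.FiniteType ℤ S] (i : C →+* S) {g : C →+* C} (hg : Function.Surjective g)
    (F : S →+* S) (hF : ∀ c, F (i c) = i (g c)) {b c : C} (h : F (i b) ∣ F (i c)) :
    i b ∣ i c := by
  obtain ⟨s, hs⟩ := h
  by_contra hbc
  have := finiteType_int_of_surjective (Ideal.Quotient.mk_surjective (I := Ideal.span {i b}))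
  obtain ⟨J, hcJ, _⟩ := exists_ideal_finite_quotient_notMem
    (Ideal.Quotient.eq_zero_iff_dvd _ _ |>.not.2 hbc)
  let π : S →+* (S ⧸ Ideal.span {i b}) ⧸ J :=
    (Ideal.Quotient.mk J).comp (Ideal.Quotient.mk (Ideal.span {i b}))
  have hπb : π (i b) = 0 := by simp [π]
  have hπc : π (i c) ≠ 0 := Ideal.Quotient.eq_zero_iff_mem.not.2 hcJ
  obtain ⟨n, hn, hper⟩ := exists_comp_pow_eq (π.comp i) hg
  have hπF (x : C) : π (F^[n] (i x)) = π (i x) := by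
    rw [← (Function.Semiconj.iterate_right (f := i) (fun c => (hF c).symm) n).eq x,
      ← RingHom.coe_pow]
    exact DFunLike.congr_fun hper x
  obtain ⟨m, rfl⟩ := Nat.exists_eq_succ_of_ne_zero hn.ne'
  apply hπc
  calc π (i c) = π (F^[m] (F (i c))) := (hπF c).symm
    _ = π (F^[m + 1] (i b)) * π (F^[m] s) := by
      rw [hs, iterate_map_mul, map_mul, Function.iterate_succ_apply]
    _ = 0 := by rw [hπF, hπb, zero_mul]

theorem exists_finite_subset_subset_adjoin {R A : Type*} [CommSemiring R] [Semiring A] [Algebra R A]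
    {s X : Set A} (hX : X.Finite) (hXs : X ⊆ Algebra.adjoin R s) :
    ∃ t ⊆ s, t.Finite ∧ X ⊆ Algebra.adjoin R t := by
  have hsingle (x : A) (hx : x ∈ Algebra.adjoin R s) :
      ∃ t ⊆ s, t.Finite ∧ x ∈ Algebra.adjoin R t := by
    induction hx using Algebra.adjoin_induction with
    | mem x hx =>
      exact ⟨{x}, by simpa using hx, Set.finite_singleton x, Algebra.self_mem_adjoin_singleton R x⟩
    | algebraMap r => exact ⟨∅, Set.empty_subset s, Set.finite_empty, algebraMap_mem _ r⟩
    | add x y _ _ hx hy =>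
      obtain ⟨t, hts, ht, hx⟩ := hx
      obtain ⟨u, hus, hu, hy⟩ := hy
      exact ⟨t ∪ u, Set.union_subset hts hus, ht.union hu,
        add_mem (Algebra.adjoin_mono Set.subset_union_left hx)
          (Algebra.adjoin_mono Set.subset_union_right hy)⟩
    | mul x y _ _ hx hy =>
      obtain ⟨t, hts, ht, hx⟩ := hx
      obtain ⟨u, hus, hu, hy⟩ := hy
      exact ⟨t ∪ u, Set.union_subset hts hus, ht.union hu,
        mul_mem (Algebra.adjoin_mono Set.subset_union_left hx)
          (Algebra.adjoin_mono Set.subset_union_right hy)⟩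
  choose! t hts ht hxt using hsingle
  exact ⟨⋃ x ∈ X, t x, Set.iUnion₂_subset fun x hx => hts x (hXs hx),
    hX.biUnion fun x hx => ht x (hXs hx), fun x hx =>
    Algebra.adjoin_mono (Set.subset_biUnion_of_mem hx) (hxt x (hXs hx))⟩

theorem exists_fg_subalgebra_stable (R : Type*) {A B : Type*} [CommSemiring R] [CommSemiring A]
    [Semiring B] [Algebra R A] [Algebra A B] [Algebra R B] [IsScalarTower R A B]
    [Algebra.FiniteType A B] {Φ : Set (B →ₐ[A] B)} (hΦ : Φ.Finite) {X : Set B} (hX : X.Finite) :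
    ∃ B₀ : Subalgebra R B, B₀.FG ∧ X ⊆ B₀ ∧ ∀ φ ∈ Φ, ∀ x ∈ B₀, φ x ∈ B₀ := by
  obtain ⟨Y, hY⟩ := (Algebra.FiniteType.out : (⊤ : Subalgebra A B).FG)
  have hgen (x : B) : x ∈ Algebra.adjoin R (Set.range (algebraMap A B) ∪ Y) := by
    have hx : x ∈ Algebra.adjoin A (Y : Set B) := hY ▸ Algebra.mem_top
    induction hx using Algebra.adjoin_induction with
    | mem y hy => exact Algebra.subset_adjoin (.inr hy)
    | algebraMap a => exact Algebra.subset_adjoin (.inl ⟨a, rfl⟩)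
    | add x y _ _ hx hy => exact add_mem hx hy
    | mul x y _ _ hx hy => exact mul_mem hx hy
  have hZ : (X ∪ ⋃ φ ∈ Φ, φ '' Y).Finite :=
    hX.union (hΦ.biUnion fun φ _ => Y.finite_toSet.image φ)
  obtain ⟨W, hW, hWfin, hZW⟩ := exists_finite_subset_subset_adjoin hZ fun x _ => hgen x
  have hle : Algebra.adjoin R W ≤ Algebra.adjoin R (W ∪ Y) :=
    Algebra.adjoin_mono Set.subset_union_left
  refine ⟨Algebra.adjoin R (W ∪ Y), Subalgebra.fg_def.2 ⟨_, hWfin.union Y.finite_toSet, rfl⟩,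
    fun x hx => hle (hZW (.inl hx)), fun φ hφ => ?_⟩
  have hφY (y : B) (hy : y ∈ Y) : φ y ∈ Algebra.adjoin R (W ∪ Y) :=
    hle (hZW (.inr (Set.mem_biUnion hφ ⟨y, hy, rfl⟩)))
  suffices h : ∀ x ∈ W ∪ Y, φ x ∈ Algebra.adjoin R (W ∪ Y) from fun x hx =>
    Algebra.adjoin_le (S := (Algebra.adjoin R (W ∪ Y)).comap (φ.restrictScalars R)) h hx
  rintro x (hx | hx)
  · obtain ⟨a, rfl⟩ | hx' := hW hx
    · rw [φ.commutes]
      exact Algebra.subset_adjoin (.inl hx)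
    · exact hφY x hx'
  · exact hφY x hx

theorem dvd_of_map_dvd {k C S : Type*} [CommRing k] [CommRing C] [CommRing S] [Algebra k C]
    [Algebra k S] [Algebra.FiniteType k C] [Algebra.FiniteType k S] (i : C →ₐ[k] S)
    (g : C ≃ₐ[k] C) (F : S →ₐ[k] S) (hF : ∀ c, F (i c) = i (g c)) {b c : C}
    (h : F (i b) ∣ F (i c)) : i b ∣ i c := by
  obtain ⟨s, hs⟩ := h
  obtain ⟨C₀, hC₀, hbc, hg⟩ := exists_fg_subalgebra_stable ℤ (A := k) (B := C)
    (Φ := {g.toAlgHom, g.symm.toAlgHom}) (Set.toFinite _) (X := {b, c}) (Set.toFinite _)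
  obtain ⟨Y, hY⟩ := hC₀
  obtain ⟨S₀, hS₀, hsY, hF₀⟩ := exists_fg_subalgebra_stable ℤ (A := k) (B := S)
    (Φ := {F}) (Set.toFinite _) ((Y.finite_toSet.image i).insert s)
  have hi : C₀ ≤ S₀.comap (i.restrictScalars ℤ) :=
    hY ▸ Algebra.adjoin_le fun y hy => hsY (.inr ⟨y, hy, rfl⟩)
  have : Algebra.FiniteType ℤ C₀ := (Subalgebra.fg_iff_finiteType _).1 ⟨Y, hY⟩
  have : Algebra.FiniteType ℤ S₀ := (Subalgebra.fg_iff_finiteType _).1 hS₀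
  let i₀ : C₀ →+* S₀ := i.toRingHom.restrict C₀ S₀ hi
  let g₀ : C₀ →+* C₀ := g.toAlgHom.toRingHom.restrict C₀ C₀ (hg _ (.inl rfl))
  let F₀ : S₀ →+* S₀ := F.toRingHom.restrict S₀ S₀ (hF₀ F rfl)
  have hg₀ : Function.Surjective g₀ := fun x =>
    ⟨⟨g.symm x, hg _ (.inr rfl) x x.2⟩, Subtype.ext (g.apply_symm_apply x)⟩
  obtain ⟨z, hz⟩ := dvd_of_map_dvd_int i₀ hg₀ F₀ (fun c => Subtype.ext (hF c))
    (b := ⟨b, hbc (.inl rfl)⟩) (c := ⟨c, hbc (.inr rfl)⟩) ⟨⟨s, hsY (.inl rfl)⟩, Subtype.ext hs⟩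
  exact ⟨z, congrArg Subtype.val hz⟩

theorem semilinear_surjective_of_injective {A P : Type*} [Semiring A] [AddCommMonoid P] [Module A P]
    [IsArtinian A P] {σ : A →+* A} [RingHomSurjective σ] (τ : P →ₛₗ[σ] P)
    (hτ : Function.Injective τ) : Function.Surjective τ := by
  have hanti : Antitone fun n => (Submodule.map τ)^[n] ⊤ :=
    Monotone.antitone_iterate_of_map_le (fun _ _ h => Submodule.map_mono h) le_top
  obtain ⟨n, hn⟩ := IsArtinian.monotone_stabilizes ⟨_, hanti⟩
  refine LinearMap.range_eq_top.1 ?_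
  refine (Submodule.map_injective_of_injective hτ).iterate n ?_
  rw [← Submodule.map_top, ← Function.iterate_succ_apply]
  exact (hn (n + 1) n.le_succ).symm

theorem comap_semilinear_eq_of_le_comap {A P : Type*} [Semiring A] [AddCommMonoid P] [Module A P]
    [IsNoetherian A P] {σ : A →+* A} [RingHomSurjective σ] {τ : P →ₛₗ[σ] P}
    (hτ : Function.Surjective τ) {N : Submodule A P} (hN : N ≤ N.comap τ) : N.comap τ = N := by
  have hmono : Monotone fun n => (Submodule.comap τ)^[n] N :=
    Monotone.monotone_iterate_of_le_map (fun _ _ h => Submodule.comap_mono h) hN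
  obtain ⟨n, hn⟩ := monotone_stabilizes_iff_noetherian.2 ‹_› ⟨_, hmono⟩
  refine (Submodule.comap_injective_of_surjective hτ).iterate n ?_
  rw [← Function.iterate_succ_apply]
  exact (hn (n + 1) n.le_succ).symm

theorem finiteDimensional_of_essFiniteType (A K L : Type*) [CommRing A] [IsDomain A] [Field K]
    [Field L] [Algebra A K] [IsFractionRing A K] [Algebra A L] [Algebra K L] [IsScalarTower A K L]
    [Algebra.IsAlgebraic A L] [Algebra.EssFiniteType A L] : FiniteDimensional K L := by
  have : Algebra.IsAlgebraic K L :=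
    (IsFractionRing.comap_isAlgebraic_iff (A := A) (K := K) (C := L)).1 inferInstance
  have : Algebra.EssFiniteType K L := Algebra.EssFiniteType.of_comp A K L
  exact Algebra.finite_of_essFiniteType_of_isAlgebraic

theorem ringHom_surjective_of_essFiniteType {R L : Type*} [CommRing R] [IsDomain R] [Field L]
    [Algebra R L] [FaithfulSMul R L] [Algebra.IsAlgebraic R L] [Algebra.EssFiniteType R L]
    (g : R ≃+* R) (φ : L →+* L) (hφ : ∀ r, φ (algebraMap R L r) = algebraMap R L (g r)) :
    Function.Surjective φ := by
  let K := FractionRing R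
  let _ : Algebra K L := FractionRing.liftAlgebra R L
  have : FiniteDimensional K L := finiteDimensional_of_essFiniteType R K L
  let σ : K ≃+* K := IsFractionRing.ringEquivOfRingEquiv g
  have hφK : φ.comp (algebraMap K L) = (algebraMap K L).comp σ :=
    IsLocalization.ringHom_ext (nonZeroDivisors R) <| RingHom.ext fun r => by
      simp only [RingHom.comp_apply, RingHom.coe_coe, σ,
        IsFractionRing.ringEquivOfRingEquiv_algebraMap, ← IsScalarTower.algebraMap_apply R K L, hφ]
  let τ : L →ₛₗ[(σ : K →+* K)] L :=
    { toFun := φ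
      map_add' := map_add φ
      map_smul' q x := by
        rw [Algebra.smul_def, Algebra.smul_def, map_mul]
        exact congrArg (· * φ x) (DFunLike.congr_fun hφK q) }
  exact semilinear_surjective_of_injective τ φ.injective

theorem isAlgebraic_fractionField (R S L : Type*) [CommRing R] [CommRing S] [IsDomain S] [Field L]
    [Algebra R S] [Algebra S L] [Algebra R L] [IsScalarTower R S L] [IsFractionRing S L]
    [Algebra.IsAlgebraic R S] : Algebra.IsAlgebraic R L := by
  have : Algebra.IsAlgebraic S L := IsLocalization.isAlgebraic _ (nonZeroDivisors S)
  exact .trans R S L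

theorem essFiniteType_fractionField (R S L : Type*) [CommRing R] [CommRing S] [Field L]
    [Algebra R S] [Algebra S L] [Algebra R L] [IsScalarTower R S L] [IsFractionRing S L]
    [Algebra.EssFiniteType R S] : Algebra.EssFiniteType R L := by
  have : Algebra.EssFiniteType S L := .of_isLocalization L (nonZeroDivisors S)
  exact .comp R S L

theorem exists_ringEquiv_fractionField {R S L : Type*} [CommRing R] [CommRing S] [IsDomain S]
    [Field L] [Algebra R S] [Algebra S L] [IsFractionRing S L] [FaithfulSMul R S]
    [Algebra.IsAlgebraic R S] [Algebra.EssFiniteType R S] (g : R ≃+* R) {F : S →+* S}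
    (hinj : Function.Injective F) (hF : ∀ r, F (algebraMap R S r) = algebraMap R S (g r)) :
    ∃ φ : L ≃+* L, ∀ s, φ (algebraMap S L s) = algebraMap S L (F s) := by
  let _ : Algebra R L := ((algebraMap S L).comp (algebraMap R S)).toAlgebra
  have : IsScalarTower R S L := .of_algebraMap_eq fun _ => rfl
  have : FaithfulSMul R L := .trans R S L
  have : IsDomain R := (FaithfulSMul.algebraMap_injective R S).isDomain _
  have : Algebra.IsAlgebraic R L := isAlgebraic_fractionField R S L
  have : Algebra.EssFiniteType R L := essFiniteType_fractionField R S L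
  let φ : L →+* L := IsFractionRing.map hinj
  have hφ (s : S) : φ (algebraMap S L s) = algebraMap S L (F s) := IsLocalization.map_eq _ s
  have hφR (r : R) : φ (algebraMap R L r) = algebraMap R L (g r) := by
    simp only [IsScalarTower.algebraMap_apply R S L, hφ, hF]
  exact ⟨.ofBijective φ ⟨φ.injective, ringHom_surjective_of_essFiniteType g φ hφR⟩, hφ⟩

theorem injective_of_isAlgebraic {R S : Type*} [CommRing R] [CommRing S] [NoZeroDivisors S]
    [Algebra R S] [FaithfulSMul R S] [Algebra.IsAlgebraic R S] {g : R →+* R}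
    (hg : Function.Injective g) (F : S →+* S)
    (hF : ∀ r, F (algebraMap R S r) = algebraMap R S (g r)) : Function.Injective F := by
  refine (injective_iff_map_eq_zero F).2 fun s hs => by_contra fun hs0 => ?_
  obtain ⟨r, hr, hsr⟩ := (Algebra.IsAlgebraic.isAlgebraic (R := R) s).exists_nonzero_dvd
    (mem_nonZeroDivisors_of_ne_zero hs0)
  have hFr : F (algebraMap R S r) = 0 := zero_dvd_iff.1 (hs ▸ map_dvd F hsr)
  rw [hF, map_eq_zero_iff _ (FaithfulSMul.algebraMap_injective R S), map_eq_zero_iff g hg] at hFr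
  exact hr hFr

/-- The endomorphism of the integral closure of `R` in `A` induced by an endomorphism `F` of `A`
that acts on `R` as `g`. -/
def integralClosureEnd {R A : Type*} [CommRing R] [CommRing A] [Algebra R A] (g : R →+* R)
    (F : A →+* A) (hF : ∀ r, F (algebraMap R A r) = algebraMap R A (g r)) :
    integralClosure R A →+* integralClosure R A :=
  F.restrict (integralClosure R A) (integralClosure R A) fun _ hx =>
    IsIntegral.map_of_comp_eq g F (RingHom.ext fun r => (hF r).symm) hx

theorem integralClosureEnd_smul {R A : Type*} [CommRing R] [CommRing A] [Algebra R A] (g : R →+* R)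
    (F : A →+* A) (hF : ∀ r, F (algebraMap R A r) = algebraMap R A (g r)) (r : R)
    (x : integralClosure R A) :
    integralClosureEnd g F hF (r • x) = g r • integralClosureEnd g F hF x := by
  rw [Algebra.smul_def, Algebra.smul_def, map_mul]
  exact congrArg (· * integralClosureEnd g F hF x) (Subtype.ext (hF r))

theorem integralClosureEnd_surjective {R S L : Type*} [CommRing R] [CommRing S] [CommRing L]
    [Algebra R S] [Algebra R L] [Algebra S L] [IsScalarTower R S L] [FaithfulSMul S L]
    [IsNoetherian R (integralClosure R L)] (g : R ≃+* R) (F : S →+* S)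
    (hF : ∀ r, F (algebraMap R S r) = algebraMap R S (g r)) (φ : L ≃+* L)
    (hφ : ∀ s, φ (algebraMap S L s) = algebraMap S L (F s)) :
    Function.Surjective (integralClosureEnd (g : R →+* R) F hF) := by
  have hφR (r : R) : φ (algebraMap R L r) = algebraMap R L (g r) := by
    simp only [IsScalarTower.algebraMap_apply R S L, hφ, hF]
  have hφR' (r : R) : φ.symm (algebraMap R L r) = algebraMap R L (g.symm r) := by
    rw [φ.symm_apply_eq, hφR, g.apply_symm_apply]
  let τ : integralClosure R L →ₛₗ[(g : R →+* R)] integralClosure R L :=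
    { integralClosureEnd (g : R →+* R) (φ : L →+* L) hφR with
      map_smul' := integralClosureEnd_smul (g : R →+* R) (φ : L →+* L) hφR }
  have hτ : Function.Surjective τ := fun y =>
    ⟨integralClosureEnd (g.symm : R →+* R) (φ.symm : L →+* L) hφR' y,
      Subtype.ext (φ.apply_symm_apply y)⟩
  let N : Submodule R (integralClosure R L) := (Subalgebra.toSubmodule
    (IsScalarTower.toAlgHom R S L).range).comap (integralClosure R L).val.toLinearMap
  have hN : N ≤ N.comap τ := by
    rintro x ⟨s, hs⟩
    exact ⟨F s, (hφ s).symm.trans (congrArg φ hs)⟩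
  intro c
  have hc : IsIntegral R (algebraMap S L c) := c.2.algebraMap
  obtain ⟨x, hx⟩ := hτ ⟨_, hc⟩
  replace hx : φ x = algebraMap S L c := congrArg Subtype.val hx
  obtain ⟨s, hs⟩ : x ∈ N := comap_semilinear_eq_of_le_comap hτ hN ▸ ⟨c, hx.symm⟩
  replace hs : algebraMap S L s = x := hs
  have hinj : Function.Injective (algebraMap S L) := FaithfulSMul.algebraMap_injective S L
  have hsint : IsIntegral R s := (isIntegral_algebraMap_iff hinj).1 (hs ▸ x.2)
  exact ⟨⟨s, hsint⟩, Subtype.ext (hinj ((hφ s).symm.trans ((congrArg φ hs).trans hx)))⟩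

theorem exists_integral_mul_eq (R : Type*) {S L : Type*} [CommRing R] [CommRing S] [IsDomain S]
    [Field L] [Algebra R S] [Algebra S L] [IsFractionRing S L] [FaithfulSMul R S]
    [Algebra.IsAlgebraic R S] (x : L) :
    ∃ b c : integralClosure R S, (b : S) ≠ 0 ∧ algebraMap S L b * x = algebraMap S L c := by
  obtain ⟨a, d, hd, rfl⟩ := IsFractionRing.div_surjective (A := S) x
  obtain ⟨r, hr, t, ht⟩ := (Algebra.IsAlgebraic.isAlgebraic (R := R) d).exists_nonzero_dvd hd
  obtain ⟨q, hq, hint⟩ :=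
    (Algebra.IsAlgebraic.isAlgebraic (R := R) (t * a)).exists_integral_multiple
  have hRS := FaithfulSMul.algebraMap_injective R S
  refine ⟨algebraMap R _ (q * r), ⟨_, hint⟩, ?_, ?_⟩
  · have : IsDomain R := hRS.isDomain _
    exact (map_ne_zero_iff _ hRS).2 (mul_ne_zero hq hr)
  · have hd' : algebraMap S L d ≠ 0 := IsFractionRing.to_map_ne_zero_of_mem_nonZeroDivisors hd
    change algebraMap S L (algebraMap R S (q * r)) * _ = algebraMap S L (q • (t * a))
    rw [map_mul, ht, Algebra.smul_def]
    simp only [map_mul]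
    field_simp

theorem surjective_of_finite_integralClosure {k R S L : Type*} [CommRing k] [CommRing R]
    [IsNoetherianRing R] [CommRing S] [IsDomain S] [Field L] [Algebra k R] [Algebra k S]
    [Algebra R S] [Algebra R L] [Algebra S L] [IsScalarTower k R S] [IsScalarTower R S L]
    [IsFractionRing S L] [FaithfulSMul R S] [Algebra.FiniteType k R] [Algebra.FiniteType k S]
    [Algebra.IsAlgebraic R S] [Module.Finite R (integralClosure R L)] (g : R ≃+* R) (F : S →ₐ[k] S)
    (hF : ∀ r, F (algebraMap R S r) = algebraMap R S (g r)) (φ : L ≃+* L)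
    (hφ : ∀ s, φ (algebraMap S L s) = algebraMap S L (F s)) : Function.Surjective F := by
  have hSL := IsFractionRing.injective S L
  have hFinj : Function.Injective F := fun s t hst =>
    hSL (φ.injective (by rw [hφ, hφ, hst]))
  let C := integralClosure R S
  have : Module.Finite R C := .of_injective
    (IsScalarTower.toAlgHom R S L).mapIntegralClosure.toLinearMap fun x y hxy =>
      Subtype.ext (hSL (congrArg Subtype.val hxy))
  have : Algebra.FiniteType k C := .trans (S := R) inferInstance inferInstance
  let gC : C ≃ₐ[k] C := .ofRingEquiv
    (f := .ofBijective (integralClosureEnd (g : R →+* R) (F : S →+* S) hF)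
      ⟨fun x y hxy => Subtype.ext (hFinj (congrArg Subtype.val hxy)),
        integralClosureEnd_surjective g (F : S →+* S) hF φ hφ⟩)
    fun a => Subtype.ext (F.commutes a)
  intro s
  obtain ⟨b, c, hb, hbc⟩ := exists_integral_mul_eq R (S := S) (φ.symm (algebraMap S L s))
  have hs : F c = F b * s := hSL (by
    rw [map_mul, ← hφ, ← hφ, ← hbc, map_mul, φ.apply_symm_apply])
  obtain ⟨z, hz⟩ := dvd_of_map_dvd (C.val.restrictScalars k) gC F (fun _ => rfl) ⟨s, hs⟩
  refine ⟨z, mul_left_cancel₀ ((map_ne_zero_iff F hFinj).2 hb) ?_⟩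
  calc F b * F z = F (b * z) := (map_mul F _ _).symm
    _ = F c := congrArg F hz.symm
    _ = F b * s := hs

theorem finite_integralClosure_of_isIntegrallyClosed (P R L : Type*) [CommRing P] [IsDomain P]
    [IsIntegrallyClosed P] [IsNoetherianRing P] [CharZero P] [CommRing R] [Field L] [Algebra P R]
    [Module.Finite P R] [Algebra P L] [Algebra R L] [IsScalarTower P R L] [FaithfulSMul P L]
    [Algebra.IsAlgebraic P L] [Algebra.EssFiniteType P L] :
    Module.Finite R (integralClosure R L) := by
  let K := FractionRing P
  let _ : Algebra K L := FractionRing.liftAlgebra P L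
  have : FiniteDimensional K L := finiteDimensional_of_essFiniteType P K L
  have : Algebra.IsIntegral P (integralClosure R L) := .trans R
  have : IsIntegralClosure (integralClosure R L) P L := .of_isIntegrallyClosedIn
  have : Module.Finite P (integralClosure R L) := IsIntegralClosure.finite P K L _
  exact .of_restrictScalars_finite P R _

theorem finite_integralClosure (k R L : Type*) [Field k] [CharZero k] [CommRing R] [IsDomain R]
    [Field L] [Algebra k R] [Algebra R L] [FaithfulSMul R L] [Algebra.FiniteType k R]
    [Algebra.IsAlgebraic R L] [Algebra.EssFiniteType R L] :
    Module.Finite R (integralClosure R L) := by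
  obtain ⟨d, f, hinj, hfin⟩ := exists_finite_inj_algHom_of_fg k R
  let P := MvPolynomial (Fin d) k
  let _ : Algebra P R := f.toRingHom.toAlgebra
  let _ : Algebra P L := ((algebraMap R L).comp f.toRingHom).toAlgebra
  have : IsScalarTower P R L := .of_algebraMap_eq fun _ => rfl
  have : Module.Finite P R := hfin
  have : FaithfulSMul P R := (faithfulSMul_iff_algebraMap_injective P R).2 hinj
  have : FaithfulSMul P L := .trans P R L
  have : Algebra.IsAlgebraic P L := .trans P R L
  have : Algebra.EssFiniteType P L := .comp P R L
  exact finite_integralClosure_of_isIntegrallyClosed P R L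

theorem trdeg_fractionRing (k A : Type*) [CommRing k] [Nontrivial k] [CommRing A] [IsDomain A]
    [Algebra k A] [FaithfulSMul k A] : Algebra.trdeg k (FractionRing A) = Algebra.trdeg k A := by
  have : Algebra.IsAlgebraic A (FractionRing A) := IsLocalization.isAlgebraic _ (nonZeroDivisors A)
  rw [← trdeg_add_eq k A (A := FractionRing A), trdeg_eq_zero (R := A), add_zero]

theorem isAlgebraic_of_trdeg_eq {k : Type*} {R S : Type u} [CommRing k] [IsDomain k] [CommRing R]
    [CommRing S] [IsDomain S] [Algebra k R] [Algebra k S] [Algebra R S] [IsScalarTower k R S]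
    [FaithfulSMul k R] [FaithfulSMul R S] [Algebra.FiniteType k S]
    (htr : Algebra.trdeg k R = Algebra.trdeg k S) : Algebra.IsAlgebraic R S := by
  have hfin : Algebra.trdeg k S < Cardinal.aleph0 := trdeg_lt_aleph0_of_finiteType
  have hadd : Algebra.trdeg k S + Algebra.trdeg R S = Algebra.trdeg k S + 0 := by
    rw [add_zero, ← htr, trdeg_add_eq k R, htr]
  have : Algebra.trdeg R S = 0 := Cardinal.eq_of_add_eq_add_left hadd hfin
  exact trdeg_eq_zero_iff.1 this

/-- Let `k` be a field of characteristic 0 and `S`, `R` affine domains over `k` with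
`R` a `k`-subalgebra of `S` and with the same transcendence degree over `k` (i.e. their
fraction fields have the same transcendence degree over `k`).  If `F : S → S` is a
`k`-algebra endomorphism with `F(R) ⊆ R` whose restriction `R → R` is bijective, then
`F` itself is bijective. -/
theorem subring_invariant_automorphism_extends
    {k S : Type*} [Field k] [CharZero k]
    [CommRing S] [IsDomain S] [Algebra k S] [Algebra.FiniteType k S]
    (R : Subalgebra k S) [Algebra.FiniteType k ↥R]
    (htr : trdeg k (FractionRing ↥R) = trdeg k (FractionRing S))
    (F : S →ₐ[k] S) (hF : ∀ r ∈ R, F r ∈ R)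
    (hGbij : Function.Bijective (fun r : ↥R => (⟨F r.1, hF r.1 r.2⟩ : ↥R))) :
    Function.Bijective F := by
  have : Algebra.IsAlgebraic R S := isAlgebraic_of_trdeg_eq (k := k) <| by
    rw [← trdeg_fractionRing k R, ← trdeg_fractionRing k S]
    exact htr
  have : IsNoetherianRing R := Algebra.FiniteType.isNoetherianRing k R
  have : Algebra.EssFiniteType R S := .of_comp k R S
  let g : R ≃+* R := .ofBijective ((F : S →+* S).restrict R R hF) hGbij
  have hFg (r : R) : F (algebraMap R S r) = algebraMap R S (g r) := rfl
  have hinj : Function.Injective F := injective_of_isAlgebraic (g := (g : R →+* R)) g.injective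
    (F : S →+* S) hFg
  let L := FractionRing S
  have : Algebra.IsAlgebraic R L := isAlgebraic_fractionField R S L
  have : Algebra.EssFiniteType R L := essFiniteType_fractionField R S L
  have : Module.Finite R (integralClosure R L) := finite_integralClosure k R L
  obtain ⟨φ, hφ⟩ := exists_ringEquiv_fractionField (L := L) g hinj hFg
  exact ⟨hinj, surjective_of_finite_integralClosure g F hFg φ hφ⟩
end
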